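/- arXiv:2001.11884 — 6 statements merged into one kernel-verified Lean document; each statement's English description precedes it below -/
import Mathlib

section
/- Let F : ℝ × [0,1] → ℝ × [0,1] be a homeomorphism of the closed strip satisfying F(x+1,y) = F(x,y) + (1,0) for all (x,y) (so F is a lift of a homeomorphism of the closed annulus (ℝ/ℤ) × [0,1]). Assume F preserves two-dimensional Lebesgue measure on the strip and preserves each boundary line, i.e. F(ℝ×{0}) = ℝ×{0} and F(ℝ×{1}) = ℝ×{1}. Suppose there exist real numbers ρ₀ < 0 < ρ₁ such that for every x ∈ ℝ, (pr₁(Fⁿ(x,0)) − x)/n → ρ₀ and (pr₁(Fⁿ(x,1)) − x)/n → ρ₁ as n → ∞ (the rotation numbers of the two boundary circles have opposite signs). Then F has at least two fixed points z₁, z₂ ∈ ℝ × [0,1] that project to distinct points of the annulus, i.e. z₂ ≠ z₁ + (k,0) for every k ∈ ℤ. -/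
open Set MeasureTheory Filter

/-!
Suppose that `F` has at most one fixed point in the annulus. Extend it to a homeomorphism `Φ` of the
plane that acts on the horizontal lines outside the strip as on the nearest boundary line; the
rotation numbers force `Φ` to move all points to the left below the strip and to the right above it
(`IsTwist`). The proof computes in two ways how much the displacement `D z = Φ z - z` turns between
the bottom and the top.

Compose `Φ` with a small upward shear that is trivial near the abscissae of the fixed points. Since
area is preserved, the sheet of points newly pushed into the strip cannot wander inside it forever,
so some orbit crosses the strip from bottom to top (`exists_orbit_crossing`). Join the points of this
orbit to an invariant line `γ` of the perturbed map `G`. The line starts as a segment below the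
strip, where the dynamics is explicit, hence never comes back to its past (`line_positive`):
`γ (u + 1) ≠ γ t` for `t ≤ u`. Therefore the argument of `G (γ t) - γ t = γ (t + 1) - γ t` can be
followed along the other sides of the triangle `0 ≤ t ≤ u ≤ M`, where `γ (u + 1) - γ t` points upwards
(`log_variation_of_positive`). So the displacement turns from left to right through the upward
direction, that is, by exactly `-π`; the same holds for `D`, of which the displacement of `G` is
a small perturbation (`IsTwist.exists_variation`).

With at most one fixed point in the annulus, `D` has a continuous logarithm on the whole complement
of the fixed points (`IsTwist.exists_log`): a nonzero index at the fixed point would destroy the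
periodicity of the argument, which is visible near the boundary. Hence the variation of the argument
does not depend on the path. Applying the previous paragraph to the conjugate of `Φ` by a half-turn,
which is again a twist map, shows that the displacement also turns by `+π`, a contradiction
(`IsTwist.false`).
-/

/-! ### Continuous logarithms -/

/-- Two continuous logarithms of the same function on a connected set differ by a constant. -/
theorem sub_eq_sub_of_exp_eq {X : Type*} [TopologicalSpace X] {C : Set X} {f g : X → ℂ}
    (hC : IsPreconnected C) (hf : ContinuousOn f C) (hg : ContinuousOn g C)
    (h : ∀ x ∈ C, Complex.exp (f x) = Complex.exp (g x)) {x y : X} (hx : x ∈ C) (hy : y ∈ C) :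
    f x - g x = f y - g y := by
  have hT : IsDiscrete (range (fun n : ℤ => (n : ℝ))) := by
    rw [isDiscrete_iff_discreteTopology]
    exact (Int.isClosedEmbedding_coe_real.isEmbedding.toHomeomorph.symm.isEmbedding).discreteTopology
  have hc : ContinuousOn (fun x => (f x - g x).im / (2 * Real.pi)) C :=
    (Complex.continuous_im.comp_continuousOn (hf.sub hg)).div_const _
  have key : ∀ z ∈ C, ∃ n : ℤ, f z - g z = n * (2 * Real.pi * Complex.I) := fun z hz => by
    obtain ⟨n, hn⟩ := Complex.exp_eq_exp_iff_exists_int.1 (h z hz)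
    exact ⟨n, by rw [hn]; ring⟩
  have him : ∀ n : ℤ, ((n : ℂ) * (2 * Real.pi * Complex.I)).im / (2 * Real.pi) = n := fun n => by
    have := Real.pi_ne_zero
    simp [Complex.mul_im]
  have := hC.constant_of_mapsTo hT hc (fun z hz => by
    obtain ⟨n, hn⟩ := key z hz
    exact ⟨n, by simp only [hn, him]⟩) hx hy
  obtain ⟨n, hn⟩ := key x hx
  obtain ⟨m, hm⟩ := key y hy
  simp only [hn, hm, him] at this
  rw [hn, hm, Int.cast_injective this]

/-- A nowhere zero continuous function on a convex open set has a continuous logarithm. -/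
theorem exists_log_of_convex {E : Type*} [NormedAddCommGroup E] [NormedSpace ℝ E] {C : Set E}
    (hC : Convex ℝ C) (ho : IsOpen C) (hne : C.Nonempty) {d : E → ℂ} (hd : ContinuousOn d C)
    (h0 : ∀ z ∈ C, d z ≠ 0) :
    ∃ ℓ : E → ℂ, ContinuousOn ℓ C ∧ ∀ z ∈ C, Complex.exp (ℓ z) = d z := by
  have : ContractibleSpace C := hC.contractibleSpace hne
  obtain ⟨f, hf, he⟩ := Complex.exists_continuousOn_eqOn_exp_comp
    (show SimplyConnectedSpace C from inferInstance) ho hd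
    (by rintro ⟨z, hz, h⟩; exact h0 z hz h)
  exact ⟨f, hf, he⟩

/-- The branch of the logarithm with imaginary part in `[0, π]` on the closed upper half-plane
minus the origin (unlike `Complex.log`, it is continuous up to both halves of the real axis). -/
noncomputable def logUp (w : ℂ) : ℂ := Complex.log (-Complex.I * w) + Real.pi / 2 * Complex.I

theorem upper_mem_slitPlane {w : ℂ} (h : 0 ≤ w.im) (h0 : w ≠ 0) :
    -Complex.I * w ∈ Complex.slitPlane := by
  rw [Complex.mem_slitPlane_iff]
  simp
  by_contra! hh
  exact h0 (Complex.ext hh.2 (le_antisymm hh.1 h))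

theorem exp_logUp {w : ℂ} (h0 : w ≠ 0) : Complex.exp (logUp w) = w := by
  rw [logUp, Complex.exp_add, Complex.exp_log (by simpa using h0), Complex.exp_pi_div_two_mul_I]
  linear_combination -w * Complex.I_mul_I

theorem continuousOn_logUp : ContinuousOn logUp {w | 0 ≤ w.im ∧ w ≠ 0} := by
  unfold logUp
  exact (ContinuousOn.clog (by fun_prop) fun w hw => upper_mem_slitPlane hw.1 hw.2).add_const _

theorem abs_arg_lt_of_div {r s : ℝ} (hr : r ≠ 0) :
    |((⟨r, s⟩ : ℂ) / ⟨r, 0⟩).arg| < Real.pi / 2 ∧ (⟨r, s⟩ : ℂ) / ⟨r, 0⟩ ≠ 0 ∧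
      (⟨r, s⟩ : ℂ) = r * (⟨r, s⟩ / ⟨r, 0⟩) := by
  have hr' : (⟨r, 0⟩ : ℂ) = (r : ℂ) := rfl
  have hrc : (r : ℂ) ≠ 0 := by exact_mod_cast hr
  have hre : ((⟨r, s⟩ : ℂ) / r).re = 1 := by
    rw [Complex.div_ofReal_re]; exact div_self hr
  rw [hr']
  refine ⟨Complex.abs_arg_lt_pi_div_two_iff.2 (Or.inl (by rw [hre]; exact one_pos)), ?_, ?_⟩
  · intro h; rw [h] at hre; simp at hre
  · field_simp

/-- Near the positive real axis `logUp` has no jump relative to the principal argument of the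
quotient by the real part. -/
theorem logUp_right {r s : ℝ} (hr : 0 < r) :
    (logUp ⟨r, s⟩).im = (Complex.log (⟨r, s⟩ / ⟨r, 0⟩)).im := by
  obtain ⟨h1, h2, h3⟩ := abs_arg_lt_of_div (s := s) hr.ne'
  set u := (⟨r, s⟩ : ℂ) / ⟨r, 0⟩
  rw [abs_lt] at h1
  have : Complex.arg (-Complex.I * (r * u)) = -(Real.pi / 2) + u.arg := by
    rw [show -Complex.I * (r * u) = r * (-Complex.I * u) by ring, Complex.arg_real_mul _ hr,
      Complex.arg_mul (by simp) h2, Complex.arg_neg_I]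
    rw [Complex.arg_neg_I]
    constructor <;> linarith [Real.pi_pos]
  rw [h3]
  rw [logUp, Complex.add_im, Complex.log_im, this, Complex.log_im]
  simp

/-- Near the negative real axis the argument given by `logUp` exceeds by `π` the principal argument
of the quotient by the real part. -/
theorem logUp_left {r s : ℝ} (hr : r < 0) :
    (logUp ⟨r, s⟩).im = (Complex.log (⟨r, s⟩ / ⟨r, 0⟩)).im + Real.pi := by
  obtain ⟨h1, h2, h3⟩ := abs_arg_lt_of_div (s := s) hr.ne
  set u := (⟨r, s⟩ : ℂ) / ⟨r, 0⟩
  rw [abs_lt] at h1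
  have : Complex.arg (-Complex.I * (r * u)) = Real.pi / 2 + u.arg := by
    rw [show -Complex.I * (r * u) = ((-r : ℝ) : ℂ) * (Complex.I * u) by push_cast; ring,
      Complex.arg_real_mul _ (by linarith), Complex.arg_mul (by simp) h2, Complex.arg_I]
    rw [Complex.arg_I]
    constructor <;> linarith [Real.pi_pos]
  rw [h3]
  rw [logUp, Complex.add_im, Complex.log_im, this, Complex.log_im]
  simp
  ring

/-! ### Variation of the argument along a positive line -/

/-- A vector of the plane as a complex number. -/
def toC (z : ℝ × ℝ) : ℂ := ⟨z.1, z.2⟩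

theorem continuous_toC : Continuous toC := Complex.equivRealProdCLM.symm.continuous

theorem toC_ne_zero {z : ℝ × ℝ} (h : z ≠ 0) : toC z ≠ 0 := fun h0 =>
  h (Prod.ext (congrArg Complex.re h0) (congrArg Complex.im h0))

/-- Let `γ` be a curve with `γ (u + 1) ≠ γ t` for `0 ≤ t ≤ u ≤ M`, such that `γ 0` is not above
the points `γ t`, `1 ≤ t ≤ M + 1`, and `γ (M + 1)` is not below the points `γ t`, `0 ≤ t ≤ M`.
Then the argument of `γ (t + 1) - γ t` varies over
`[0, M]` as if this vector stayed in the upper half-plane. Indeed `γ (u + 1) - γ t` does not vanish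
on the triangle `0 ≤ t ≤ u ≤ M`, so the diagonal may be replaced by the two other sides, on which
the vector does point upwards. -/
theorem log_variation_of_positive {γ : ℝ → ℝ × ℝ} (hγ : Continuous γ) {M : ℝ} (hM : 0 ≤ M)
    (hpos : ∀ t t', 0 ≤ t → t ≤ t' → t' ≤ M → γ (t' + 1) ≠ γ t)
    (hlow : ∀ t ∈ Icc 0 M, (γ 0).2 ≤ (γ (t + 1)).2)
    (hhigh : ∀ t ∈ Icc 0 M, (γ t).2 ≤ (γ (M + 1)).2)
    {ℓ : ℝ → ℂ} (hℓ : ContinuousOn ℓ (Icc 0 M))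
    (hexp : ∀ t ∈ Icc 0 M, Complex.exp (ℓ t) = toC (γ (t + 1) - γ t)) :
    ℓ M - ℓ 0 = logUp (toC (γ (M + 1) - γ M)) - logUp (toC (γ 1 - γ 0)) := by
  -- `q ↦ (a q, b q)` retracts the plane onto the triangle
  set b : ℝ × ℝ → ℝ := fun q => max 0 (min M q.2) with hb
  set a : ℝ × ℝ → ℝ := fun q => max 0 (min (b q) q.1) with ha
  have hbc : Continuous b := by fun_prop
  have hac : Continuous a := by fun_prop
  set W : ℝ × ℝ → ℂ := fun q => toC (γ (b q + 1) - γ (a q)) with hW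
  have hWc : Continuous W := continuous_toC.comp (by fun_prop)
  have hb0 : ∀ q, 0 ≤ b q := fun q => le_max_left _ _
  have hbM : ∀ q, b q ≤ M := fun q => max_le hM (min_le_left _ _)
  have hab : ∀ q, a q ≤ b q := fun q => max_le (hb0 q) (min_le_left _ _)
  have hW0 : ∀ q, W q ≠ 0 := fun q =>
    toC_ne_zero (sub_ne_zero.2 (hpos _ _ (le_max_left _ _) (hab q) (hbM q)))
  obtain ⟨l, hlc, hl⟩ := exists_log_of_convex convex_univ isOpen_univ univ_nonempty
    hWc.continuousOn (fun z _ => hW0 z)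
  rw [continuousOn_univ] at hlc
  have hbe : ∀ t u, 0 ≤ u → u ≤ M → b (t, u) = u := fun t u h0 h1 => by
    simp [hb, h0, h1]
  have hae : ∀ t u, 0 ≤ t → t ≤ u → u ≤ M → a (t, u) = t := fun t u h0 h1 h2 => by
    simp only [ha, hbe t u (h0.trans h1) h2]
    simp [h0, h1]
  have hWe : ∀ t u, 0 ≤ t → t ≤ u → u ≤ M → W (t, u) = toC (γ (u + 1) - γ t) :=
    fun t u h0 h1 h2 => by
      simp only [hW, hbe t u (h0.trans h1) h2, hae t u h0 h1 h2]
  have m0 : (0 : ℝ) ∈ Icc 0 M := ⟨le_rfl, hM⟩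
  have mM : M ∈ Icc 0 M := ⟨hM, le_rfl⟩
  have e1 := sub_eq_sub_of_exp_eq (f := fun t => l (t, t)) (g := ℓ) isPreconnected_Icc
    (by fun_prop) hℓ (fun t ht => by
      rw [hl _ (mem_univ _), hexp t ht, hWe t t ht.1 le_rfl ht.2]) m0 mM
  have e2 := sub_eq_sub_of_exp_eq (f := fun t => l (0, t)) (g := fun t => logUp (W (0, t)))
    isPreconnected_Icc (by fun_prop)
    (continuousOn_logUp.comp (by fun_prop) fun t ht => ⟨by
      rw [hWe 0 t le_rfl ht.1 ht.2]
      exact sub_nonneg.2 (hlow t ht), hW0 _⟩)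
    (fun t ht => by rw [hl _ (mem_univ _), exp_logUp (hW0 _)]) m0 mM
  have e3 := sub_eq_sub_of_exp_eq (f := fun t => l (t, M)) (g := fun t => logUp (W (t, M)))
    isPreconnected_Icc (by fun_prop)
    (continuousOn_logUp.comp (by fun_prop) fun t ht => ⟨by
      rw [hWe t M ht.1 ht.2 le_rfl]
      exact sub_nonneg.2 (hhigh t ht), hW0 _⟩)
    (fun t ht => by rw [hl _ (mem_univ _), exp_logUp (hW0 _)]) m0 mM
  simp only [hWe 0 0 le_rfl le_rfl hM, hWe 0 M le_rfl hM le_rfl, hWe M M hM le_rfl le_rfl,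
    zero_add] at e1 e2 e3
  linear_combination e1 - e2 - e3

/-! ### Invariant lines -/

/-- The segment from `z` to `G z`, continued to a curve on which `G` acts as the unit time shift. -/
theorem exists_invariant_line (G : (ℝ × ℝ) ≃ₜ (ℝ × ℝ)) (z : ℝ × ℝ) :
    ∃ γ : ℝ → ℝ × ℝ, Continuous γ ∧ (∀ t, γ (t + 1) = G (γ t)) ∧
      ∀ t ∈ Icc (0 : ℝ) 1, γ t = z + t • (G z - z) := by
  have hstep : ∀ (k : ℤ) w, (G ^ (k + 1)) w = G ((G ^ k) w) := fun k w => by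
    rw [add_comm, zpow_add, zpow_one]; rfl
  have hstep' : ∀ (k : ℤ) w, (G ^ (k + 1)) w = (G ^ k) (G w) := fun k w => by
    rw [zpow_add, zpow_one]; rfl
  set γ : ℝ → ℝ × ℝ := fun t => (G ^ ⌊t⌋) (z + Int.fract t • (G z - z)) with hγ
  have hpiece : ∀ (k : ℤ), ∀ t ∈ Icc (k : ℝ) (k + 1),
      γ t = (G ^ k) (z + (t - k) • (G z - z)) := fun k t ht => by
    rcases ht.2.lt_or_eq with h | h
    · have : ⌊t⌋ = k := Int.floor_eq_iff.2 ⟨ht.1, h⟩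
      simp only [hγ, Int.fract, this]
    · have : t = ((k + 1 : ℤ) : ℝ) := by rw [h]; push_cast; rfl
      simp only [hγ, this, Int.floor_intCast, Int.fract_intCast, hstep']
      simp
  refine ⟨γ, ?_, fun t => ?_, fun t ht => ?_⟩
  · refine LocallyFinite.continuous (f := fun n : ℤ => Icc (n : ℝ) (n + 1))
      (locallyFinite_Icc_of_tendsto tendsto_intCast_atTop_atTop
        (tendsto_atBot_add_const_right _ _ (tendsto_intCast_atBot_iff.2 tendsto_id)))
      (iUnion_Icc_intCast ℝ) (fun _ => isClosed_Icc) fun k => ?_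
    refine ContinuousOn.congr (Continuous.continuousOn ?_) (hpiece k)
    exact (G ^ k).continuous.comp (by fun_prop)
  · simp only [hγ, Int.floor_add_one, Int.fract_add_one, hstep]
  · have := hpiece 0 t (by simpa using ht)
    simpa using this

/-- A forward invariant set containing one unit of an invariant line contains all later points. -/
theorem forward_mem {G : ℝ × ℝ → ℝ × ℝ} {γ : ℝ → ℝ × ℝ} (hγ : ∀ t, γ (t + 1) = G (γ t))
    {A : Set (ℝ × ℝ)} (hA : MapsTo G A A) {m : ℝ} (h0 : ∀ s ∈ Icc m (m + 1), γ s ∈ A) {s : ℝ}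
    (hs : m ≤ s) : γ s ∈ A := by
  have key : ∀ n : ℕ, ∀ s ∈ Icc m (m + 1), γ (s + n) ∈ A := fun n => by
    induction n with
    | zero => simpa using h0
    | succ n ih =>
      intro s hs
      have := hA (ih s hs)
      rw [← hγ] at this
      push_cast
      rwa [← add_assoc]
  have h1 := Nat.floor_le (sub_nonneg.2 hs)
  have h2 := Nat.lt_floor_add_one (s - m)
  have := key ⌊s - m⌋₊ (s - ⌊s - m⌋₊) ⟨by linarith, by linarith⟩
  simpa using this

/-- An invariant line issued from the lower half-plane `y ≤ 0`, where `G` moves points to the left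
by a monotone map of the abscissa and never downwards, does not return to its past after a delay of
at least one unit of time, and its starting point is its lowest point. -/
theorem line_positive (G : (ℝ × ℝ) ≃ₜ (ℝ × ℝ)) {f : ℝ → ℝ} (hf : StrictMono f) (hfx : ∀ x, f x < x)
    (hG1 : ∀ w : ℝ × ℝ, (G w).2 ≤ 0 → w.2 ≤ 0) (hG2 : ∀ w : ℝ × ℝ, w.2 ≤ 0 → (G w).1 = f w.1)
    (hG3 : ∀ w : ℝ × ℝ, w.2 ≤ 0 → w.2 ≤ (G w).2)
    {z : ℝ × ℝ} (hGz : (G z).2 ≤ 0) {γ : ℝ → ℝ × ℝ}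
    (hγ : ∀ t, γ (t + 1) = G (γ t)) (hγz : ∀ t ∈ Icc (0 : ℝ) 1, γ t = z + t • (G z - z)) :
    (∀ t s, 0 ≤ t → t + 1 ≤ s → γ s ≠ γ t) ∧ ∀ s, 0 ≤ s → (γ 0).2 ≤ (γ s).2 := by
  have hz := hG1 z hGz
  have hx1 : (G z).1 < z.1 := by rw [hG2 z hz]; exact hfx _
  have hy1 := hG3 z hz
  have h0 : γ 0 = z := by simpa using hγz 0 ⟨le_rfl, zero_le_one⟩
  have h1 : γ 1 = G z := by simpa using hγz 1 ⟨zero_le_one, le_rfl⟩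
  have hX : ∀ t ∈ Icc (0 : ℝ) 1, (γ t).1 = z.1 + t * ((G z).1 - z.1) := fun t ht => by
    rw [hγz t ht]; simp
  have hY : ∀ t ∈ Icc (0 : ℝ) 1, (γ t).2 = z.2 + t * ((G z).2 - z.2) := fun t ht => by
    rw [hγz t ht]; simp
  have hYle : ∀ t ∈ Icc (0 : ℝ) 1, (γ t).2 ≤ 0 := fun t ht => by
    rw [hY t ht]; nlinarith [ht.1, ht.2]
  have hXle : ∀ t ∈ Icc (0 : ℝ) 1, (γ 1).1 ≤ (γ t).1 := fun t ht => by
    rw [hX t ht, h1]; nlinarith [ht.1, ht.2]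
  -- points of the line past time `1`
  have hA : ∀ s, 1 ≤ s → (γ s).2 ≤ 0 → (γ s).1 ≤ (γ 1).1 := fun s hs => by
    refine forward_mem hγ (A := {w | w.2 ≤ 0 → w.1 ≤ (γ 1).1}) (m := 1) ?_ ?_ hs
    · intro w hw hGw
      have := hG1 w hGw
      rw [hG2 w this]
      exact (hfx _).le.trans (hw this)
    · intro s hs _
      have hs' : s - 1 ∈ Icc (0 : ℝ) 1 := ⟨by linarith [hs.1], by linarith [hs.2]⟩
      have e : γ s = G (γ (s - 1)) := by rw [← hγ]; simp
      rw [e, hG2 _ (hYle _ hs'), h1, hG2 z hz]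
      apply hf.monotone
      rw [hX _ hs']; nlinarith [hs'.1]
  -- the case `t ≤ 1` of positivity
  have hB : ∀ t ∈ Icc (0 : ℝ) 1, ∀ s, t + 1 ≤ s → γ s ≠ γ t := by
    intro t ht s hs heq
    have hs2 : (γ s).2 ≤ 0 := by rw [heq]; exact hYle t ht
    have e : γ s = G (γ (s - 1)) := by rw [← hγ]; simp
    have hs3 : (γ (s - 1)).2 ≤ 0 := hG1 _ (by rw [← e]; exact hs2)
    have hlt : (γ s).1 < (γ (s - 1)).1 := by rw [e, hG2 _ hs3]; exact hfx _
    have hle : (γ (s - 1)).1 ≤ (γ t).1 := by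
      rcases le_total (s - 1) 1 with h | h
      · rw [hX t ht, hX (s - 1) ⟨by linarith [ht.1], h⟩]
        nlinarith
      · exact (hA _ h hs3).trans (hXle t ht)
    rw [heq] at hlt
    exact absurd hlt (not_lt.2 hle)
  refine ⟨fun t s ht hs => ?_, fun s hs => ?_⟩
  · have hn : ∀ n : ℕ, ∀ t ∈ Icc (0 : ℝ) 1, ∀ s, t + 1 ≤ s → γ (s + n) ≠ γ (t + n) := fun n => by
      induction n with
      | zero => simpa using hB
      | succ n ih =>
        intro t ht s hs heq
        push_cast at heq
        rw [← add_assoc, ← add_assoc, hγ, hγ] at heq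
        exact ih t ht s hs (G.injective heq)
    have h1 := Nat.floor_le ht
    have h2 := Nat.lt_floor_add_one t
    have := hn ⌊t⌋₊ (t - ⌊t⌋₊) ⟨by linarith, by linarith⟩ (s - ⌊t⌋₊) (by linarith)
    simpa using this
  · refine forward_mem hγ (A := {w | (γ 0).2 ≤ w.2}) (m := 0) ?_ ?_ hs
    · intro w hw
      show (γ 0).2 ≤ (G w).2
      rcases le_or_gt w.2 0 with h | h
      · exact le_trans hw (hG3 w h)
      · rw [h0]
        by_contra! h'
        exact absurd (hG1 w (h'.le.trans hz)) (not_le.2 h)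
    · intro s hs
      rw [zero_add] at hs
      show (γ 0).2 ≤ (γ s).2
      rw [hY s hs, h0]; nlinarith [hs.1]

/-! ### Twist maps and crossing orbits -/

/-- An area-preserving twist homeomorphism of the plane with few fixed points: `Φ` commutes with
the unit horizontal translation, preserves the strip `0 ≤ y ≤ 1` and its area, acts on all
horizontal lines below the strip by one map moving points to the left and on those above it by one
map moving points to the right, and fixes no point outside `p + ℤ`. The point `p` itself need not
be fixed, so that the absence of fixed points is included. -/
structure IsTwist (Φ : (ℝ × ℝ) ≃ₜ (ℝ × ℝ)) (p : ℝ × ℝ) : Prop where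
  comm : ∀ z, Φ (z + (1, 0)) = Φ z + (1, 0)
  low : ∃ f : ℝ → ℝ, StrictMono f ∧ (∀ x, f x < x) ∧ ∀ x y, y ≤ 0 → Φ (x, y) = (f x, y)
  high : ∃ f : ℝ → ℝ, StrictMono f ∧ (∀ x, x < f x) ∧ ∀ x y, 1 ≤ y → Φ (x, y) = (f x, y)
  pos : ∀ z : ℝ × ℝ, 0 < z.2 → 0 < (Φ z).2
  lt_one : ∀ z : ℝ × ℝ, z.2 < 1 → (Φ z).2 < 1
  area : ∀ A : Set (ℝ × ℝ), A ⊆ univ ×ˢ Icc (0 : ℝ) 1 → MeasurableSet A →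
    volume (Φ '' A) = volume A
  mem : p.2 ∈ Ioo (0 : ℝ) 1
  fix : ∀ z, Φ z = z → ∃ k : ℤ, z = p + ((k : ℝ), 0)

/-- The vertical shear `(x, y) ↦ (x, y + ψ x)`. -/
def shear (ψ : ℝ → ℝ) (hψ : Continuous ψ) : (ℝ × ℝ) ≃ₜ (ℝ × ℝ) where
  toFun z := (z.1, z.2 + ψ z.1)
  invFun z := (z.1, z.2 - ψ z.1)
  left_inv z := by simp
  right_inv z := by simp
  continuous_toFun := by fun_prop
  continuous_invFun := by fun_prop

theorem measurePreserving_shear (ψ : ℝ → ℝ) (hψ : Continuous ψ) :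
    MeasurePreserving (shear ψ hψ) := by
  refine (MeasurePreserving.id (volume : Measure ℝ)).skew_product (g := fun x y => y + ψ x)
    (μc := volume) (μd := volume) ?_ ?_
  · exact Continuous.measurable (by simp only [Function.uncurry_def]; fun_prop)
  · exact Eventually.of_forall fun x => (measurePreserving_add_right volume (ψ x)).map_eq

theorem volume_image_homeo {T : (ℝ × ℝ) ≃ₜ (ℝ × ℝ)} (hT : MeasurePreserving T) (A : Set (ℝ × ℝ)) :
    volume (T '' A) = volume A := by
  have := hT.measure_preimage_emb T.measurableEmbedding (T '' A)
  rwa [preimage_image_eq _ T.injective, eq_comm] at this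

theorem add_int_of_add_one {Φ : (ℝ × ℝ) → (ℝ × ℝ)} (h : ∀ z, Φ (z + (1, 0)) = Φ z + (1, 0))
    (z : ℝ × ℝ) (k : ℤ) : Φ (z + ((k : ℝ), 0)) = Φ z + ((k : ℝ), 0) := by
  induction k using Int.induction_on with
  | zero => simp [show ((0 : ℝ), (0 : ℝ)) = 0 from rfl]
  | succ i ih =>
    have : (((i + 1 : ℤ) : ℝ), (0 : ℝ)) = (((i : ℤ) : ℝ), (0 : ℝ)) + (1, 0) := by simp
    rw [this, ← add_assoc, h, ih, add_assoc]
  | pred i ih =>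
    have e : (((-i : ℤ) : ℝ), (0 : ℝ)) = (((-i - 1 : ℤ) : ℝ), (0 : ℝ)) + (1, 0) := by simp
    rw [e, ← add_assoc, h, ← add_assoc] at ih
    exact add_right_cancel ih

/-- A subset of the strip that is disjoint from its nonzero integer translates embeds in the
annulus, whose area is one. -/
theorem volume_le_one_of_disjoint_translates (a : ℝ) {B : Set (ℝ × ℝ)} (hB : MeasurableSet B)
    (hS : B ⊆ univ ×ˢ Icc (0 : ℝ) 1)
    (hd : ∀ z ∈ B, ∀ k : ℤ, z + ((k : ℝ), 0) ∈ B → k = 0) : volume B ≤ 1 := by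
  set Q : ℤ → Set (ℝ × ℝ) := fun k => Ico (a + k) (a + k + 1) ×ˢ univ with hQ
  have hQm : ∀ k, MeasurableSet (Q k) := fun k => measurableSet_Ico.prod MeasurableSet.univ
  have hQd : Pairwise (Function.onFun Disjoint Q) := fun i j hij =>
    Set.disjoint_prod.2 (Or.inl (pairwise_disjoint_Ico_add_intCast a hij))
  have hQu : ⋃ k, Q k = univ := by
    rw [← iUnion_prod_const, iUnion_Ico_add_intCast, univ_prod_univ]
  set C : ℤ → Set (ℝ × ℝ) := fun k => (fun z => z + ((k : ℝ), 0)) ⁻¹' (B ∩ Q k) with hC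
  have hCm : ∀ k, MeasurableSet (C k) := fun k =>
    (measurable_id.add_const _) (hB.inter (hQm k))
  have hCv : ∀ k, volume (C k) = volume (B ∩ Q k) := fun k =>
    measure_preimage_add_right volume ((k : ℝ), (0 : ℝ)) _
  have hCd : Pairwise (Function.onFun Disjoint C) := fun i j hij => by
    refine Set.disjoint_left.2 fun z hi hj => hij ?_
    have := hd _ hi.1 (j - i) (by
      have e : z + ((i : ℝ), (0 : ℝ)) + (((j - i : ℤ) : ℝ), 0) = z + ((j : ℝ), 0) := by
        ext <;> simp
      rw [e]; exact hj.1)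
    omega
  calc volume B = volume (⋃ k, B ∩ Q k) := by rw [← inter_iUnion, hQu, inter_univ]
    _ = ∑' k, volume (B ∩ Q k) := measure_iUnion
        (fun i j hij => (hQd hij).mono inter_subset_right inter_subset_right)
        (fun k => hB.inter (hQm k))
    _ = ∑' k, volume (C k) := by simp only [hCv]
    _ = volume (⋃ k, C k) := (measure_iUnion hCd hCm).symm
    _ ≤ volume (Ico a (a + 1) ×ˢ Icc (0 : ℝ) 1) := measure_mono <| iUnion_subset fun k z hz => by
        have h1 := (hS hz.1).2
        have h2 := hz.2.1
        simp at h1 h2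
        exact ⟨⟨by linarith [h2.1], by linarith [h2.2]⟩, h1⟩
    _ = 1 := by
        rw [Measure.volume_eq_prod, Measure.prod_prod]
        simp

/-- Push a twist map upwards by a nonzero shear. The sheet of points `0 < y ≤ ψ x` is then wandering:
it consists of images of points below the strip, and its own forward images stay above `y = 0`.
If no orbit crossed the strip, infinitely many disjoint copies of this sheet, all of the same area,
would fit into the annulus. -/
theorem exists_orbit_crossing {Φ : (ℝ × ℝ) ≃ₜ (ℝ × ℝ)} {p : ℝ × ℝ} (h : IsTwist Φ p) {ψ : ℝ → ℝ}
    (hψ : Continuous ψ) (hψ0 : ∀ x, 0 ≤ ψ x) (hψ1 : ∀ x, ψ (x + 1) = ψ x) (hψp : ∃ x, 0 < ψ x) :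
    ∃ z, ((Φ.trans (shear ψ hψ)) z).2 ≤ 0 ∧
      ∃ n : ℕ, 1 ≤ ((Φ.trans (shear ψ hψ))^[n] z).2 := by
  set G := Φ.trans (shear ψ hψ) with hG
  have hGa : ∀ z, G z = ((Φ z).1, (Φ z).2 + ψ (Φ z).1) := fun z => rfl
  by_contra! hcon
  obtain ⟨x₀, hx₀⟩ := hψp
  have hGpos : ∀ z : ℝ × ℝ, 0 < z.2 → 0 < (G z).2 := fun z hz => by
    rw [hGa]
    exact add_pos_of_pos_of_nonneg (h.pos z hz) (hψ0 _)
  have hGposn : ∀ n (z : ℝ × ℝ), 0 < z.2 → 0 < (G^[n] z).2 := fun n z hz => by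
    induction n with
    | zero => exact hz
    | succ n ih => rw [Function.iterate_succ_apply']; exact hGpos _ ih
  have hGcomm : ∀ z, G (z + (1, 0)) = G z + (1, 0) := fun z => by
    rw [hGa, hGa, h.comm]
    simp [hψ1]
  have hGk : ∀ n z (k : ℤ), G^[n] (z + ((k : ℝ), 0)) = G^[n] z + ((k : ℝ), 0) := fun n z k => by
    induction n with
    | zero => rfl
    | succ n ih =>
      rw [Function.iterate_succ_apply', Function.iterate_succ_apply', ih,
        add_int_of_add_one hGcomm]
  have hψk : ∀ x (k : ℤ), ψ (x + k) = ψ x := fun x k => by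
    have : Function.Periodic ψ 1 := hψ1
    simpa using this.int_mul k x
  -- the preimage of the sheet `0 < y ≤ ψ x` lies in `y ≤ 0`
  have hpre : ∀ z, 0 < (G z).2 → (G z).2 ≤ ψ (G z).1 → z.2 ≤ 0 := fun z h1 h2 => by
    by_contra! hz
    have := h.pos z hz
    rw [hGa] at h2
    simp at h2
    linarith
  have hdis : ∀ m (a a' : ℝ × ℝ), 0 < a.2 → a.2 ≤ ψ a.1 → 0 < a'.2 → a = G^[m] a' → m = 0 := by
    intro m a a' h1 h2 h3 h4
    rcases m with _ | m
    · rfl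
    · rw [Function.iterate_succ_apply'] at h4
      subst h4
      have hpos := hGposn m a' h3
      exact absurd (hpre _ h1 h2) (not_le.2 hpos)
  -- one period of the sheet
  set A : Set (ℝ × ℝ) := {z | (x₀ - 1 / 2 ≤ z.1 ∧ z.1 < x₀ + 1 / 2) ∧ 0 < z.2 ∧ z.2 ≤ ψ z.1} with hA
  have hAm : MeasurableSet A := by
    refine ((measurableSet_le measurable_const measurable_fst).inter
      (measurableSet_lt measurable_fst measurable_const)).inter
      ((measurableSet_lt measurable_const measurable_snd).inter
      (measurableSet_le measurable_snd (hψ.measurable.comp measurable_fst)))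
  have hAlt : ∀ z ∈ A, ∀ n, (G^[n] z).2 < 1 := fun z hz n => by
    obtain ⟨w, rfl⟩ := G.surjective z
    have hw := hpre w hz.2.1 hz.2.2
    obtain ⟨v, rfl⟩ := G.surjective w
    have := hcon v hw (n + 2)
    rwa [Function.iterate_add_apply] at this
  have hAstrip : ∀ n, G^[n] '' A ⊆ univ ×ˢ Icc (0 : ℝ) 1 := by
    rintro n _ ⟨z, hz, rfl⟩
    exact ⟨trivial, (hGposn n z hz.2.1).le, (hAlt z hz n).le⟩
  have hmv : ∀ n, MeasurableSet (G^[n] '' A) ∧ volume (G^[n] '' A) = volume A := fun n => by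
    induction n with
    | zero => simpa using hAm
    | succ n ih =>
      have e : G^[n + 1] '' A = G '' (G^[n] '' A) := by
        rw [Function.iterate_succ', image_comp]
      rw [e]
      refine ⟨G.measurableEmbedding.measurableSet_image.2 ih.1, ?_⟩
      have : G '' (G^[n] '' A) = (shear ψ hψ) '' (Φ '' (G^[n] '' A)) := by
        rw [image_image (shear ψ hψ)]; rfl
      rw [this, volume_image_homeo (measurePreserving_shear ψ hψ), h.area _ (hAstrip n) ih.1, ih.2]
  have hApos : volume A ≠ 0 := by
    have hO : IsOpen {z : ℝ × ℝ | (x₀ - 1 / 2 < z.1 ∧ z.1 < x₀ + 1 / 2) ∧ 0 < z.2 ∧ z.2 < ψ z.1} :=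
      ((isOpen_lt continuous_const continuous_fst).inter
        (isOpen_lt continuous_fst continuous_const)).inter
        ((isOpen_lt continuous_const continuous_snd).inter
        (isOpen_lt continuous_snd (hψ.comp continuous_fst)))
    have := hO.measure_pos volume ⟨(x₀, ψ x₀ / 2), ⟨by simp, by simp⟩, by simpa using hx₀,
      by simpa using hx₀⟩
    refine (this.trans_le (measure_mono fun z hz => ?_)).ne'
    exact ⟨⟨hz.1.1.le, hz.1.2⟩, hz.2.1, hz.2.2.le⟩
  -- two iterates of points of `A` differing by an integer translation are equal iterates
  have hinj : ∀ i j (a a' : ℝ × ℝ) (k : ℤ), a ∈ A → a' ∈ A → i ≤ j →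
      G^[i] a + ((k : ℝ), 0) = G^[j] a' → i = j ∧ k = 0 := by
    intro i j a a' k ha ha' hij heq
    obtain ⟨m, rfl⟩ := Nat.exists_eq_add_of_le hij
    rw [← hGk, Function.iterate_add_apply] at heq
    have heq' := G.injective.iterate i heq
    have hm : m = 0 := hdis m _ a' (by simpa using ha.2.1) (by simpa [hψk] using ha.2.2) ha'.2.1 heq'
    subst hm
    refine ⟨rfl, ?_⟩
    have e : a.1 + k = a'.1 := congrArg Prod.fst heq'
    have h1 := ha.1; have h2 := ha'.1
    have h3 : (k : ℝ) < 1 := by linarith [h1.1, h2.2]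
    have h4 : (-1 : ℝ) < k := by linarith [h1.2, h2.1]
    have h5 : k < 1 := by exact_mod_cast h3
    have h6 : -1 < k := by exact_mod_cast h4
    omega
  have hinj' : ∀ i j (a a' : ℝ × ℝ) (k : ℤ), a ∈ A → a' ∈ A →
      G^[i] a + ((k : ℝ), 0) = G^[j] a' → i = j ∧ k = 0 := by
    intro i j a a' k ha ha' heq
    rcases le_total i j with hij | hij
    · exact hinj i j a a' k ha ha' hij heq
    · have := hinj j i a' a (-k) ha' ha hij (by
        rw [← heq]; ext <;> simp)
      exact ⟨this.1.symm, by omega⟩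
  have hle := volume_le_one_of_disjoint_translates 0 (B := ⋃ n, G^[n] '' A)
    (MeasurableSet.iUnion fun n => (hmv n).1) (iUnion_subset hAstrip) (by
      intro z hz k hzk
      obtain ⟨i, a, ha, rfl⟩ := mem_iUnion.1 hz
      obtain ⟨j, a', ha', he⟩ := mem_iUnion.1 hzk
      exact (hinj' i j a a' k ha ha' he.symm).2)
  rw [measure_iUnion (fun i j hij => Set.disjoint_left.2 (by
      rintro _ ⟨a, ha, rfl⟩ ⟨a', ha', he⟩
      exact hij (hinj' i j a a' 0 ha ha' (by
        simpa [show ((0 : ℝ), (0 : ℝ)) = 0 from rfl] using he.symm)).1)) (fun n => (hmv n).1)] at hle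
  simp only [(hmv _).2] at hle
  rw [ENNReal.tsum_const_eq_top_of_ne_zero hApos] at hle
  simp at hle

/-! ### Variation of the displacement -/

/-- A nonnegative continuous `1`-periodic function that vanishes near `a + ℤ` and is positive
at `a + 1/2`. -/
noncomputable def bump (a x : ℝ) : ℝ := max 0 (-Real.cos (2 * Real.pi * (x - a)))

theorem cos_add_int (a x : ℝ) (k : ℤ) :
    Real.cos (2 * Real.pi * (x + k - a)) = Real.cos (2 * Real.pi * (x - a)) := by
  rw [show 2 * Real.pi * (x + k - a) = 2 * Real.pi * (x - a) + k * (2 * Real.pi) by ring,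
    Real.cos_add_int_mul_two_pi]

/-- The displacement of a twist map is bounded below where the shear by `bump` acts: there the
abscissa of the image is away from `p + ℤ`, and by periodicity this is a compactness statement. -/
theorem IsTwist.exists_displacement_bound {Φ : (ℝ × ℝ) ≃ₜ (ℝ × ℝ)} {p : ℝ × ℝ} (h : IsTwist Φ p) :
    ∃ ε > 0, ∀ z, 0 < bump p.1 (Φ z).1 → ε < ‖toC (Φ z - z)‖ := by
  obtain ⟨f0, -, -, hlow⟩ := h.low
  obtain ⟨f1, -, -, hhigh⟩ := h.high
  have hdc : Continuous fun z => ‖toC (Φ z - z)‖ :=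
    (continuous_toC.comp (Φ.continuous.sub continuous_id)).norm
  have hcc : Continuous fun z => Real.cos (2 * Real.pi * ((Φ z).1 - p.1)) := by
    have := Φ.continuous
    fun_prop
  set K := (Icc (0 : ℝ) 1 ×ˢ Icc (0 : ℝ) 1) ∩ {z | Real.cos (2 * Real.pi * ((Φ z).1 - p.1)) ≤ 0}
  have hK : IsCompact K := (isCompact_Icc.prod isCompact_Icc).inter_right
    (isClosed_le hcc continuous_const)
  obtain ⟨m, hm, hle⟩ := hK.exists_forall_le' hdc.continuousOn (a := 0) fun z hz => by
    rw [norm_pos_iff]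
    refine toC_ne_zero (sub_ne_zero.2 fun hfix => ?_)
    obtain ⟨k, hk⟩ := h.fix z hfix
    have this : Real.cos (2 * Real.pi * ((Φ z).1 - p.1)) ≤ 0 := hz.2
    rw [hfix, hk, show (p + ((k : ℝ), (0 : ℝ))).1 = p.1 + k from rfl, cos_add_int, sub_self,
      mul_zero, Real.cos_zero] at this
    linarith
  refine ⟨m / 2, half_pos hm, fun z hz => (half_lt_self hm).trans_le ?_⟩
  have hz' : Real.cos (2 * Real.pi * ((Φ z).1 - p.1)) < 0 := by
    have := hz
    simpa [bump] using this
  -- move `z` into the fundamental square: clamp the height, then translate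
  obtain ⟨y, hy, hy1, hy2⟩ : ∃ y ∈ Icc (0 : ℝ) 1, (Φ (z.1, y)).1 = (Φ z).1 ∧
      Φ (z.1, y) - (z.1, y) = Φ z - z := by
    obtain ⟨x, y⟩ := z
    rcases le_total y 0 with hy | hy
    · refine ⟨0, by simp, ?_⟩
      simp [hlow x y hy, hlow x 0 le_rfl]
    · rcases le_total y 1 with hy' | hy'
      · exact ⟨y, ⟨hy, hy'⟩, rfl, rfl⟩
      · refine ⟨1, by simp, ?_⟩
        simp [hhigh x y hy', hhigh x 1 le_rfl]
  have hk := add_int_of_add_one h.comm (z.1, y) (-⌊z.1⌋)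
  have := hle ((z.1, y) + (((-⌊z.1⌋ : ℤ) : ℝ), 0)) ⟨⟨⟨?_, ?_⟩, by simpa using hy⟩, ?_⟩
  · rwa [hk, add_sub_add_right_eq_sub, hy2] at this
  · simpa using Int.floor_le z.1
  · have := (Int.lt_floor_add_one z.1).le
    simp
    linarith
  · change Real.cos _ ≤ 0
    rw [hk, Prod.fst_add, cos_add_int, hy1]
    exact hz'.le

/-- Seen along a path from below the strip to above it, the argument of the displacement of a twist
map decreases by `π`: the displacement turns from left to right through the upward direction. The
path follows an orbit of the map composed with a small upward shear. -/
theorem IsTwist.exists_variation {Φ : (ℝ × ℝ) ≃ₜ (ℝ × ℝ)} {p : ℝ × ℝ} (h : IsTwist Φ p)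
    {L : ℝ × ℝ → ℂ} (hL : ContinuousOn L {z | Φ z ≠ z})
    (hexp : ∀ z, Φ z ≠ z → Complex.exp (L z) = toC (Φ z - z)) :
    ∃ a b : ℝ × ℝ, a.2 ≤ 0 ∧ 1 ≤ b.2 ∧ (L b).im - (L a).im = -Real.pi := by
  obtain ⟨ε, hε, hbound⟩ := h.exists_displacement_bound
  obtain ⟨f0, hf0, hf0x, hlow⟩ := h.low
  obtain ⟨f1, -, hf1x, hhigh⟩ := h.high
  set ψ : ℝ → ℝ := fun x => ε * bump p.1 x with hψdef
  have hψ : Continuous ψ := by unfold ψ bump; fun_prop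
  have hb0 : ∀ x, 0 ≤ bump p.1 x := fun x => le_max_left _ _
  have hb1 : ∀ x, bump p.1 x ≤ 1 := fun x =>
    max_le zero_le_one (by linarith [Real.neg_one_le_cos (2 * Real.pi * (x - p.1))])
  have hψ0 : ∀ x, 0 ≤ ψ x := fun x => mul_nonneg hε.le (hb0 x)
  have hbk : ∀ x (k : ℤ), bump p.1 (x + k) = bump p.1 x := fun x k => by
    rw [bump, cos_add_int, bump]
  obtain ⟨z, hGz, n, hn⟩ := exists_orbit_crossing h hψ hψ0
    (fun x => by have := hbk x 1; simp only [Int.cast_one] at this; simp [hψdef, this])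
    ⟨p.1 + 1 / 2, mul_pos hε (lt_max_of_lt_right (by
      rw [show 2 * Real.pi * (p.1 + 1 / 2 - p.1) = Real.pi by ring]; simp))⟩
  set G := Φ.trans (shear ψ hψ) with hG
  have hGa : ∀ z, G z = ((Φ z).1, (Φ z).2 + ψ (Φ z).1) := fun z => rfl
  have hlow' : ∀ w : ℝ × ℝ, w.2 ≤ 0 → Φ w = (f0 w.1, w.2) := fun w hw => hlow w.1 w.2 hw
  have hhigh' : ∀ w : ℝ × ℝ, 1 ≤ w.2 → Φ w = (f1 w.1, w.2) := fun w hw => hhigh w.1 w.2 hw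
  have hG1 : ∀ w : ℝ × ℝ, (G w).2 ≤ 0 → w.2 ≤ 0 := fun w hw => by
    by_contra! hc
    have := h.pos w hc
    rw [hGa] at hw
    exact absurd hw (not_le.2 (add_pos_of_pos_of_nonneg this (hψ0 _)))
  have hG2 : ∀ w : ℝ × ℝ, w.2 ≤ 0 → (G w).1 = f0 w.1 := fun w hw => by
    rw [hGa, hlow' w hw]
  have hG3 : ∀ w : ℝ × ℝ, w.2 ≤ 0 → w.2 ≤ (G w).2 := fun w hw => by
    rw [hGa, hlow' w hw]; exact le_add_of_nonneg_right (hψ0 _)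
  have hG4 : ∀ w : ℝ × ℝ, 1 ≤ w.2 → w.2 ≤ (G w).2 := fun w hw => by
    rw [hGa, hhigh' w hw]; exact le_add_of_nonneg_right (hψ0 _)
  obtain ⟨γ, hγc, hγ, hγz⟩ := exists_invariant_line G z
  obtain ⟨hpos, hmin⟩ := line_positive G hf0 hf0x hG1 hG2 hG3 hGz hγ hγz
  have hz0 : γ 0 = z := by simpa using hγz 0 ⟨le_rfl, zero_le_one⟩
  have hγn : ∀ n : ℕ, γ n = G^[n] z := fun n => by
    induction n with
    | zero => simpa using hz0
    | succ n ih => rw [Function.iterate_succ_apply', ← ih, ← hγ]; simp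
  -- a time `M` at which the height along the line is maximal
  obtain ⟨M, hM, hmax⟩ := (isCompact_Icc (a := (0 : ℝ)) (b := n)).exists_isMaxOn
    ⟨0, le_rfl, Nat.cast_nonneg n⟩ (f := fun t => (γ t).2)
    (continuous_snd.comp hγc).continuousOn
  have hmax' : ∀ t ∈ Icc 0 (n : ℝ), (γ t).2 ≤ (γ M).2 := fun t ht => hmax ht
  have hM1 : 1 ≤ (γ M).2 := by
    refine hn.trans ?_
    rw [← hγn]
    exact hmax' n ⟨Nat.cast_nonneg n, le_rfl⟩
  have hγ1 : (γ M).2 ≤ (γ (M + 1)).2 := by rw [hγ]; exact hG4 _ hM1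
  have hU : ∀ t, 0 ≤ t → Φ (γ t) ≠ γ t := fun t ht hfix => by
    refine hpos t (t + 1) ht le_rfl ?_
    obtain ⟨k, hk⟩ := h.fix _ hfix
    have : bump p.1 (p.1 + k) = 0 := by rw [hbk]; simp [bump]
    rw [hγ, hGa, hfix, show (γ t).1 = p.1 + k by rw [hk]; rfl]
    simp [hψdef, this]
    rw [hk]; ext <;> simp
  -- the displacements of `G` and `Φ` differ by less than the latter
  have hslit : ∀ w, Φ w ≠ w → toC (G w - w) / toC (Φ w - w) ∈ Complex.slitPlane := fun w hw => by
    have hne := toC_ne_zero (sub_ne_zero.2 hw)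
    have e : toC (G w - w) = toC (Φ w - w) + (ψ (Φ w).1 : ℝ) * Complex.I := by
      rw [hGa]
      apply Complex.ext
      · simp [toC]
      · simp [toC]; ring
    rw [e, add_div, div_self hne]
    refine Complex.mem_slitPlane_of_norm_lt_one ?_
    rw [norm_div, div_lt_one (norm_pos_iff.2 hne), norm_mul, Complex.norm_I, mul_one,
      Complex.norm_real, Real.norm_of_nonneg (hψ0 _)]
    rcases (hb0 (Φ w).1).eq_or_lt with hb | hb
    · simp only [hψdef, ← hb, mul_zero]; exact norm_pos_iff.2 hne
    · exact (mul_le_of_le_one_right hε.le (hb1 _)).trans_lt (hbound w hb)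
  have hvar := log_variation_of_positive hγc hM.1
    (fun t t' h0 h1 _ => hpos t (t' + 1) h0 (by linarith))
    (fun t ht => hmin _ (by linarith [ht.1]))
    (fun t ht => (hmax' t ⟨ht.1, ht.2.trans hM.2⟩).trans hγ1)
    (ℓ := fun t => L (γ t) + Complex.log (toC (G (γ t) - γ t) / toC (Φ (γ t) - γ t)))
    (by
      refine ContinuousOn.add (hL.comp hγc.continuousOn fun t ht => hU t ht.1) ?_
      refine ContinuousOn.clog (ContinuousOn.div ?_ ?_ ?_) fun t ht => hslit _ (hU t ht.1)
      · exact (continuous_toC.comp ((G.continuous.comp hγc).sub hγc)).continuousOn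
      · exact (continuous_toC.comp ((Φ.continuous.comp hγc).sub hγc)).continuousOn
      · exact fun t ht => toC_ne_zero (sub_ne_zero.2 (hU t ht.1)))
    (fun t ht => by
      have hne := toC_ne_zero (sub_ne_zero.2 (hU t ht.1))
      rw [Complex.exp_add, hexp _ (hU t ht.1), Complex.exp_log
        (Complex.slitPlane_ne_zero (hslit _ (hU t ht.1))), mul_div_cancel₀ _ hne, hγ])
  refine ⟨γ 0, γ M, by rw [hz0]; exact hG1 z hGz, hM1, ?_⟩
  have hz2 : (γ 0).2 ≤ 0 := by rw [hz0]; exact hG1 z hGz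
  have e0 : toC (Φ (γ 0) - γ 0) = ⟨f0 (γ 0).1 - (γ 0).1, 0⟩ := by
    rw [hlow' _ hz2]; apply Complex.ext <;> simp [toC]
  have e0' : toC (G (γ 0) - γ 0) = ⟨f0 (γ 0).1 - (γ 0).1, ψ (f0 (γ 0).1)⟩ := by
    rw [hGa, hlow' _ hz2]; apply Complex.ext <;> simp [toC]
  have eM : toC (Φ (γ M) - γ M) = ⟨f1 (γ M).1 - (γ M).1, 0⟩ := by
    rw [hhigh' _ hM1]; apply Complex.ext <;> simp [toC]
  have eM' : toC (G (γ M) - γ M) = ⟨f1 (γ M).1 - (γ M).1, ψ (f1 (γ M).1)⟩ := by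
    rw [hGa, hhigh' _ hM1]; apply Complex.ext <;> simp [toC]
  have hγ01 : γ 1 = G (γ 0) := by rw [← hγ]; simp
  rw [hγ01, hγ M] at hvar
  have him := congrArg Complex.im hvar
  rw [e0, e0', eM, eM'] at him
  simp only [Complex.sub_im, Complex.add_im] at him
  rw [logUp_right (sub_pos.2 (hf1x _)), logUp_left (sub_neg.2 (hf0x _))] at him
  linarith

/-! ### A global logarithm of the displacement -/

/-- A logarithm on `C` of a horizontally periodic function is horizontally periodic, provided that
on some translation-invariant `H ⊆ C` a fixed multiple of the function avoids the negative axis. -/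
theorem log_periodic {d L : ℝ × ℝ → ℂ} {C H : Set (ℝ × ℝ)} {c : ℂ} (hC : Convex ℝ C)
    (hCp : ∀ z ∈ C, ∀ k : ℤ, z + ((k : ℝ), 0) ∈ C)
    (hH : Convex ℝ H) (hHC : H ⊆ C) (hHp : ∀ z ∈ H, ∀ k : ℤ, z + ((k : ℝ), 0) ∈ H)
    (hne : H.Nonempty) (hd : Continuous d) (hdp : ∀ z (k : ℤ), d (z + ((k : ℝ), 0)) = d z)
    (hL : ContinuousOn L C) (hexp : ∀ z ∈ C, Complex.exp (L z) = d z) (hc : c ≠ 0)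
    (hslit : ∀ z ∈ H, c * d z ∈ Complex.slitPlane) {z : ℝ × ℝ} (hz : z ∈ C) (k : ℤ) :
    L (z + ((k : ℝ), 0)) = L z := by
  obtain ⟨w, hw⟩ := hne
  have h1 := sub_eq_sub_of_exp_eq hC.isPreconnected
    (f := fun z => L (z + ((k : ℝ), 0))) (g := L)
    (hL.comp (by fun_prop) fun z hz => hCp z hz k) hL
    (fun x hx => by rw [hexp _ (hCp x hx k), hexp x hx, hdp]) hz (hHC hw)
  have h2 := sub_eq_sub_of_exp_eq hH.isPreconnected
    (f := fun z => L z + Complex.log c) (g := fun z => Complex.log (c * d z))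
    ((hL.mono hHC).add continuousOn_const)
    (ContinuousOn.clog (by fun_prop) hslit)
    (fun x hx => by
      rw [Complex.exp_add, hexp x (hHC hx), Complex.exp_log hc,
        Complex.exp_log (Complex.slitPlane_ne_zero (hslit x hx)), mul_comm]) (hHp w hw k) hw
  simp only [hdp] at h2
  linear_combination h1 + h2

theorem displacement_add_int (Φ : (ℝ × ℝ) ≃ₜ (ℝ × ℝ)) {p : ℝ × ℝ} (h : IsTwist Φ p)
    (z : ℝ × ℝ) (k : ℤ) :
    Φ (z + ((k : ℝ), 0)) - (z + ((k : ℝ), 0)) = Φ z - z := by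
  rw [add_int_of_add_one h.comm, add_sub_add_right_eq_sub]

/-- The displacement of a twist map has a continuous logarithm off the fixed points. The only loops
to worry about are those around the fixed points `p + ℤ`. On either side of the line `y = p.2`
a logarithm exists and is `1`-periodic because the displacement has constant direction far up or far
down; hence the two logarithms can be matched across the gap `p.1 < x < p.1 + 1` and then match
across all of its translates. -/
theorem IsTwist.exists_log {Φ : (ℝ × ℝ) ≃ₜ (ℝ × ℝ)} {p : ℝ × ℝ} (h : IsTwist Φ p) :
    ∃ L : ℝ × ℝ → ℂ, ContinuousOn L {z | Φ z ≠ z} ∧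
      ∀ z, Φ z ≠ z → Complex.exp (L z) = toC (Φ z - z) := by
  set d : ℝ × ℝ → ℂ := fun z => toC (Φ z - z) with hd
  have hdc : Continuous d := continuous_toC.comp (Φ.continuous.sub continuous_id)
  have hdp : ∀ z (k : ℤ), d (z + ((k : ℝ), 0)) = d z := fun z k => by
    simp only [hd, displacement_add_int Φ h]
  have hd0 : ∀ z, Φ z ≠ z → d z ≠ 0 := fun z hz => toC_ne_zero (sub_ne_zero.2 hz)
  by_cases hp : Φ p = p
  swap
  · have hU : ∀ z, Φ z ≠ z := fun z hz => hp <| by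
      obtain ⟨k, hk⟩ := h.fix z hz
      have := displacement_add_int Φ h p k
      rwa [← hk, hz, sub_self, eq_comm, sub_eq_zero] at this
    obtain ⟨L, hL, he⟩ := exists_log_of_convex convex_univ isOpen_univ univ_nonempty
      hdc.continuousOn fun z _ => hd0 z (hU z)
    exact ⟨L, hL.mono (subset_univ _), fun z _ => he z trivial⟩
  have hU : ∀ z, Φ z = z → z.2 = p.2 ∧ ∃ k : ℤ, z.1 - p.1 = k := fun z hz => by
    obtain ⟨k, rfl⟩ := h.fix z hz
    simp
  obtain ⟨hp0, hp1⟩ := h.mem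
  set A : Set (ℝ × ℝ) := {z | p.2 < z.2}
  set B : Set (ℝ × ℝ) := {z | z.2 < p.2}
  set T : Set (ℝ × ℝ) := {z | p.1 < z.1 ∧ z.1 < p.1 + 1}
  have hA : Convex ℝ A := convex_halfSpace_gt (IsLinearMap.mk (by simp) (by simp)) _
  have hB : Convex ℝ B := convex_halfSpace_lt (IsLinearMap.mk (by simp) (by simp)) _
  have hT : Convex ℝ T := (convex_halfSpace_gt (f := fun z : ℝ × ℝ => z.1)
    (IsLinearMap.mk (by simp) (by simp)) _).inter
    (convex_halfSpace_lt (f := fun z : ℝ × ℝ => z.1) (IsLinearMap.mk (by simp) (by simp)) _)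
  have hAo : IsOpen A := isOpen_lt continuous_const continuous_snd
  have hBo : IsOpen B := isOpen_lt continuous_snd continuous_const
  have hTo : IsOpen T := (isOpen_lt continuous_const continuous_fst).inter
    (isOpen_lt continuous_fst continuous_const)
  have hAT : (p + (1 / 2, 1) : ℝ × ℝ) ∈ A ∩ T := by
    exact ⟨by simp [A], by simp, by simp; norm_num⟩
  have hBT : (p + (1 / 2, -1) : ℝ × ℝ) ∈ B ∩ T := by
    exact ⟨by simp [B], by simp, by simp; norm_num⟩
  obtain ⟨LA, hLA, eA⟩ := exists_log_of_convex hA hAo ⟨_, hAT.1⟩ hdc.continuousOn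
    fun z hz => hd0 z fun hf => (ne_of_gt hz) (hU z hf).1
  obtain ⟨LB, hLB, eB⟩ := exists_log_of_convex hB hBo ⟨_, hBT.1⟩ hdc.continuousOn
    fun z hz => hd0 z fun hf => (ne_of_lt hz) (hU z hf).1
  obtain ⟨LT, hLT, eT⟩ := exists_log_of_convex hT hTo ⟨_, hAT.2⟩ hdc.continuousOn
    fun z hz => hd0 z fun hf => by
      obtain ⟨-, k, hk⟩ := hU z hf
      have h0 : (0 : ℝ) < k := by rw [← hk]; linarith [hz.1]
      have h1 : (k : ℝ) < 1 := by rw [← hk]; linarith [hz.2]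
      norm_cast at h0 h1
      omega
  -- the three logarithms differ by constants on the two half-strips
  set α := LT (p + (1 / 2, 1)) - LA (p + (1 / 2, 1)) with hα
  set β := LT (p + (1 / 2, -1)) - LB (p + (1 / 2, -1)) with hβ
  have cA : ∀ z ∈ A ∩ T, LT z = LA z + α := fun z hz => by
    have := sub_eq_sub_of_exp_eq (hA.inter hT).isPreconnected (hLT.mono inter_subset_right)
      (hLA.mono inter_subset_left) (fun x hx => by rw [eT x hx.2, eA x hx.1]) hz hAT
    linear_combination this
  have cB : ∀ z ∈ B ∩ T, LT z = LB z + β := fun z hz => by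
    have := sub_eq_sub_of_exp_eq (hB.inter hT).isPreconnected (hLT.mono inter_subset_right)
      (hLB.mono inter_subset_left) (fun x hx => by rw [eT x hx.2, eB x hx.1]) hz hBT
    linear_combination this
  have xA : Complex.exp α = 1 := by
    rw [hα, Complex.exp_sub, eT _ hAT.2, ← eA _ hAT.1, div_self (Complex.exp_ne_zero _)]
  have xB : Complex.exp β = 1 := by
    rw [hβ, Complex.exp_sub, eT _ hBT.2, ← eB _ hBT.1, div_self (Complex.exp_ne_zero _)]
  have pA : ∀ z ∈ A, ∀ k : ℤ, LA (z + ((k : ℝ), 0)) = LA z := fun z hz k => by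
    obtain ⟨f, -, hf, hhigh⟩ := h.high
    refine log_periodic hA (H := {z | 1 ≤ z.2}) (c := 1) (fun z hz k => by simpa [A] using hz)
      (convex_halfSpace_ge (IsLinearMap.mk (by simp) (by simp)) _)
      (fun z hz => hp1.trans_le hz) (fun z hz k => by simpa using hz) ⟨(0, 1), by simp⟩ hdc hdp
      hLA eA one_ne_zero (fun z hz => ?_) hz k
    left
    have := hhigh z.1 z.2 hz
    simp only [Prod.mk.eta] at this
    simp [hd, this, toC, hf]
  have pB : ∀ z ∈ B, ∀ k : ℤ, LB (z + ((k : ℝ), 0)) = LB z := fun z hz k => by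
    obtain ⟨f, -, hf, hlow⟩ := h.low
    refine log_periodic hB (H := {z | z.2 ≤ 0}) (c := -1) (fun z hz k => by simpa [B] using hz)
      (convex_halfSpace_le (IsLinearMap.mk (by simp) (by simp)) _)
      (fun z hz => lt_of_le_of_lt hz hp0) (fun z hz k => by simpa using hz) ⟨(0, 0), by simp⟩
      hdc hdp hLB eB (by simp) (fun z hz => ?_) hz k
    left
    have := hlow z.1 z.2 hz
    simp only [Prod.mk.eta] at this
    simp [hd, this, toC, hf]
  -- `τ k` brings the `k`-th vertical strip between fixed points to `T`
  set τ : ℤ → ℝ × ℝ → ℝ × ℝ := fun k z => z + (((-k : ℤ) : ℝ), 0) with hτ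
  have hτ1 : ∀ k z, (τ k z).1 = z.1 - k := fun k z => by simp [hτ, sub_eq_add_neg]
  have hτ2 : ∀ k z, (τ k z).2 = z.2 := fun k z => by simp [hτ]
  have hτc : ∀ k, Continuous (τ k) := fun k => by fun_prop
  classical
  set L : ℝ × ℝ → ℂ := fun z => if p.2 < z.2 then LA z + α else if z.2 < p.2 then LB z + β else
    LT (τ ⌊z.1 - p.1⌋ z) with hL
  have iA : ∀ z ∈ A, L z = LA z + α := fun z hz => if_pos hz
  have iB : ∀ z ∈ B, L z = LB z + β := fun z hz =>
    (if_neg (not_lt.2 (le_of_lt hz))).trans (if_pos hz)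
  have iT : ∀ (k : ℤ) z, τ k z ∈ T → L z = LT (τ k z) := fun k z hz => by
    have hk : ⌊z.1 - p.1⌋ = k := by
      have h1 := hz.1
      have h2 := hz.2
      rw [hτ1] at h1 h2
      rw [Int.floor_eq_iff]
      constructor <;> linarith
    rcases lt_trichotomy p.2 z.2 with hz2 | hz2 | hz2
    · have : τ k z ∈ A := by change p.2 < (τ k z).2; rwa [hτ2]
      rw [iA z hz2, cA _ ⟨this, hz⟩, pA z hz2]
    · simp only [hL, hz2, lt_irrefl, if_false, hk]
    · have : τ k z ∈ B := by change (τ k z).2 < p.2; rwa [hτ2]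
      rw [iB z hz2, cB _ ⟨this, hz⟩, pB z hz2]
  have key : ∀ z, Φ z ≠ z → z.2 = p.2 → ∃ k, τ k z ∈ T := fun z hz hz2 => by
    refine ⟨⌊z.1 - p.1⌋, ?_, ?_⟩
    · rw [hτ1]
      have h1 := Int.floor_le (z.1 - p.1)
      rcases h1.eq_or_lt with h1 | h1
      · exfalso
        refine hz ?_
        have hzp : z = p + ((⌊z.1 - p.1⌋ : ℝ), 0) := by
          ext
          · rw [h1]; simp
          · simp [hz2]
        rw [hzp, add_int_of_add_one h.comm, hp]
      · linarith
    · rw [hτ1]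
      have := Int.lt_floor_add_one (z.1 - p.1)
      linarith
  refine ⟨L, fun z hz => ContinuousAt.continuousWithinAt ?_, fun z hz => ?_⟩
  · rcases lt_trichotomy p.2 z.2 with hz2 | hz2 | hz2
    · refine ContinuousAt.congr (f := fun z => LA z + α) ?_ ?_
      · exact (hLA.continuousAt (hAo.mem_nhds hz2)).add continuousAt_const
      · filter_upwards [hAo.mem_nhds hz2] with w hw using (iA w hw).symm
    · obtain ⟨k, hk⟩ := key z hz hz2.symm
      refine ContinuousAt.congr (f := fun z => LT (τ k z)) ?_ ?_
      · exact ContinuousAt.comp (hLT.continuousAt (hTo.mem_nhds hk)) (hτc k).continuousAt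
      · filter_upwards [(hτc k).continuousAt.preimage_mem_nhds (hTo.mem_nhds hk)] with w hw
          using (iT k w hw).symm
    · refine ContinuousAt.congr (f := fun z => LB z + β) ?_ ?_
      · exact (hLB.continuousAt (hBo.mem_nhds hz2)).add continuousAt_const
      · filter_upwards [hBo.mem_nhds hz2] with w hw using (iB w hw).symm
  · change _ = d z
    rcases lt_trichotomy p.2 z.2 with hz2 | hz2 | hz2
    · rw [iA z hz2, Complex.exp_add, xA, mul_one, eA z hz2]
    · obtain ⟨k, hk⟩ := key z hz hz2.symm
      rw [iT k z hk, eT _ hk, hdp]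
    · rw [iB z hz2, Complex.exp_add, xB, mul_one, eB z hz2]

/-! ### The contradiction -/

/-- The half-turn `z ↦ (0, 1) - z` conjugates a twist map to a twist map. -/
theorem IsTwist.reflect {Φ : (ℝ × ℝ) ≃ₜ (ℝ × ℝ)} {p : ℝ × ℝ} (h : IsTwist Φ p) :
    IsTwist (((Homeomorph.subLeft ((0, 1) : ℝ × ℝ)).trans Φ).trans
      (Homeomorph.subLeft ((0, 1) : ℝ × ℝ))) ((0, 1) - p) := by
  have hint : ∀ z (k : ℤ), Φ (z + ((k : ℝ), 0)) = Φ z + ((k : ℝ), 0) :=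
    add_int_of_add_one h.comm
  obtain ⟨f0, hf0, hf0x, hlow⟩ := h.low
  obtain ⟨f1, hf1, hf1x, hhigh⟩ := h.high
  refine ⟨fun z => ?_, ⟨fun x => -f1 (-x), ?_, ?_, ?_⟩, ⟨fun x => -f0 (-x), ?_, ?_, ?_⟩,
    fun z hz => ?_, fun z hz => ?_, fun A hA hAm => ?_, ?_, fun z hz => ?_⟩
  · have := hint ((0, 1) - z) (-1)
    have e : (0, 1) - (z + (1, 0)) = (0, 1) - z + (((-1 : ℤ) : ℝ), (0 : ℝ)) := by
      ext
      · simp; ring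
      · simp
    simp only [Homeomorph.trans_apply, Homeomorph.coe_subLeft]
    rw [e, this]
    ext
    · simp; ring
    · simp
  · exact fun a b hab => neg_lt_neg (hf1 (neg_lt_neg hab))
  · exact fun x => by linarith [hf1x (-x)]
  · intro x y hy
    simp only [Homeomorph.trans_apply, Homeomorph.coe_subLeft, Prod.mk_sub_mk, zero_sub]
    rw [hhigh _ _ (by linarith)]
    simp
  · exact fun a b hab => neg_lt_neg (hf0 (neg_lt_neg hab))
  · exact fun x => by linarith [hf0x (-x)]
  · intro x y hy
    simp only [Homeomorph.trans_apply, Homeomorph.coe_subLeft, Prod.mk_sub_mk, zero_sub]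
    rw [hlow _ _ (by linarith)]
    simp
  · have := h.lt_one ((0, 1) - z) (by simpa using hz)
    simpa using this
  · have := h.pos ((0, 1) - z) (by simpa using hz)
    simpa using this
  · have hR : MeasurePreserving (Homeomorph.subLeft ((0, 1) : ℝ × ℝ)) :=
      Measure.measurePreserving_sub_left volume _
    have e : (((Homeomorph.subLeft ((0, 1) : ℝ × ℝ)).trans Φ).trans
        (Homeomorph.subLeft ((0, 1) : ℝ × ℝ))) '' A = Homeomorph.subLeft ((0, 1) : ℝ × ℝ) ''
          (Φ '' (Homeomorph.subLeft ((0, 1) : ℝ × ℝ) '' A)) := by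
      simp only [image_image]; rfl
    rw [e, volume_image_homeo hR, h.area, volume_image_homeo hR]
    · rintro _ ⟨z, hz, rfl⟩
      have := (hA hz).2
      simp only [mem_Icc] at this
      simp only [Homeomorph.coe_subLeft, mem_prod, mem_univ, true_and, mem_Icc, Prod.snd_sub]
      constructor <;> linarith
    · exact (Homeomorph.subLeft ((0, 1) : ℝ × ℝ)).measurableEmbedding.measurableSet_image.2 hAm
  · obtain ⟨h0, h1⟩ := h.mem
    simpa using ⟨h1, h0⟩
  · obtain ⟨k, hk⟩ := h.fix ((0, 1) - z) (by
      simp only [Homeomorph.trans_apply, Homeomorph.coe_subLeft] at hz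
      rw [← sub_sub_cancel (0, 1) (Φ ((0, 1) - z)), hz])
    refine ⟨-k, ?_⟩
    rw [← sub_sub_cancel (0, 1) z, hk]
    ext
    · simp; ring
    · simp

/-- The imaginary part of a logarithm is constant where the function has constant direction. -/
theorem im_eq_of_slit {d L : ℝ × ℝ → ℂ} {H : Set (ℝ × ℝ)} {c : ℂ}
    (hH : Convex ℝ H) (hd : Continuous d)
    (hL : ContinuousOn L H) (hexp : ∀ z ∈ H, Complex.exp (L z) = d z) (hc : c ≠ 0)
    (hslit : ∀ z ∈ H, 0 < (c * d z).re ∧ (c * d z).im = 0) {z w : ℝ × ℝ} (hz : z ∈ H)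
    (hw : w ∈ H) : (L z).im = (L w).im := by
  have hs : ∀ z ∈ H, c * d z ∈ Complex.slitPlane := fun z hz => Or.inl (hslit z hz).1
  have him : ∀ z ∈ H, (Complex.log (c * d z)).im = 0 := fun z hz => by
    rw [Complex.log_im, Complex.arg_eq_zero_iff]
    exact ⟨(hslit z hz).1.le, (hslit z hz).2⟩
  have h2 := sub_eq_sub_of_exp_eq hH.isPreconnected
    (f := fun z => L z + Complex.log c) (g := fun z => Complex.log (c * d z))
    (hL.add continuousOn_const)
    (ContinuousOn.clog (by fun_prop) hs)
    (fun x hx => by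
      rw [Complex.exp_add, hexp x hx, Complex.exp_log hc,
        Complex.exp_log (Complex.slitPlane_ne_zero (hs x hx)), mul_comm]) hz hw
  have := congrArg Complex.im h2
  simp only [Complex.sub_im, Complex.add_im, him z hz, him w hw] at this
  linarith

/-- The displacement cannot turn by `-π` between the two boundaries both for `Φ` and for its
conjugate by the half-turn: the half-turn exchanges the two boundaries and reverses all
displacements, so it changes the sign of the variation. -/
theorem IsTwist.false {Φ : (ℝ × ℝ) ≃ₜ (ℝ × ℝ)} {p : ℝ × ℝ} (h : IsTwist Φ p) : False := by
  obtain ⟨L, hL, hexp⟩ := h.exists_log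
  obtain ⟨a, b, ha, hb, hab⟩ := h.exists_variation hL hexp
  have hfix : ∀ z, (((Homeomorph.subLeft ((0, 1) : ℝ × ℝ)).trans Φ).trans
      (Homeomorph.subLeft ((0, 1) : ℝ × ℝ))) z ≠ z → Φ ((0, 1) - z) ≠ (0, 1) - z := by
    intro z hz hf
    refine hz ?_
    simp only [Homeomorph.trans_apply, Homeomorph.coe_subLeft]
    rw [hf, sub_sub_cancel]
  obtain ⟨a', b', ha', hb', hab'⟩ := h.reflect.exists_variation
    (L := fun z => L ((0, 1) - z) + Real.pi * Complex.I)
    ((hL.comp (by fun_prop) fun z hz => hfix z hz).add continuousOn_const)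
    (fun z hz => by
      rw [Complex.exp_add, hexp _ (hfix z hz), Complex.exp_pi_mul_I]
      simp only [Homeomorph.trans_apply, Homeomorph.coe_subLeft]
      apply Complex.ext
      · simp [toC]; ring
      · simp [toC]; ring)
  have hdc : Continuous fun z => toC (Φ z - z) :=
    continuous_toC.comp (Φ.continuous.sub continuous_id)
  have low : ∀ z w : ℝ × ℝ, z.2 ≤ 0 → w.2 ≤ 0 → (L z).im = (L w).im := by
    obtain ⟨f, -, hf, hlow⟩ := h.low
    have hl : ∀ z : ℝ × ℝ, z.2 ≤ 0 → Φ z = (f z.1, z.2) := fun z => hlow z.1 z.2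
    have hU : ∀ z ∈ {z : ℝ × ℝ | z.2 ≤ 0}, Φ z ≠ z := fun z hz e =>
      (hf z.1).ne (by rw [hl z hz] at e; exact congrArg Prod.fst e)
    exact fun z w hz hw => im_eq_of_slit (c := -1)
      (convex_halfSpace_le (f := Prod.snd) (IsLinearMap.mk (by simp) (by simp)) _)
      hdc (hL.mono hU) (fun z hz => hexp z (hU z hz)) (by simp)
      (fun z hz => by simp [toC, hl z hz, hf]) hz hw
  have high : ∀ z w : ℝ × ℝ, 1 ≤ z.2 → 1 ≤ w.2 → (L z).im = (L w).im := by
    obtain ⟨f, -, hf, hhigh⟩ := h.high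
    have hl : ∀ z : ℝ × ℝ, 1 ≤ z.2 → Φ z = (f z.1, z.2) := fun z => hhigh z.1 z.2
    have hU : ∀ z ∈ {z : ℝ × ℝ | 1 ≤ z.2}, Φ z ≠ z := fun z hz e =>
      (hf z.1).ne' (by rw [hl z hz] at e; exact congrArg Prod.fst e)
    exact fun z w hz hw => im_eq_of_slit (c := 1)
      (convex_halfSpace_ge (f := Prod.snd) (IsLinearMap.mk (by simp) (by simp)) _)
      hdc (hL.mono hU) (fun z hz => hexp z (hU z hz)) (by simp)
      (fun z hz => by simp [toC, hl z hz, hf]) hz hw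
  have e1 := high ((0, 1) - a') b (by simpa using ha') hb
  have e2 := low ((0, 1) - b') a (by simpa using hb') ha
  simp only [Complex.add_im] at hab'
  linarith [Real.pi_pos]

/-! ### Extension of a strip homeomorphism to the plane -/

theorem strictMono_of_add_one {f : ℝ → ℝ} (hc : Continuous f) (hi : Function.Injective f)
    (h1 : ∀ x, f (x + 1) = f x + 1) : StrictMono f := by
  refine (hc.strictMono_of_inj hi).resolve_right fun ha => ?_
  have := ha (lt_add_one (0 : ℝ))
  rw [h1] at this
  linarith

theorem lt_of_rotation_neg {f : ℝ → ℝ} (hf : StrictMono f) {ρ : ℝ} (hρ : ρ < 0)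
    (hrot : ∀ x, Tendsto (fun n : ℕ => (f^[n] x - x) / n) atTop (nhds ρ)) (x : ℝ) : f x < x := by
  by_contra! hx
  refine hρ.not_ge (ge_of_tendsto' (hrot x) fun n => div_nonneg (sub_nonneg.2 ?_) n.cast_nonneg)
  exact hf.monotone.monotone_iterate_of_le_map hx (Nat.zero_le n)

theorem lt_of_rotation_pos {f : ℝ → ℝ} (hf : StrictMono f) {ρ : ℝ} (hρ : 0 < ρ)
    (hrot : ∀ x, Tendsto (fun n : ℕ => (f^[n] x - x) / n) atTop (nhds ρ)) (x : ℝ) : x < f x := by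
  by_contra! hx
  refine hρ.not_ge (le_of_tendsto' (hrot x) fun n =>
    div_nonpos_of_nonpos_of_nonneg (sub_nonpos.2 ?_) n.cast_nonneg)
  exact hf.monotone.antitone_iterate_of_map_le hx (Nat.zero_le n)

/-- The height `y` moved to the nearest point of `[0, 1]`. -/
noncomputable def clamp (y : ℝ) : ℝ := max 0 (min 1 y)

/-- Extension of a map of the strip to the plane by its boundary values, the height outside the
strip being unchanged. -/
noncomputable def extendStrip (F : ℝ × ℝ → ℝ × ℝ) (z : ℝ × ℝ) : ℝ × ℝ :=
  F (z.1, clamp z.2) + (0, z.2 - clamp z.2)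

theorem extendStrip_of_le {F : ℝ × ℝ → ℝ × ℝ} {x y : ℝ} (hy : y ≤ 0) :
    extendStrip F (x, y) = F (x, 0) + (0, y) := by
  have : clamp y = 0 := by rw [clamp, max_eq_left ((min_le_right _ _).trans hy)]
  simp [extendStrip, this]

theorem extendStrip_of_ge {F : ℝ × ℝ → ℝ × ℝ} {x y : ℝ} (hy : 1 ≤ y) :
    extendStrip F (x, y) = F (x, 1) + (0, y - 1) := by
  have : clamp y = 1 := by rw [clamp, min_eq_left hy, max_eq_right zero_le_one]
  simp [extendStrip, this]

theorem extendStrip_of_mem {F : ℝ × ℝ → ℝ × ℝ} {z : ℝ × ℝ} (hz : z ∈ univ ×ˢ Icc (0 : ℝ) 1) :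
    extendStrip F z = F z := by
  have : clamp z.2 = z.2 := by rw [clamp, min_eq_right hz.2.2, max_eq_right hz.2.1]
  rw [extendStrip, this, sub_self]
  exact add_zero _

theorem continuous_extendStrip {F : ℝ × ℝ → ℝ × ℝ}
    (hF : ContinuousOn F (univ ×ˢ Icc (0 : ℝ) 1)) : Continuous (extendStrip F) := by
  have hc : Continuous clamp := by unfold clamp; fun_prop
  refine Continuous.add ?_ (by fun_prop)
  exact hF.comp_continuous (by fun_prop) fun z =>
    ⟨trivial, le_max_left _ _, max_le zero_le_one (min_le_left _ _)⟩

theorem extendStrip_leftInverse {F G : ℝ × ℝ → ℝ × ℝ}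
    (hFS : MapsTo F (univ ×ˢ Icc (0 : ℝ) 1) (univ ×ˢ Icc (0 : ℝ) 1))
    (hGF : ∀ z ∈ univ ×ˢ Icc (0 : ℝ) 1, G (F z) = z)
    (hF0 : ∀ x, (F (x, 0)).2 = 0) (hF1 : ∀ x, (F (x, 1)).2 = 1) (z : ℝ × ℝ) :
    extendStrip G (extendStrip F z) = z := by
  obtain ⟨x, y⟩ := z
  rcases le_total y 0 with hy | hy
  · have e : extendStrip F (x, y) = ((F (x, 0)).1, y) := by
      rw [extendStrip_of_le hy]; ext <;> simp [hF0]
    rw [e, extendStrip_of_le hy, show ((F (x, 0)).1, (0 : ℝ)) = F (x, 0) by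
      ext <;> simp [hF0], hGF _ (by simp)]
    simp
  rcases le_total y 1 with hy' | hy'
  · have hz : (x, y) ∈ univ ×ˢ Icc (0 : ℝ) 1 := ⟨trivial, hy, hy'⟩
    rw [extendStrip_of_mem hz, extendStrip_of_mem (hFS hz), hGF _ hz]
  · have e : extendStrip F (x, y) = ((F (x, 1)).1, y) := by
      rw [extendStrip_of_ge hy']; ext <;> simp [hF1]
    rw [e, extendStrip_of_ge hy', show ((F (x, 1)).1, (1 : ℝ)) = F (x, 1) by
      ext <;> simp [hF1], hGF _ (by simp)]
    simp

theorem inverse_height {F G : ℝ × ℝ → ℝ × ℝ} {c : ℝ} (hc : c ∈ Icc (0 : ℝ) 1)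
    (hGF : ∀ z ∈ univ ×ˢ Icc (0 : ℝ) 1, G (F z) = z)
    (hbd : F '' (univ ×ˢ ({c} : Set ℝ)) = univ ×ˢ ({c} : Set ℝ)) (x : ℝ) : (G (x, c)).2 = c := by
  have hm : (x, c) ∈ F '' (univ ×ˢ ({c} : Set ℝ)) := by rw [hbd]; exact ⟨trivial, rfl⟩
  obtain ⟨⟨u, v⟩, ⟨-, rfl⟩, hw⟩ := hm
  rw [← hw, hGF _ ⟨trivial, hc⟩]

/-- **Poincaré–Birkhoff theorem.** Let `F` be a homeomorphism of the closed strip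
`S = ℝ × [0,1]` (given with its inverse `G` on `S`), commuting with the integer
translation `(x,y) ↦ (x+1,y)` (so it is a lift of a homeomorphism of the closed
annulus), preserving two-dimensional Lebesgue measure and each boundary line.
If the rotation numbers of the two boundary circles are of opposite signs, then
`F` has at least two fixed points in `S` projecting to distinct points of the
annulus. -/
theorem poincare_birkhoff
    (F G : ℝ × ℝ → ℝ × ℝ)
    (S : Set (ℝ × ℝ)) (hS : S = univ ×ˢ Icc (0 : ℝ) 1)
    -- `F` is a homeomorphism of the strip `S`, with inverse `G` :
    (hFS : MapsTo F S S) (hGS : MapsTo G S S)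
    (hGF : ∀ z ∈ S, G (F z) = z) (hFG : ∀ z ∈ S, F (G z) = z)
    (hFc : ContinuousOn F S) (hGc : ContinuousOn G S)
    -- `F` commutes with the translation `(x,y) ↦ (x+1,y)` :
    (hcomm : ∀ z ∈ S, F (z + (1, 0)) = F z + (1, 0))
    -- `F` preserves two-dimensional Lebesgue measure on the strip :
    (hmes : ∀ A : Set (ℝ × ℝ), A ⊆ S → MeasurableSet A → volume (F '' A) = volume A)
    -- `F` preserves each boundary line :
    (hbd0 : F '' (univ ×ˢ ({0} : Set ℝ)) = univ ×ˢ ({0} : Set ℝ))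
    (hbd1 : F '' (univ ×ˢ ({1} : Set ℝ)) = univ ×ˢ ({1} : Set ℝ))
    -- the rotation numbers of the two boundary circles have opposite signs :
    (ρ₀ ρ₁ : ℝ) (hρ₀ : ρ₀ < 0) (hρ₁ : 0 < ρ₁)
    (hrot0 : ∀ x : ℝ,
      Tendsto (fun n : ℕ => ((F^[n] (x, 0)).1 - x) / n) atTop (nhds ρ₀))
    (hrot1 : ∀ x : ℝ,
      Tendsto (fun n : ℕ => ((F^[n] (x, 1)).1 - x) / n) atTop (nhds ρ₁)) :
    ∃ z₁ ∈ S, ∃ z₂ ∈ S, F z₁ = z₁ ∧ F z₂ = z₂ ∧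
      ∀ k : ℤ, z₂ ≠ z₁ + ((k : ℝ), 0) := by
  subst hS
  by_contra! hcon
  have hF0 : ∀ x, (F (x, 0)).2 = 0 := fun x =>
    (hbd0.subset (mem_image_of_mem F (show (x, (0 : ℝ)) ∈ univ ×ˢ {0} by simp))).2
  have hF1 : ∀ x, (F (x, 1)).2 = 1 := fun x =>
    (hbd1.subset (mem_image_of_mem F (show (x, (1 : ℝ)) ∈ univ ×ˢ {1} by simp))).2
  have hG0 := inverse_height (by simp) hGF hbd0
  have hG1 := inverse_height (by simp) hGF hbd1
  set Φ : (ℝ × ℝ) ≃ₜ (ℝ × ℝ) :=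
    { toFun := extendStrip F
      invFun := extendStrip G
      left_inv := extendStrip_leftInverse hFS hGF hF0 hF1
      right_inv := extendStrip_leftInverse hGS hFG hG0 hG1
      continuous_toFun := continuous_extendStrip hFc
      continuous_invFun := continuous_extendStrip hGc }
  have hΦ : ∀ z, Φ z = extendStrip F z := fun z => rfl
  have hmem0 : ∀ x : ℝ, (x, (0 : ℝ)) ∈ univ ×ˢ Icc (0 : ℝ) 1 := fun x => by simp
  have hmem1 : ∀ x : ℝ, (x, (1 : ℝ)) ∈ univ ×ˢ Icc (0 : ℝ) 1 := fun x => by simp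
  -- a boundary line carries a lift of a circle homeomorphism
  have hline : ∀ c ∈ Icc (0 : ℝ) 1, (∀ x, (F (x, c)).2 = c) →
      StrictMono (fun x => (F (x, c)).1) ∧
        ∀ (n : ℕ) x, F^[n] (x, c) = ((fun x => (F (x, c)).1)^[n] x, c) := fun c hc hFl => by
    have hm : ∀ x : ℝ, (x, c) ∈ univ ×ˢ Icc (0 : ℝ) 1 := fun x => ⟨trivial, hc⟩
    have he : ∀ x, F (x, c) = ((F (x, c)).1, c) := fun x => Prod.ext rfl (hFl x)
    refine ⟨strictMono_of_add_one ?_ ?_ ?_, fun n => ?_⟩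
    · exact continuous_fst.comp (hFc.comp_continuous (by fun_prop) hm)
    · intro x x' hxx
      have : F (x, c) = F (x', c) := by rw [he, he x']; exact congrArg (·, c) hxx
      have := congrArg G this
      rw [hGF _ (hm _), hGF _ (hm _)] at this
      exact congrArg Prod.fst this
    · intro x
      have := hcomm _ (hm x)
      simp only [Prod.mk_add_mk, add_zero] at this
      simp only [this, Prod.fst_add]
    · induction n with
      | zero => exact fun x => rfl
      | succ n ih => intro x; rw [Function.iterate_succ_apply, Function.iterate_succ_apply, he, ih]
  obtain ⟨hm0, hi0⟩ := hline 0 (by simp) hF0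
  obtain ⟨hm1, hi1⟩ := hline 1 (by simp) hF1
  have hlt0 := lt_of_rotation_neg hm0 hρ₀ fun x => by simpa only [hi0] using hrot0 x
  have hlt1 := lt_of_rotation_pos hm1 hρ₁ fun x => by simpa only [hi1] using hrot1 x
  have hlow : ∀ x y, y ≤ 0 → Φ (x, y) = ((F (x, 0)).1, y) := fun x y hy => by
    rw [hΦ, extendStrip_of_le hy]; ext <;> simp [hF0]
  have hhigh : ∀ x y, 1 ≤ y → Φ (x, y) = ((F (x, 1)).1, y) := fun x y hy => by
    rw [hΦ, extendStrip_of_ge hy]; ext <;> simp [hF1]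
  have hlow' : ∀ w : ℝ × ℝ, w.2 ≤ 0 → (Φ.symm w).2 = w.2 := fun w hw => by
    change (extendStrip G (w.1, w.2)).2 = w.2
    rw [extendStrip_of_le hw]; simp [hG0]
  have hhigh' : ∀ w : ℝ × ℝ, 1 ≤ w.2 → (Φ.symm w).2 = w.2 := fun w hw => by
    change (extendStrip G (w.1, w.2)).2 = w.2
    rw [extendStrip_of_ge hw]; simp [hG1]
  have hfixS : ∀ z, Φ z = z → z.2 ∈ Ioo (0 : ℝ) 1 ∧ F z = z := fun z hz => by
    obtain ⟨x, y⟩ := z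
    have h0 : 0 < y := by
      by_contra! hy
      rw [hlow x y hy] at hz
      exact (hlt0 x).ne (congrArg Prod.fst hz)
    have h1 : y < 1 := by
      by_contra! hy
      rw [hhigh x y hy] at hz
      exact (hlt1 x).ne' (congrArg Prod.fst hz)
    exact ⟨⟨h0, h1⟩, by rwa [hΦ, extendStrip_of_mem ⟨trivial, h0.le, h1.le⟩] at hz⟩
  obtain ⟨p, hp, hpfix⟩ : ∃ p : ℝ × ℝ, p.2 ∈ Ioo (0 : ℝ) 1 ∧
      ∀ z, Φ z = z → ∃ k : ℤ, z = p + ((k : ℝ), 0) := by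
    by_cases hex : ∃ p, Φ p = p
    · obtain ⟨p, hp⟩ := hex
      obtain ⟨hpm, hpF⟩ := hfixS p hp
      refine ⟨p, hpm, fun z hz => ?_⟩
      obtain ⟨hzm, hzF⟩ := hfixS z hz
      exact hcon p ⟨trivial, Ioo_subset_Icc_self hpm⟩ z ⟨trivial, Ioo_subset_Icc_self hzm⟩ hpF hzF
    · exact ⟨(0, 1 / 2), by norm_num, fun z hz => absurd ⟨z, hz⟩ hex⟩
  refine IsTwist.false (Φ := Φ) (p := p) ⟨fun z => ?_, ⟨_, hm0, hlt0, hlow⟩,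
    ⟨_, hm1, hlt1, hhigh⟩, fun z hz => ?_, fun z hz => ?_, fun A hA hAm => ?_, hp, hpfix⟩
  · have hc : (z.1, clamp z.2) ∈ univ ×ˢ Icc (0 : ℝ) 1 :=
      ⟨trivial, le_max_left _ _, max_le zero_le_one (min_le_left _ _)⟩
    have := hcomm _ hc
    simp only [Prod.mk_add_mk, add_zero] at this
    simp only [hΦ, extendStrip, Prod.fst_add, Prod.snd_add, add_zero, this]
    abel
  · by_contra! hc
    have := hlow' _ hc
    rw [Homeomorph.symm_apply_apply] at this
    linarith
  · by_contra! hc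
    have := hhigh' _ hc
    rw [Homeomorph.symm_apply_apply] at this
    linarith
  · rw [← hmes A hA hAm]
    exact congrArg volume (image_congr fun z hz => extendStrip_of_mem (hA hz))
end

section
/- Let f : ℝ → ℝ be a continuous map possessing a periodic point of least period 3, i.e. there is x ∈ ℝ with f³(x) = x, f(x) ≠ x and f²(x) ≠ x. Then for every integer n ≥ 1, f possesses a periodic point of least period n. -/
/-!
Up to the reflection `t ↦ -t` the orbit of period 3 reads `a < b < c` with `f a = b`, `f b = c`,
`f c = a`. By the intermediate value theorem `f` stretches `[b, c]` over `[a, c]` and `[a, b]` over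
`[b, c]`. Hence, for `n ≥ 2`, one can follow the itinerary that stays in `[b, c]` at times
`0, …, n - 2`, visits `[a, b]` at time `n - 1` and returns to `[b, c]` at time `n`: pulling back one
step at a time (`exists_Icc_mapsTo_of_endpoints`, `exists_Icc_iterate_mem`) yields a subinterval of
`[b, c]` that follows the itinerary and that `f^[n]` stretches over `[b, c]`, so it contains a fixed
point `y` of `f^[n]`. If `y` had a smaller period, the point `f^[n-1] y ∈ [a, b]` would also occur
among the earlier points of the orbit, which lie in `[b, c]`; so it would equal `b`, whence `y = c`
and `f y = a`, which is neither `b` (needed when `n = 2`) nor in `[b, c]` (needed when `n ≥ 3`).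
-/

open Set

/-- A stretch of `[p, q]` over `[u, v]` restricts to a subinterval that is mapped into `[u, v]`,
endpoints to endpoints: cut at the last point where `g ≤ u` and then at the first later point
where `v ≤ g`. -/
lemma exists_Icc_mapsTo_of_le {g : ℝ → ℝ} (hg : Continuous g) {p q u v : ℝ}
    (hpq : p ≤ q) (huv : u < v) (hp : g p ≤ u) (hq : v ≤ g q) :
    ∃ p' q', p ≤ p' ∧ p' ≤ q' ∧ q' ≤ q ∧ (∀ t ∈ Icc p' q', g t ∈ Icc u v) ∧
      g p' = u ∧ g q' = v := by
  obtain ⟨p', ⟨⟨hp1, hp2⟩, hp3 : g p' ≤ u⟩, hmax⟩ :=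
    (isCompact_Icc.inter_right (isClosed_le hg continuous_const) :
      IsCompact (Icc p q ∩ {t | g t ≤ u})).exists_isGreatest ⟨p, ⟨le_rfl, hpq⟩, hp⟩
  obtain ⟨q', ⟨⟨hq1, hq2⟩, hq3 : v ≤ g q'⟩, hmin⟩ :=
    (isCompact_Icc.inter_right (isClosed_le continuous_const hg) :
      IsCompact (Icc p' q ∩ {t | v ≤ g t})).exists_isLeast ⟨q, ⟨hp2, le_rfl⟩, hq⟩
  have hgp : g p' = u := by
    obtain ⟨z, ⟨hz1, hz2⟩, hz⟩ :=
      intermediate_value_Icc hp2 hg.continuousOn ⟨hp3, huv.le.trans hq⟩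
    have : z ≤ p' := hmax ⟨⟨hp1.trans hz1, hz2⟩, hz.le⟩
    rwa [le_antisymm this hz1] at hz
  have hgq : g q' = v := by
    obtain ⟨z, ⟨hz1, hz2⟩, hz⟩ :=
      intermediate_value_Icc hq1 hg.continuousOn ⟨hgp.le.trans huv.le, hq3⟩
    have : q' ≤ z := hmin ⟨⟨hz1, hz2.trans hq2⟩, hz.ge⟩
    rwa [le_antisymm hz2 this] at hz
  refine ⟨p', q', hp1, hq1, hq2, fun t ⟨ht1, ht2⟩ => ⟨?_, ?_⟩, hgp, hgq⟩
  · by_contra! h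
    have : t ≤ p' := hmax ⟨⟨hp1.trans ht1, ht2.trans hq2⟩, h.le⟩
    rw [le_antisymm this ht1, hgp] at h
    exact lt_irrefl _ h
  · by_contra! h
    have : q' ≤ t := hmin ⟨⟨ht1, ht2.trans hq2⟩, h.le⟩
    rw [le_antisymm ht2 this, hgq] at h
    exact lt_irrefl _ h

/-- Version of `exists_Icc_mapsTo_of_le` in which `g` may stretch with either orientation. -/
lemma exists_Icc_mapsTo_of_endpoints {g : ℝ → ℝ} (hg : Continuous g) {p q u v : ℝ}
    (hpq : p ≤ q) (huv : u < v) (h : (g p ≤ u ∧ v ≤ g q) ∨ (v ≤ g p ∧ g q ≤ u)) :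
    ∃ p' q', p ≤ p' ∧ p' ≤ q' ∧ q' ≤ q ∧ (∀ t ∈ Icc p' q', g t ∈ Icc u v) ∧
      ((g p' = u ∧ g q' = v) ∨ (g p' = v ∧ g q' = u)) := by
  rcases h with ⟨hp, hq⟩ | ⟨hp, hq⟩
  · obtain ⟨p', q', h1, h2, h3, h4, h5⟩ := exists_Icc_mapsTo_of_le hg hpq huv hp hq
    exact ⟨p', q', h1, h2, h3, h4, .inl h5⟩
  · obtain ⟨p', q', h1, h2, h3, h4, h5, h6⟩ :=
      exists_Icc_mapsTo_of_le hg.neg hpq (neg_lt_neg huv) (neg_le_neg hp) (neg_le_neg hq)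
    refine ⟨p', q', h1, h2, h3, fun t ht => ?_, .inr ⟨neg_inj.1 h5, neg_inj.1 h6⟩⟩
    exact ⟨neg_le_neg_iff.1 (h4 t ht).2, neg_le_neg_iff.1 (h4 t ht).1⟩

/-- Some subinterval of `[b, c]` stays in `[b, c]` up to time `m` and has its endpoints sent by
`f^[m]` to `b` and `c`, in some order. -/
lemma exists_Icc_iterate_mem {f : ℝ → ℝ} (hf : Continuous f) {a b c : ℝ} (hab : a < b)
    (hbc : b < c) (hb : f b = c) (hc : f c = a) (m : ℕ) :
    ∃ p q, p ≤ q ∧ (∀ t ∈ Icc p q, ∀ j ≤ m, f^[j] t ∈ Icc b c) ∧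
      ((f^[m] p = b ∧ f^[m] q = c) ∨ (f^[m] p = c ∧ f^[m] q = b)) := by
  induction m with
  | zero =>
    refine ⟨b, c, hbc.le, fun t ht j hj => ?_, .inl ⟨rfl, rfl⟩⟩
    obtain rfl : j = 0 := by omega
    exact ht
  | succ m ih =>
    obtain ⟨p, q, hpq, hmem, hend⟩ := ih
    obtain ⟨p', q', h1, h2, h3, h4, h5⟩ :=
      exists_Icc_mapsTo_of_endpoints (hf.iterate (m + 1)) hpq hbc (by
        simp only [Function.iterate_succ_apply']
        rcases hend with ⟨e1, e2⟩ | ⟨e1, e2⟩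
        · right; simp [e1, e2, hb, hc, hab.le]
        · left; simp [e1, e2, hb, hc, hab.le])
    refine ⟨p', q', h2, fun t ht j hj => ?_, h5⟩
    rcases hj.lt_or_eq with hj | rfl
    · exact hmem t ⟨h1.trans ht.1, ht.2.trans h3⟩ j (by omega)
    · exact h4 t ht

/-- The result for a 3-cycle that increases twice and then returns: `a ↦ b ↦ c ↦ a` with
`a < b < c`. -/
lemma exists_least_period_of_increasing_cycle {f : ℝ → ℝ} (hf : Continuous f) {a b c : ℝ}
    (hab : a < b) (hbc : b < c) (ha : f a = b) (hb : f b = c) (hc : f c = a)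
    (n : ℕ) (hn : 1 ≤ n) :
    ∃ y : ℝ, f^[n] y = y ∧ ∀ k : ℕ, 1 ≤ k → k < n → f^[k] y ≠ y := by
  obtain rfl | ⟨m, rfl⟩ : n = 1 ∨ ∃ m, n = m + 2 := by
    rcases hn.eq_or_lt with h | h
    · exact .inl h.symm
    · exact .inr ⟨n - 2, by omega⟩
  · obtain ⟨y, -, hy⟩ := isPreconnected_univ.intermediate_value₂ (mem_univ c) (mem_univ b)
      hf.continuousOn continuousOn_id (by simp only [id]; linarith) (by simp only [id]; linarith)
    exact ⟨y, hy, fun k h1 h2 => by omega⟩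
  · obtain ⟨p, q, hpq, hmem, hend⟩ := exists_Icc_iterate_mem hf hab hbc hb hc m
    obtain ⟨p', q', h1, h2, h3, h4, h5⟩ :=
      exists_Icc_mapsTo_of_endpoints (hf.iterate (m + 1)) hpq hab (by
        simp only [Function.iterate_succ_apply']
        rcases hend with ⟨e1, e2⟩ | ⟨e1, e2⟩
        · right; simp [e1, e2, hb, hc, hbc.le]
        · left; simp [e1, e2, hb, hc, hbc.le])
    have hmem' : ∀ t ∈ Icc p' q', ∀ j ≤ m, f^[j] t ∈ Icc b c := fun t ht =>
      hmem t ⟨h1.trans ht.1, ht.2.trans h3⟩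
    have hp' : p' ∈ Icc b c := hmem' p' (left_mem_Icc.2 h2) 0 (Nat.zero_le m)
    have hq' : q' ∈ Icc b c := hmem' q' (right_mem_Icc.2 h2) 0 (Nat.zero_le m)
    -- `f^[m + 2]` sends `p'` and `q'` to `b` and `c`, so `f^[m + 2] t - t` changes sign.
    obtain ⟨y, hy, hfy⟩ : ∃ y ∈ Icc p' q', f^[m + 2] y = y := by
      have hcont := (hf.iterate (m + 2)).continuousOn (s := Icc p' q')
      rcases h5 with ⟨e1, e2⟩ | ⟨e1, e2⟩
      · have e1' : f^[m + 2] p' = b := by rw [Function.iterate_succ_apply', e1, ha]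
        have e2' : f^[m + 2] q' = c := by rw [Function.iterate_succ_apply', e2, hb]
        exact isPreconnected_Icc.intermediate_value₂ (left_mem_Icc.2 h2) (right_mem_Icc.2 h2)
          hcont continuousOn_id (e1'.le.trans hp'.1) (hq'.2.trans e2'.ge)
      · have e1' : f^[m + 2] p' = c := by rw [Function.iterate_succ_apply', e1, hb]
        have e2' : f^[m + 2] q' = b := by rw [Function.iterate_succ_apply', e2, ha]
        exact isPreconnected_Icc.intermediate_value₂ (right_mem_Icc.2 h2) (left_mem_Icc.2 h2)
          hcont continuousOn_id (e2'.le.trans hq'.1) (hp'.2.trans e1'.ge)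
    refine ⟨y, hfy, fun k hk1 hk2 hk => ?_⟩
    have hlast : f^[m + 1] y = b := by
      have heq : f^[m + 1] y = f^[m + 1 - k] y := by
        conv_lhs => rw [show m + 1 = (m + 1 - k) + k by omega, Function.iterate_add_apply, hk]
      refine le_antisymm (h4 y hy).2 ?_
      rw [heq]
      exact (hmem' y hy (m + 1 - k) (by omega)).1
    have hyc : y = c := by rw [← hfy, Function.iterate_succ_apply', hlast, hb]
    subst hyc
    rcases m with _ | m
    · have : f y = b := hlast
      linarith
    · have : f y ∈ Icc b y := hmem' y hy 1 (by omega)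
      linarith [this.1]

/-- The mirror image of `exists_least_period_of_increasing_cycle`: a cycle `c ↦ b ↦ a ↦ c` of `f`
becomes an increasing one for `t ↦ -f (-t)`. -/
lemma exists_least_period_of_decreasing_cycle {f : ℝ → ℝ} (hf : Continuous f) {a b c : ℝ}
    (hab : a < b) (hbc : b < c) (hc : f c = b) (hb : f b = a) (ha : f a = c)
    (n : ℕ) (hn : 1 ≤ n) :
    ∃ y : ℝ, f^[n] y = y ∧ ∀ k : ℕ, 1 ≤ k → k < n → f^[k] y ≠ y := by
  have hiter : ∀ k t, (fun t => -f (-t))^[k] t = -f^[k] (-t) := by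
    intro k t
    induction k with
    | zero => simp
    | succ k ih => simp only [Function.iterate_succ_apply', ih, neg_neg]
  obtain ⟨y, hy, hmin⟩ := exists_least_period_of_increasing_cycle
    (f := fun t => -f (-t)) (hf.comp continuous_neg).neg (neg_lt_neg hbc) (neg_lt_neg hab)
    (by simp [hc]) (by simp [hb]) (by simp [ha]) n hn
  refine ⟨-y, ?_, fun k h1 h2 h => hmin k h1 h2 ?_⟩
  · rw [hiter] at hy
    linarith
  · rw [hiter, h, neg_neg]

/-- **Sharkovskii, period-3 case.** If a continuous map `f : ℝ → ℝ` has a periodic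
point of least period 3, then it has periodic points of every least period `n ≥ 1`. -/
theorem period_three_implies_all_periods
    (f : ℝ → ℝ) (hf : Continuous f)
    (x : ℝ) (hx3 : f^[3] x = x) (hx1 : f x ≠ x) (hx2 : f^[2] x ≠ x) :
    ∀ n : ℕ, 1 ≤ n →
      ∃ y : ℝ, f^[n] y = y ∧ ∀ k : ℕ, 1 ≤ k → k < n → f^[k] y ≠ y := by
  obtain ⟨y, hy⟩ : ∃ y, f x = y := ⟨_, rfl⟩
  obtain ⟨z, hz⟩ : ∃ z, f y = z := ⟨_, rfl⟩
  have hzx : f z = x := by simpa [hy, hz] using hx3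
  have hxy : y ≠ x := hy ▸ hx1
  have hxz : z ≠ x := by simpa [hy, hz] using hx2
  have hyz : y ≠ z := by
    rintro rfl
    exact hxy (hz.symm.trans hzx)
  rcases hxy.lt_or_gt with h1 | h1 <;> rcases hxz.lt_or_gt with h2 | h2 <;>
    rcases hyz.lt_or_gt with h3 | h3
  · exact exists_least_period_of_increasing_cycle hf h3 h2 hz hzx hy
  · exact exists_least_period_of_decreasing_cycle hf h3 h1 hy hz hzx
  · exact exists_least_period_of_decreasing_cycle hf h1 h2 hzx hy hz
  · linarith
  · linarith
  · exact exists_least_period_of_increasing_cycle hf h2 h1 hzx hy hz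
  · exact exists_least_period_of_increasing_cycle hf h1 h3 hy hz hzx
  · exact exists_least_period_of_decreasing_cycle hf h2 h3 hz hzx hy
end

section
/- Let f : ℝ → ℝ be continuous and let a < b < c be real numbers with f(a) = b, f(b) = c and f(c) = a. Set I₀ = [a,b] and I₁ = [b,c]. Let w = (w_j)_{j∈ℕ} ∈ {0,1}^ℕ be any admissible sequence, meaning that w_{j+1} = 1 whenever w_j = 0. Then there exists a point x ∈ ℝ such that f^j(x) ∈ I_{w_j} for every j ≥ 0. -/
/-!
By the intermediate value theorem each edge `i → j` of the Markov graph is a covering relation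
`I j ⊆ f '' I i`. Along an admissible itinerary, any point of the `n`-th interval can therefore be
pulled back step by step, so the set of points following the itinerary up to time `n` is nonempty.
These sets are compact and decreasing, so by Cantor's intersection theorem they have a common
point. The pull-back and compactness argument is `exists_orbit_of_covering`.
-/

open Set

/-- If every set of a sequence is covered by the image of its predecessor, then each point of the
`n`-th set is the endpoint of an orbit segment through the first `n + 1` sets. -/
theorem exists_orbit_segment_of_covering {X : Type*} (f : X → X) (J : ℕ → Set X)
    (hcov : ∀ n, J (n + 1) ⊆ f '' J n) (n : ℕ) :
    ∀ y ∈ J n, ∃ x, f^[n] x = y ∧ ∀ j ≤ n, f^[j] x ∈ J j := by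
  induction n with
  | zero =>
    intro y hy
    refine ⟨y, rfl, fun j hj => ?_⟩
    obtain rfl : j = 0 := by omega
    exact hy
  | succ n ih =>
    intro y hy
    obtain ⟨z, hz, rfl⟩ := hcov n hy
    obtain ⟨x, rfl, hx⟩ := ih z hz
    refine ⟨x, Function.iterate_succ_apply' f n x, fun j hj => ?_⟩
    rcases Nat.le_succ_iff.mp hj with h | rfl
    · exact hx j h
    · rwa [Nat.succ_eq_add_one, Function.iterate_succ_apply']

theorem exists_orbit_of_covering {X : Type*} [TopologicalSpace X] [T2Space X] (f : X → X)
    (hf : Continuous f) (J : ℕ → Set X) (hne : ∀ n, (J n).Nonempty)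
    (hJ : ∀ n, IsCompact (J n)) (hcov : ∀ n, J (n + 1) ⊆ f '' J n) :
    ∃ x, ∀ j, f^[j] x ∈ J j := by
  let K : ℕ → Set X := fun n => {x | ∀ j ≤ n, f^[j] x ∈ J j}
  have hKcl : ∀ n, IsClosed (K n) := by
    intro n
    have : K n = ⋂ j, ⋂ _ : j ≤ n, f^[j] ⁻¹' J j := by
      ext x
      simp [K]
    rw [this]
    exact isClosed_iInter fun j => isClosed_iInter fun _ =>
      (hJ j).isClosed.preimage (hf.iterate j)
  have hKne : ∀ n, (K n).Nonempty := by
    intro n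
    obtain ⟨y, hy⟩ := hne n
    obtain ⟨x, -, hx⟩ := exists_orbit_segment_of_covering f J hcov n y hy
    exact ⟨x, hx⟩
  have hK0 : IsCompact (K 0) := (hJ 0).of_isClosed_subset (hKcl 0) fun x hx => hx 0 le_rfl
  obtain ⟨x, hx⟩ := IsCompact.nonempty_iInter_of_sequence_nonempty_isCompact_isClosed K
    (fun n x hx j hj => hx j (Nat.le_succ_of_le hj)) hKne hK0 hKcl
  exact ⟨x, fun j => mem_iInter.mp hx j j le_rfl⟩

/-- Given a continuous map `f : ℝ → ℝ` with a period-3 orbit `a < b < c`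
(`f a = b`, `f b = c`, `f c = a`), every admissible itinerary in the Markov graph
`0 → 1`, `1 → 0`, `1 → 1` on the intervals `I₀ = [a,b]`, `I₁ = [b,c]` is realized
by an actual orbit of `f`. -/
theorem admissible_itinerary_realized
    (f : ℝ → ℝ) (hf : Continuous f)
    (a b c : ℝ) (hab : a < b) (hbc : b < c)
    (hfa : f a = b) (hfb : f b = c) (hfc : f c = a)
    (w : ℕ → Fin 2) (hw : ∀ j, w j = 0 → w (j + 1) = 1) :
    ∃ x : ℝ, ∀ j : ℕ, f^[j] x ∈ (![Icc a b, Icc b c] : Fin 2 → Set ℝ) (w j) := by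
  have h01 : Icc b c ⊆ f '' Icc a b := by
    simpa only [hfa, hfb] using intermediate_value_Icc hab.le hf.continuousOn
  have h1 : Icc a c ⊆ f '' Icc b c := by
    simpa only [hfb, hfc] using intermediate_value_Icc' hbc.le hf.continuousOn
  have fin2 : ∀ i : Fin 2, i = 0 ∨ i = 1 := by decide
  refine exists_orbit_of_covering f hf
    (fun n => (![Icc a b, Icc b c] : Fin 2 → Set ℝ) (w n)) (fun n => ?_) (fun n => ?_)
    (fun n => ?_)
  · rcases fin2 (w n) with h | h
    · simpa [h] using hab.le
    · simpa [h] using hbc.le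
  · rcases fin2 (w n) with h | h
    · simpa [h] using isCompact_Icc
    · simpa [h] using isCompact_Icc
  · rcases fin2 (w n) with h | h
    · simp only [h, hw n h]; exact h01
    · rcases fin2 (w (n + 1)) with h' | h'
      · simp only [h, h']; exact (Icc_subset_Icc_right hbc.le).trans h1
      · simp only [h, h']; exact (Icc_subset_Icc_left hab.le).trans h1
end

section
/- Let f be a homeomorphism of ℝ² which is isotopic to the identity (there is a continuous map H : [0,1] × ℝ² → ℝ² with H(0,·) = id, H(1,·) = f, and H(t,·) a homeomorphism for each t). If f has a periodic point, i.e. there exist x ∈ ℝ² and an integer n ≥ 1 with fⁿ(x) = x, then f has a fixed point. -/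
/-!
Identify the plane with `ℂ` and suppose that `f` has no fixed point. Then `f z - z` never vanishes,
so it has a continuous logarithm `θ` on `ℂ`. The isotopy gives a second logarithm: following
`(H t q - H t p) / (q - p)` from `t = 0` to `t = 1` yields a continuous function `R (p, q)`, for
`p ≠ q`, with `exp (R (p, q)) (q - p) = f q - f p` and `R (p, q) = R (q, p)`. Both `θ (f z)` and
`θ z + R (z, f z)` are logarithms of `f (f z) - f z`, so they differ by a constant `c` with
`exp c = 1` (`DisplacementLog`).

These data exclude two kinds of recurrence, in each case because `c`, or `0`, would have to be a
logarithm of `-1`: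

* a convex set `U` with `f U ∩ U = ∅` contains no `w` with `f (f w) ∈ U` (`no_return_two`);
* there is no simple closed curve `P : [a, T] → ℂ` with `T - a ≥ 2` along which `f (P s) = P (s + 1)`
  whenever `s + 1 ≤ T` (`no_long_loop`). Here one compares logarithms of the chords `P t - P s`,
  which exist on the convex set of all `a ≤ s < t ≤ T` other than `(a, T)`.

A periodic point `x` produces one of the two. Let `B` be the largest open ball around `x` with
`f B ∩ B = ∅`; there is a `z` with `z` and `f z` both on its boundary (`exists_critical_ball`). Let
`α` run from `z` to `x` to `f z` along two radii, and let `P` be the concatenation of `α`, `f ∘ α`,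
`f² ∘ α`, … . As `x` is periodic, `P` intersects itself; take a self-intersection `P a = P T` with
`T - a` minimal. If `T - a ≥ 2` this is a forbidden loop. Otherwise the choice of `B` leaves only the
possibility that `f²` maps a point of `α` inside `B` to another such point, which is also excluded.
-/

open Set Filter Topology unitInterval

/-! ### Continuous logarithms -/

/-- A nonvanishing homotopy starting at the constant `1` has a continuous logarithm starting at `0`,
by homotopy lifting along the covering `exp : ℂ → ℂ \ {0}`. -/
theorem exists_log_of_homotopy {X : Type*} [TopologicalSpace X] (F : I × X → ℂ)
    (hF : Continuous F) (h0 : ∀ p, F p ≠ 0) (h1 : ∀ x, F (0, x) = 1) :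
    ∃ L : I × X → ℂ, Continuous L ∧ (∀ p, Complex.exp (L p) = F p) ∧ ∀ x, L (0, x) = 0 := by
  let G : C(I × X, {z : ℂ // z ≠ 0}) := ⟨fun p => ⟨F p, h0 p⟩, by fun_prop⟩
  have hG : ∀ x, G (0, x) = ⟨Complex.exp ((ContinuousMap.const X (0 : ℂ)) x),
      Complex.exp_ne_zero _⟩ := fun x => Subtype.ext (by simp [G, h1])
  refine ⟨Complex.isCoveringMap_exp.liftHomotopy G (.const X 0) hG, ContinuousMap.continuous _,
    fun p => ?_, fun x => ?_⟩
  · have := congrFun (Complex.isCoveringMap_exp.liftHomotopy_lifts G (.const X 0) hG) p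
    exact congrArg Subtype.val this
  · exact Complex.isCoveringMap_exp.liftHomotopy_zero G (.const X 0) hG x

/-- A nonvanishing continuous function on a convex set has a continuous logarithm: contract the set
to one of its points and lift the resulting homotopy. -/
theorem exists_log_of_convex_s5 {E : Type*} [NormedAddCommGroup E] [NormedSpace ℝ E] {S : Set E}
    (hS : Convex ℝ S) {F : E → ℂ} (hF : ContinuousOn F S) (h0 : ∀ x ∈ S, F x ≠ 0) :
    ∃ L : E → ℂ, ContinuousOn L S ∧ ∀ x ∈ S, Complex.exp (L x) = F x := by
  classical
  rcases S.eq_empty_or_nonempty with rfl | ⟨p, hp⟩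
  · exact ⟨0, by simp, by simp⟩
  have hmem : ∀ q : I × S, p + (q.1 : ℝ) • ((q.2 : E) - p) ∈ S := fun q =>
    hS.add_smul_sub_mem hp q.2.2 q.1.2
  obtain ⟨L, hL, eL, -⟩ := exists_log_of_homotopy
    (fun q : I × S => F (p + (q.1 : ℝ) • ((q.2 : E) - p)) / F p)
    ((hF.comp_continuous (by fun_prop) hmem).div_const _)
    (fun q => div_ne_zero (h0 _ (hmem q)) (h0 _ hp))
    (fun x => by simp [h0 p hp])
  refine ⟨fun x => if hx : x ∈ S then L (1, ⟨x, hx⟩) + Complex.log (F p) else 0, ?_, ?_⟩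
  · rw [continuousOn_iff_continuous_domRestrict]
    have : Continuous fun x : S => L (1, x) + Complex.log (F p) := by fun_prop
    convert this using 2 with x
    simp
  · intro x hx
    simp only [hx, dif_pos, Complex.exp_add, eL, Complex.exp_log (h0 p hp)]
    simp [h0 p hp]

/-- Two continuous logarithms, on a preconnected set, of functions with constant ratio differ by a
constant. The statement is about the difference `D` of the logarithms. -/
theorem eq_of_exp_eq_const {E : Type*} [TopologicalSpace E] {S : Set E} (hS : IsPreconnected S)
    {D : E → ℂ} (hD : ContinuousOn D S) {e : ℂ} (he : ∀ x ∈ S, Complex.exp (D x) = e)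
    {x y : E} (hx : x ∈ S) (hy : y ∈ S) : D x = D y := by
  have h := Complex.isCoveringMap_exp.eqOn_of_comp_eqOn (g₁ := D) (g₂ := fun _ => D y) hS hD
    continuousOn_const (fun z hz => Subtype.ext ?_) hy rfl
  · exact h hx
  · simp [he z hz, he y hy]

/-! ### Logarithms attached to an isotopy -/

/-- Coherent logarithms of displacements and of stretching factors for a fixed-point-free map `f`
of the plane: `θ z` is a logarithm of `f z - z`, and `R (p, q)` is a logarithm of
`(f q - f p) / (q - p)` for `p ≠ q`. Only the values of `R` off the diagonal are meaningful.

Orientation enters through the existence of `R`: for complex conjugation the factor winds around `0`. -/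
structure DisplacementLog (f : ℂ → ℂ) where
  /-- The logarithm of the displacement `f z - z`. -/
  θ : ℂ → ℂ
  cont_θ : Continuous θ
  exp_θ : ∀ z, Complex.exp (θ z) = f z - z
  /-- The logarithm of `(f q - f p) / (q - p)`, as a function of `(p, q)`. -/
  R : ℂ × ℂ → ℂ
  cont_R : ContinuousOn R {p | p.1 ≠ p.2}
  exp_R : ∀ p q, p ≠ q → Complex.exp (R (p, q)) * (q - p) = f q - f p
  symm_R : ∀ p q, p ≠ q → R (p, q) = R (q, p)
  /-- The difference between the logarithms `θ (f z)` and `θ z + R (z, f z)` of `f (f z) - f z`. -/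
  c : ℂ
  exp_c : Complex.exp c = 1
  θ_map : ∀ z, θ (f z) = θ z + R (z, f z) + c

/-- A fixed-point-free map joined to the identity by an isotopy has a `DisplacementLog`: `R (p, q)`
is the total change of the logarithm of `H t q - H t p` along the isotopy. Injectivity of each
`H t` is all that is needed. -/
theorem exists_displacementLog (f : ℂ → ℂ) (hf : Continuous f) (hfix : ∀ z, f z ≠ z)
    (H : I × ℂ → ℂ) (Hcont : Continuous H) (H0 : ∀ z, H (0, z) = z) (H1 : ∀ z, H (1, z) = f z)
    (Hinj : ∀ t : I, Function.Injective fun z => H (t, z)) : Nonempty (DisplacementLog f) := by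
  classical
  obtain ⟨θ, hθ, eθ⟩ := exists_log_of_convex_s5 (convex_univ (𝕜 := ℝ) (E := ℂ))
    (F := fun z => f z - z) (by fun_prop) (fun z _ => sub_ne_zero.2 (hfix z))
  rw [continuousOn_univ] at hθ
  let C : Set (ℂ × ℂ) := {p | p.1 ≠ p.2}
  have hC : ∀ p : C, (p : ℂ × ℂ).2 - (p : ℂ × ℂ).1 ≠ 0 := fun p => sub_ne_zero.2 (Ne.symm p.2)
  obtain ⟨L, hL, eL, zL⟩ := exists_log_of_homotopy
    (fun q : I × C => (H (q.1, (q.2 : ℂ × ℂ).2) - H (q.1, (q.2 : ℂ × ℂ).1)) /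
      ((q.2 : ℂ × ℂ).2 - (q.2 : ℂ × ℂ).1))
    (Continuous.div (by fun_prop) (by fun_prop) fun q => hC q.2)
    (fun q => div_ne_zero (sub_ne_zero.2 fun h => q.2.2 (Hinj q.1 h).symm) (hC q.2))
    (fun x => by simp [H0, hC])
  -- swapping `p` and `q` does not change the ratio being lifted
  have hsymm : ∀ p q, ∀ h : p ≠ q, L (1, ⟨(p, q), h⟩) = L (1, ⟨(q, p), h.symm⟩) := by
    intro p q h
    have := eq_of_exp_eq_const (S := (univ : Set I)) isPreconnected_univ
      (D := fun t => L (t, ⟨(p, q), h⟩) - L (t, ⟨(q, p), h.symm⟩)) (e := 1)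
      (by fun_prop) (fun t _ => ?_) (mem_univ 1) (mem_univ 0)
    · simpa [zL, sub_eq_zero] using this
    · have h1 : H (t, q) - H (t, p) ≠ 0 := sub_ne_zero.2 fun h' => h (Hinj t h').symm
      have h2 : H (t, p) - H (t, q) ≠ 0 := sub_ne_zero.2 fun h' => h (Hinj t h')
      have h3 : q - p ≠ 0 := sub_ne_zero.2 h.symm
      have h4 : p - q ≠ 0 := sub_ne_zero.2 h
      simp only [Complex.exp_sub, eL]
      field_simp
      ring
  let R : ℂ × ℂ → ℂ := fun p => if h : p ∈ C then L (1, ⟨p, h⟩) else 0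
  have hR : ContinuousOn R C := by
    rw [continuousOn_iff_continuous_domRestrict]
    have : Continuous fun x : C => L (1, x) := by fun_prop
    convert this using 2 with x
    simp [R]
  have eR : ∀ p q, p ≠ q → Complex.exp (R (p, q)) * (q - p) = f q - f p := by
    intro p q h
    have h' : (p, q) ∈ C := h
    have h3 : q - p ≠ 0 := sub_ne_zero.2 h.symm
    simp only [R, h', dif_pos, eL, H1]
    field_simp
  have hD := fun z => eq_of_exp_eq_const (S := (univ : Set ℂ)) isPreconnected_univ
      (D := fun z => θ (f z) - (θ z + R (z, f z))) (e := 1) ?_ ?_ (mem_univ z) (mem_univ 0)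
  · refine ⟨⟨θ, hθ, fun z => eθ z (mem_univ z), R, hR, eR, fun p q h => ?_,
      θ (f 0) - (θ 0 + R (0, f 0)), ?_, fun z => ?_⟩⟩
    · have h' : (p, q) ∈ C := h
      have h'' : (q, p) ∈ C := h.symm
      simpa only [R, h', h'', dif_pos] using hsymm p q h
    · have := eR 0 (f 0) (hfix 0).symm
      rw [Complex.exp_sub, Complex.exp_add, eθ _ (mem_univ _), eθ _ (mem_univ _), mul_comm, this,
        div_self (sub_ne_zero.2 (hfix _))]
    · have := hD z
      linear_combination this
  · have : Continuous fun z => R (z, f z) :=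
      hR.comp_continuous (by fun_prop) fun z => (hfix z).symm
    exact ((hθ.comp hf).sub (hθ.add this)).continuousOn
  · intro z _
    have := eR z (f z) (hfix z).symm
    rw [Complex.exp_sub, Complex.exp_add, eθ _ (mem_univ _), eθ _ (mem_univ _), mul_comm, this,
        div_self (sub_ne_zero.2 (hfix _))]

namespace DisplacementLog

variable {f : ℂ → ℂ} (d : DisplacementLog f)
include d

theorem map_ne {p q : ℂ} (h : p ≠ q) : f p ≠ f q := by
  intro h'
  have := d.exp_R p q h
  rw [h', sub_self] at this
  exact mul_ne_zero (Complex.exp_ne_zero _) (sub_ne_zero.2 h.symm) this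

/-- If `U` is convex and disjoint from its image, no point of `U` returns to `U` under `f²`.

With `M` a logarithm of `f u - v` on `U × U`, the function `M (u, f (f w)) - M (w, u) - R (u, f w)`
is a constant logarithm of `-1` on `U`, since `f u - f (f w)` is the image under `f × f` of the pair
`u`, `f w`. Comparing its values at `w` and `f (f w)` shows that the constant is `c`, whereas
`exp c = 1`. -/
theorem no_return_two (hf : Continuous f) {U : Set ℂ} (hU : Convex ℝ U)
    (free : ∀ u ∈ U, f u ∉ U) {w : ℂ} (hw : w ∈ U) (hw' : f (f w) ∈ U) : False := by
  obtain ⟨M, hM, eM⟩ := exists_log_of_convex_s5 (hU.prod hU) (F := fun p => f p.1 - p.2)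
    (by fun_prop) (fun p hp => sub_ne_zero.2 fun h => free p.1 hp.1 (h ▸ hp.2))
  have hy : ∀ u ∈ U, u ≠ f w := fun u hu h => free w hw (h ▸ hu)
  -- on the diagonal of `U × U`, `M` and `θ` are logarithms of the same function
  have h1 : M (w, w) - d.θ w = M (f (f w), f (f w)) - d.θ (f (f w)) := by
    refine eq_of_exp_eq_const (D := fun u => M (u, u) - d.θ u) (e := 1) hU.isPreconnected
      ((hM.comp (by fun_prop) fun u hu => ⟨hu, hu⟩).sub d.cont_θ.continuousOn) ?_ hw hw'
    intro u hu
    have h0 : f u - u ≠ 0 := by rw [← d.exp_θ]; exact Complex.exp_ne_zero _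
    rw [Complex.exp_sub, eM (u, u) ⟨hu, hu⟩, d.exp_θ, div_self h0]
  have he : ∀ u ∈ U, Complex.exp (M (u, f (f w)) - (M (w, u) + d.R (u, f w))) = -1 := by
    intro u hu
    have h0 := d.exp_R u (f w) (hy u hu)
    have h2 := sub_ne_zero.2 (d.map_ne (hy u hu))
    rw [Complex.exp_sub, Complex.exp_add, eM (u, f (f w)) ⟨hu, hw'⟩, eM (w, u) ⟨hw, hu⟩, mul_comm,
      h0, div_eq_iff (by simpa using neg_ne_zero.2 h2)]
    ring
  have h2 : M (w, f (f w)) - (M (w, w) + d.R (w, f w)) =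
      M (f (f w), f (f w)) - (M (w, f (f w)) + d.R (f (f w), f w)) := by
    refine eq_of_exp_eq_const (D := fun u => M (u, f (f w)) - (M (w, u) + d.R (u, f w)))
      hU.isPreconnected ?_ he hw hw'
    refine (hM.comp (by fun_prop) fun u hu => ⟨hu, hw'⟩).sub
      ((hM.comp (by fun_prop) fun u hu => ⟨hw, hu⟩).add
        (d.cont_R.comp (by fun_prop) fun u hu => hy u hu))
  have h3 := d.θ_map w
  have h4 := d.θ_map (f w)
  rw [d.symm_R _ _ (hy _ hw').symm] at h4
  have h5 : M (w, f (f w)) - (M (w, w) + d.R (w, f w)) = d.c := by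
    linear_combination (1 / 2) * (h2 - h1 + h3 + h4)
  have := he w hw
  rw [h5, d.exp_c] at this
  norm_num at this

/-- There is no simple closed curve `P` on `[a, T]` of length at least `2` along which `f` acts by
`P s ↦ P (s + 1)` as long as `s + 1 ≤ T`.

With `G (s, t)` a logarithm of the chord `P t - P s`, the difference `G (t, T) - G (a, t)` is a
constant logarithm of `-1`, because `P T = P a`. Computing `θ (P T)` from `θ (P (T - 1))` adds
this constant twice to `θ (P a)`, so the constant would be `0`. -/
theorem no_long_loop {P : ℝ → ℂ} {a T : ℝ} (haT : a + 2 ≤ T)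
    (hP : ContinuousOn P (Icc a T)) (hstep : ∀ s, a ≤ s → s + 1 ≤ T → P (s + 1) = f (P s))
    (hloop : P T = P a)
    (hinj : ∀ s t, a ≤ s → s < t → t ≤ T → P s = P t → s = a ∧ t = T) : False := by
  -- a triangle without the vertex `(a, T)`, hence convex
  let S : Set (ℝ × ℝ) := {p | a ≤ p.1 ∧ p.1 < p.2 ∧ p.2 ≤ T ∧ p.2 - p.1 < T - a}
  have hS : Convex ℝ S := by
    rintro ⟨s, t⟩ ⟨h1, h2, h3, h4⟩ ⟨s', t'⟩ ⟨h1', h2', h3', h4'⟩ u v hu hv huv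
    simp only at h1 h2 h3 h4 h1' h2' h3' h4'
    simp only [S, mem_ofPred_eq, Prod.smul_mk, Prod.mk_add_mk, smul_eq_mul]
    obtain rfl : v = 1 - u := by linarith
    rcases hu.eq_or_lt with rfl | hu
    · simp; exact ⟨h1', h2', h3', h4'⟩
    refine ⟨by nlinarith, by nlinarith, by nlinarith, by nlinarith⟩
  have hne : ∀ p ∈ S, P p.2 - P p.1 ≠ 0 := by
    rintro ⟨s, t⟩ ⟨h1, h2, h3, h4⟩ h
    simp only at h1 h2 h3 h4
    obtain ⟨rfl, rfl⟩ := hinj s t h1 h2 h3 (sub_eq_zero.1 h).symm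
    exact lt_irrefl _ h4
  have hP1 : ContinuousOn (fun p : ℝ × ℝ => P p.1) S :=
    hP.comp (by fun_prop) fun p hp => ⟨hp.1, hp.2.1.le.trans hp.2.2.1⟩
  have hP2 : ContinuousOn (fun p : ℝ × ℝ => P p.2) S :=
    hP.comp (by fun_prop) fun p hp => ⟨hp.1.trans hp.2.1.le, hp.2.2.1⟩
  obtain ⟨G, hG, eG⟩ := exists_log_of_convex_s5 hS (F := fun p => P p.2 - P p.1)
    (hP2.sub hP1) hne
  have hR : ContinuousOn (fun p : ℝ × ℝ => d.R (P p.1, P p.2)) S :=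
    d.cont_R.comp (hP1.prodMk hP2) fun p hp h => hne p hp (sub_eq_zero.2 h.symm)
  -- the displacement at `P s` is the chord from `P s` to `P (s + 1)`
  have hA : ∀ s ∈ Icc a (T - 1), ∀ s' ∈ Icc a (T - 1),
      d.θ (P s) - G (s, s + 1) = d.θ (P s') - G (s', s' + 1) := by
    intro s hs s' hs'
    have hm : ∀ u ∈ Icc a (T - 1), (u, u + 1) ∈ S := fun u hu =>
      ⟨hu.1, by simp, by simp only; linarith [hu.2], by simp only; linarith⟩
    refine eq_of_exp_eq_const (D := fun s => d.θ (P s) - G (s, s + 1)) (e := 1)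
      isPreconnected_Icc ?_ ?_ hs hs'
    · exact (d.cont_θ.comp_continuousOn (hP.mono (Icc_subset_Icc_right (by linarith)))).sub
        (hG.comp (by fun_prop) hm)
    · intro u hu
      rw [Complex.exp_sub, eG _ (hm u hu), d.exp_θ]
      simp only
      rw [hstep u hu.1 (by linarith [hu.2]), div_self]
      rw [← d.exp_θ]
      exact Complex.exp_ne_zero _
  -- shifting both ends of a chord by one
  let S' : Set (ℝ × ℝ) := {p | a ≤ p.1 ∧ p.1 < p.2 ∧ p.2 ≤ T - 1}
  have hS' : Convex ℝ S' := by
    rintro ⟨s, t⟩ ⟨h1, h2, h3⟩ ⟨s', t'⟩ ⟨h1', h2', h3'⟩ u v hu hv huv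
    simp only at h1 h2 h3 h1' h2' h3'
    simp only [S', mem_ofPred_eq, Prod.smul_mk, Prod.mk_add_mk, smul_eq_mul]
    obtain rfl : v = 1 - u := by linarith
    rcases hu.eq_or_lt with rfl | hu
    · simp; exact ⟨h1', h2', h3'⟩
    refine ⟨by nlinarith, by nlinarith, by nlinarith⟩
  have hSS : S' ⊆ S := fun p hp => ⟨hp.1, hp.2.1, by linarith [hp.2.2], by linarith [hp.2.2, hp.1]⟩
  have hSS' : ∀ p ∈ S', (p.1 + 1, p.2 + 1) ∈ S := fun p hp =>
    ⟨by simp only; linarith [hp.1], by simp only; linarith [hp.2.1],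
      by simp only; linarith [hp.2.2], by simp only; linarith [hp.2.2, hp.1]⟩
  have hB : ∀ p ∈ S', ∀ q ∈ S',
      G (p.1 + 1, p.2 + 1) - (G p + d.R (P p.1, P p.2)) =
        G (q.1 + 1, q.2 + 1) - (G q + d.R (P q.1, P q.2)) := by
    intro p hp q hq
    refine eq_of_exp_eq_const
      (D := fun p : ℝ × ℝ => G (p.1 + 1, p.2 + 1) - (G p + d.R (P p.1, P p.2))) (e := 1)
      hS'.isPreconnected ?_ ?_ hp hq
    · exact (hG.comp (by fun_prop) hSS').sub ((hG.mono hSS).add (hR.mono hSS))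
    · intro u hu
      have h0 := d.exp_R (P u.1) (P u.2) fun h => hne u (hSS hu) (sub_eq_zero.2 h.symm)
      have h1 := hne _ (hSS' u hu)
      rw [Complex.exp_sub, Complex.exp_add, eG _ (hSS hu), eG _ (hSS' u hu), mul_comm, h0,
        ← hstep u.1 hu.1 (by linarith [hu.2.1, hu.2.2]),
        ← hstep u.2 (by linarith [hu.2.1, hu.1]) (by linarith [hu.2.2])]
      exact div_self h1
  -- closing up the loop reverses chords
  have hm1 : ∀ t ∈ Ioo a T, (t, T) ∈ S := fun t ht =>
    ⟨ht.1.le, ht.2, le_refl T, by simp only; linarith [ht.1]⟩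
  have hm2 : ∀ t ∈ Ioo a T, (a, t) ∈ S := fun t ht =>
    ⟨le_refl a, ht.1, ht.2.le, by simp only; linarith [ht.2]⟩
  have he : ∀ t ∈ Ioo a T, Complex.exp (G (t, T) - G (a, t)) = -1 := by
    intro t ht
    have h1 := hne _ (hm2 t ht)
    rw [Complex.exp_sub, eG _ (hm1 t ht), eG _ (hm2 t ht), div_eq_iff h1]
    simp only [hloop]
    ring
  have hC : G (a + 1, T) - G (a, a + 1) = G (T - 1, T) - G (a, T - 1) :=
    eq_of_exp_eq_const (D := fun t => G (t, T) - G (a, t)) isPreconnected_Ioo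
      ((hG.comp (by fun_prop) hm1).sub (hG.comp (by fun_prop) hm2)) he
      ⟨by linarith, by linarith⟩ ⟨by linarith, by linarith⟩
  have a1 := hA a ⟨by linarith, by linarith⟩ (a + 1) ⟨by linarith, by linarith⟩
  have a2 := hA a ⟨by linarith, by linarith⟩ (T - 1) ⟨by linarith, by linarith⟩
  have b := hB (a, a + 1) ⟨le_refl a, by simp, by simp only; linarith⟩
    (a, T - 1) ⟨le_refl a, by simp only; linarith, le_refl _⟩
  have t1 := d.θ_map (P a)
  rw [← hstep a le_rfl (by linarith)] at t1
  have t2 := d.θ_map (P (T - 1))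
  rw [← hstep (T - 1) (by linarith) (by linarith), sub_add_cancel, hloop] at t2
  have hs := d.symm_R (P (T - 1)) (P a) fun h =>
    hne _ (hm2 (T - 1) ⟨by linarith, by linarith⟩) (sub_eq_zero.2 h)
  rw [hs] at t2
  simp only [sub_add_cancel] at a1 a2 b t1 t2 hC
  have h0 : G (a + 1, T) - G (a, a + 1) = 0 := by
    linear_combination (1 / 2) * (a1 + a2 - b + t1 - t2 + hC)
  have := he (a + 1) ⟨by linarith, by linarith⟩
  rw [h0, Complex.exp_zero] at this
  norm_num at this

end DisplacementLog

/-! ### A critical ball and its translation arc -/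

/-- Around every point `x` there is a ball disjoint from its image, with a point `z` on its boundary
mapped to its boundary. The point `z` minimises `max (dist z x) (dist (f z) x)`, and the radius is
the minimum. -/
theorem exists_critical_ball (f : ℂ ≃ₜ ℂ) (hfix : ∀ z, f z ≠ z) (x : ℂ) :
    ∃ z : ℂ, ∃ r > 0, dist z x = r ∧ dist (f z) x = r ∧
      (∀ u ∈ Metric.ball x r, f u ∉ Metric.closedBall x r) ∧
      ∀ u ∈ Metric.closedBall x r, f u ∉ Metric.ball x r := by
  obtain ⟨z, hz⟩ := Continuous.exists_forall_le (f := fun y => max (dist y x) (dist (f y) x))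
    (by fun_prop)
    (tendsto_atTop_mono (fun y => le_max_left _ _) (tendsto_dist_right_cocompact_atTop x))
  set r := max (dist z x) (dist (f z) x) with hr
  have hr0 : 0 < r := by
    by_contra! h
    have h1 : z = x := dist_le_zero.1 ((le_max_left _ _).trans h)
    have h2 : f z = x := dist_le_zero.1 ((le_max_right _ _).trans h)
    exact hfix z (h2.trans h1.symm)
  have free : ∀ u ∈ Metric.ball x r, f u ∉ Metric.ball x r := fun u hu hfu =>
    (hz u).not_gt (max_lt hu hfu)
  have free1 : ∀ u ∈ Metric.ball x r, f u ∉ Metric.closedBall x r := by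
    intro u hu hfu
    rw [← closure_ball x hr0.ne'] at hfu
    obtain ⟨_, ⟨v, hv, rfl⟩, hv'⟩ := mem_closure_iff.1 hfu _
      (f.isOpenMap _ Metric.isOpen_ball) (mem_image_of_mem f hu)
    exact free v hv hv'
  have free2 : ∀ u ∈ Metric.closedBall x r, f u ∉ Metric.ball x r := by
    intro u hu hfu
    rw [← closure_ball x hr0.ne'] at hu
    obtain ⟨v, hv, hv'⟩ := mem_closure_iff.1 hu _ (Metric.isOpen_ball.preimage f.continuous) hfu
    exact free v hv' hv
  have hz1 : z ∈ Metric.closedBall x r := le_max_left (dist z x) _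
  have hz2 : f z ∈ Metric.closedBall x r := le_max_right _ (dist (f z) x)
  refine ⟨z, r, hr0, ?_, ?_, free1, free2⟩
  · exact le_antisymm hz1 (not_lt.1 fun h => free1 z h hz2)
  · exact le_antisymm hz2 (not_lt.1 fun h => free2 z hz1 h)

/-- Two distinct points on the boundary of a ball are joined by the arc made of two radii. -/
theorem exists_two_radii {x z y : ℂ} {r : ℝ} (hr : 0 < r) (hz : dist z x = r) (hy : dist y x = r)
    (hzy : y ≠ z) :
    ∃ α : ℝ → ℂ, Continuous α ∧ α 0 = z ∧ α (1 / 2) = x ∧ α 1 = y ∧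
      (∀ s ∈ Ioo (0 : ℝ) 1, α s ∈ Metric.ball x r) ∧ InjOn α (Icc 0 1) := by
  let α : ℝ → ℂ := fun s => x + (max (1 - 2 * s) 0 : ℝ) • (z - x) + (max (2 * s - 1) 0 : ℝ) • (y - x)
  have h1 : ∀ s ≤ 1 / 2, α s = x + (1 - 2 * s) • (z - x) := fun s hs => by
    simp only [α]
    rw [max_eq_left (by linarith), max_eq_right (by linarith), zero_smul, add_zero]
  have h2 : ∀ s, 1 / 2 ≤ s → α s = x + (2 * s - 1) • (y - x) := fun s hs => by
    simp only [α]
    rw [max_eq_right (by linarith), max_eq_left (by linarith), zero_smul, add_zero]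
  have hd : ∀ s, dist (α s) x = |2 * s - 1| * r := by
    intro s
    rcases le_total s (1 / 2) with h | h
    · rw [h1 s h, dist_eq_norm, add_sub_cancel_left, norm_smul, ← dist_eq_norm z, hz, Real.norm_eq_abs,
        abs_sub_comm]
    · rw [h2 s h, dist_eq_norm, add_sub_cancel_left, norm_smul, ← dist_eq_norm y, hy, Real.norm_eq_abs]
  refine ⟨α, by fun_prop, ?_, ?_, ?_, ?_, ?_⟩
  · rw [h1 0 (by norm_num)]; simp
  · rw [h1 _ le_rfl]; simp
  · rw [h2 1 (by norm_num)]; norm_num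
  · intro s hs
    rw [Metric.mem_ball, hd]
    have : |2 * s - 1| < 1 := abs_lt.2 ⟨by linarith [hs.1], by linarith [hs.2]⟩
    nlinarith
  · have key : ∀ s t, s < t → α s ≠ α t := by
      intro s t hst h
      have h3 : |2 * s - 1| = |2 * t - 1| :=
        mul_right_cancel₀ hr.ne' (by rw [← hd, ← hd, h])
      rcases abs_eq_abs.1 h3 with h4 | h4
      · linarith
      rw [h1 s (by linarith), h2 t (by linarith)] at h
      have h5 : 2 * t - 1 = 1 - 2 * s := by linarith
      rw [h5] at h
      have h6 := smul_right_injective ℂ (show 1 - 2 * s ≠ 0 by linarith) (add_left_cancel h)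
      exact hzy (sub_left_injective h6).symm
    intro s _ t _ h
    rcases lt_trichotomy s t with h' | h' | h'
    · exact (key s t h' h).elim
    · exact h'
    · exact (key t s h' h.symm).elim

/-! ### Iterating the arc -/

/-- The concatenation of `α`, `f ∘ α`, `f² ∘ α`, …, each on a unit interval: the curve on `[0, ∞)`
which is `α` on `[0, 1)` and satisfies `P (s + 1) = f (P s)`. It is continuous when
`α 1 = f (α 0)`; the values at negative `s` play no role. -/
noncomputable def orbitCurve (f : ℂ → ℂ) (α : ℝ → ℂ) (s : ℝ) : ℂ :=
  f^[⌊s⌋₊] (α (s - ⌊s⌋₊))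

section orbitCurve

variable {f : ℂ → ℂ} {α : ℝ → ℂ}

theorem orbitCurve_add_nat (m : ℕ) {s : ℝ} (hs : 0 ≤ s) :
    orbitCurve f α (s + m) = f^[m] (orbitCurve f α s) := by
  simp only [orbitCurve]
  rw [Nat.floor_add_natCast hs, add_comm ⌊s⌋₊ m, Function.iterate_add_apply]
  push_cast
  congr 3
  ring

theorem orbitCurve_add_one {s : ℝ} (hs : 0 ≤ s) :
    orbitCurve f α (s + 1) = f (orbitCurve f α s) := by
  simpa using orbitCurve_add_nat (f := f) (α := α) 1 hs

theorem orbitCurve_of_mem (h01 : α 1 = f (α 0)) {s : ℝ} (hs : s ∈ Icc (0 : ℝ) 1) :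
    orbitCurve f α s = α s := by
  rcases hs.2.eq_or_lt with rfl | h
  · simp [orbitCurve, h01]
  · simp [orbitCurve, Nat.floor_eq_zero.2 h]

theorem continuousOn_orbitCurve (hf : Continuous f) (hα : Continuous α) (h01 : α 1 = f (α 0))
    (m : ℕ) : ContinuousOn (orbitCurve f α) (Icc 0 m) := by
  have h1 : ContinuousOn (orbitCurve f α) (Icc 0 1) :=
    hα.continuousOn.congr fun s hs => orbitCurve_of_mem h01 hs
  induction m with
  | zero => exact h1.mono (Icc_subset_Icc_right (by simp))
  | succ m ih =>
    have h2 : ContinuousOn (orbitCurve f α) (Icc 1 (m + 1 : ℝ)) := by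
      refine (hf.comp_continuousOn (ih.comp (f := fun s : ℝ => s - 1) (by fun_prop)
        fun s hs => ⟨by linarith [hs.1], by linarith [hs.2]⟩)).congr fun s hs => ?_
      simpa using orbitCurve_add_one (f := f) (α := α) (s := s - 1) (by linarith [hs.1])
    push_cast
    rw [← Icc_union_Icc_eq_Icc (zero_le_one' ℝ) (show (1 : ℝ) ≤ m + 1 by simp)]
    exact h1.union_of_isClosed h2 isClosed_Icc isClosed_Icc

end orbitCurve

/-- A homeomorphism of the plane with a `DisplacementLog` has no periodic point. -/
theorem not_periodic_of_displacementLog (f : ℂ ≃ₜ ℂ) (d : DisplacementLog f) (x : ℂ) (n : ℕ)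
    (hn : 1 ≤ n) (hx : f^[n] x = x) : False := by
  have hfix : ∀ z, f z ≠ z := fun z => by
    rw [← sub_ne_zero, ← d.exp_θ]
    exact Complex.exp_ne_zero _
  obtain ⟨z, r, hr, hz, hfz, free1, free2⟩ := exists_critical_ball f hfix x
  obtain ⟨α, hα, α0, αh, α1, hball, αinj⟩ := exists_two_radii hr hz hfz (hfix z)
  have h01 : α 1 = f (α 0) := by rw [α0, α1]
  have hcl : ∀ s ∈ Icc (0 : ℝ) 1, α s ∈ Metric.closedBall x r := by
    intro s hs
    rcases hs.1.eq_or_lt with rfl | h0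
    · rw [α0]; exact hz.le
    rcases hs.2.eq_or_lt with rfl | h1
    · rw [α1]; exact hfz.le
    exact Metric.ball_subset_closedBall (hball s ⟨h0, h1⟩)
  set P := orbitCurve f α with hPdef
  have hcont := continuousOn_orbitCurve f.continuous hα h01
  have hP : ∀ s ∈ Icc (0 : ℝ) 1, P s = α s := fun s hs => orbitCurve_of_mem h01 hs
  have hstep : ∀ s, 0 ≤ s → P (s + 1) = f (P s) := fun s hs => orbitCurve_add_one hs
  have hP2 : ∀ s ∈ Icc (1 : ℝ) 2, P s = f (α (s - 1)) := fun s hs => by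
    rw [← hP _ ⟨by linarith [hs.1], by linarith [hs.2]⟩, ← hstep _ (by linarith [hs.1]),
      sub_add_cancel]
  -- self-intersections can be translated so that their first parameter lies in `[0, 1)`
  have hshift : ∀ s t : ℝ, 0 ≤ s → s < t → P s = P t →
      P (s - ⌊s⌋₊) = P (t - ⌊s⌋₊) := by
    intro s t hs hst h
    have h1 := Nat.floor_le hs
    apply f.injective.iterate ⌊s⌋₊
    rw [← orbitCurve_add_nat _ (by linarith), ← orbitCurve_add_nat _ (by linarith)]
    simpa using h
  have hgap : ∀ s t, 0 ≤ s → s < t → t ≤ s + 1 → P s ≠ P t := by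
    intro s t hs hst hts h
    have h' := hshift s t hs hst h
    have f1 := Nat.floor_le hs
    have f2 := Nat.lt_floor_add_one s
    rw [hP _ ⟨by linarith, by linarith⟩] at h'
    rcases le_or_gt (t - ⌊s⌋₊) 1 with ht | ht
    · rw [hP _ ⟨by linarith, by linarith⟩] at h'
      have := αinj ⟨by linarith, by linarith⟩ ⟨by linarith, by linarith⟩ h'
      linarith
    · rw [hP2 _ ⟨by linarith, by linarith⟩] at h'
      exact free1 _ (hball _ ⟨by linarith, by linarith⟩) (h' ▸ hcl _ ⟨by linarith, by linarith⟩)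
  -- self-intersections of `P`, among which a shortest one is chosen; imposing `p.1 + 1 ≤ p.2` loses
  -- nothing by `hgap` and makes the set closed
  let Q : Set (ℝ × ℝ) := (Icc (0 : ℝ) 1 ×ˢ Icc (0 : ℝ) (n + 1)) ∩ {p | p.1 + 1 ≤ p.2}
  have hQ : IsCompact Q := (isCompact_Icc.prod isCompact_Icc).inter_right
    (isClosed_le (by fun_prop) (by fun_prop))
  have hcP : ContinuousOn (fun p : ℝ × ℝ => P p.1 - P p.2) Q :=
    ((hcont 1).comp (by fun_prop) fun p hp => by simpa using hp.1.1).sub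
      ((hcont (n + 1)).comp (by fun_prop) fun p hp => by simpa using hp.1.2)
  have hK : IsCompact (Q ∩ (fun p : ℝ × ℝ => P p.1 - P p.2) ⁻¹' {0}) :=
    hQ.of_isClosed_subset (hcP.preimage_isClosed_of_isClosed hQ.isClosed isClosed_singleton)
      inter_subset_left
  have hn' : (1 : ℝ) ≤ n := by exact_mod_cast hn
  have hmem : ((1 / 2 : ℝ), (1 / 2 + n : ℝ)) ∈
      Q ∩ (fun p : ℝ × ℝ => P p.1 - P p.2) ⁻¹' {0} := by
    refine ⟨⟨⟨⟨by norm_num, by norm_num⟩, ⟨by simp only; linarith, by simp only; linarith⟩⟩,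
      by simp only [mem_ofPred_eq]; linarith⟩, ?_⟩
    have h1 : P (1 / 2 + n) = f^[n] (P (1 / 2)) := orbitCurve_add_nat n (by norm_num)
    have h2 : P (1 / 2) = x := by rw [hP _ ⟨by norm_num, by norm_num⟩, αh]
    simp only [mem_preimage, mem_singleton_iff]
    rw [h1, h2, hx, sub_self]
  obtain ⟨⟨a, T⟩, ⟨⟨⟨ha, hT⟩, haT⟩, hloop⟩, hmin⟩ :=
    hK.exists_isMinOn ⟨_, hmem⟩ (f := fun p : ℝ × ℝ => p.2 - p.1) (by fun_prop)
  simp only [mem_ofPred_eq, mem_preimage, mem_singleton_iff, sub_eq_zero] at ha hT haT hloop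
  have hmn := hmin hmem
  simp only [mem_ofPred_eq] at hmn
  have hshort : ∀ s t, 0 ≤ s → s < t → P s = P t → T - a ≤ t - s := by
    intro s t hs hst h
    by_contra! hlt
    have f1 := Nat.floor_le hs
    have f2 := Nat.lt_floor_add_one s
    have h3 : s + 1 < t := not_le.1 fun h' => hgap s t hs hst h' h
    have := @hmin (s - ⌊s⌋₊, t - ⌊s⌋₊) ⟨⟨⟨⟨by simp only; linarith, by simp only; linarith⟩,
      ⟨by simp only; linarith, by simp only; linarith⟩⟩,
      by simp only [mem_ofPred_eq]; linarith⟩, sub_eq_zero.2 (hshift s t hs hst h)⟩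
    simp only [mem_ofPred_eq] at this
    linarith
  rcases le_or_gt 2 (T - a) with h2 | h2
  · refine d.no_long_loop (P := P) (a := a) (T := T) (by linarith) ?_
      (fun s hs _ => hstep s (ha.1.trans hs)) hloop.symm ?_
    · exact (hcont (n + 1)).mono (Icc_subset_Icc ha.1 (by simpa using hT.2))
    · intro s t hs hst ht h
      have := hshort s t (ha.1.trans hs) hst h
      exact ⟨by linarith, by linarith⟩
  · have haT' : a + 1 < T := lt_of_not_ge fun h => hgap a T ha.1 (by linarith) h hloop
    rcases ha.2.eq_or_lt with rfl | ha1
    · -- shift the loop back by one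
      have h3 : P 0 = P (T - 1) := f.injective (by
        rw [← hstep 0 le_rfl, ← hstep (T - 1) (by linarith), zero_add, sub_add_cancel, hloop])
      rw [hP 0 ⟨le_rfl, zero_le_one⟩, hP2 (T - 1) ⟨by linarith, by linarith⟩] at h3
      exact free1 _ (hball _ ⟨by linarith, by linarith⟩) (h3 ▸ hcl 0 ⟨le_rfl, zero_le_one⟩)
    rw [hP a ha] at hloop
    rcases le_or_gt T 2 with hT2 | hT2
    · rw [hP2 T ⟨by linarith [ha.1], hT2⟩] at hloop
      rcases ha.1.eq_or_lt with rfl | ha0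
      · exact free1 _ (hball (T - 1) ⟨by linarith, by linarith⟩) (hloop ▸ hcl 0 ha)
      · exact free2 _ (hcl (T - 1) ⟨by linarith, by linarith⟩) (hloop ▸ hball a ⟨ha0, ha1⟩)
    · -- here `0 < T - 2 < a < 1`, and `f²` maps `α (T - 2)` to `α a`, both inside the ball
      have h4 : P T = f (f (α (T - 2))) := by
        rw [← hP _ ⟨by linarith, by linarith⟩, ← hstep _ (by linarith), ← hstep _ (by linarith)]
        congr 1
        ring
      rw [h4] at hloop
      exact d.no_return_two f.continuous (convex_ball x r)
        (fun u hu h => free1 u hu (Metric.ball_subset_closedBall h))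
        (hball (T - 2) ⟨by linarith, by linarith⟩) (hloop ▸ hball a ⟨by linarith, ha1⟩)

/-! ### Back to the real plane -/

/-- A homeomorphism of the plane isotopic to the identity which has a periodic
point also has a fixed point. -/
theorem periodic_point_implies_fixed_point
    (f : (ℝ × ℝ) ≃ₜ (ℝ × ℝ))
    (H : Set.Icc (0 : ℝ) 1 × (ℝ × ℝ) → ℝ × ℝ)
    (Hcont : Continuous H)
    (H0 : ∀ z, H (⟨0, by norm_num⟩, z) = z)
    (H1 : ∀ z, H (⟨1, by norm_num⟩, z) = f z)
    (Hhomeo : ∀ t : Set.Icc (0 : ℝ) 1,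
      ∃ e : (ℝ × ℝ) ≃ₜ (ℝ × ℝ), ∀ z, e z = H (t, z))
    (x : ℝ × ℝ) (n : ℕ) (hn : 1 ≤ n) (hx : f^[n] x = x) :
    ∃ z : ℝ × ℝ, f z = z := by
  by_contra! hfix
  let φ : ℂ ≃ₜ ℝ × ℝ := Complex.equivRealProdCLM.toHomeomorph
  let g : ℂ ≃ₜ ℂ := (φ.trans f).trans φ.symm
  have hg : ∀ z, g z = φ.symm (f (φ z)) := fun z => rfl
  have hgfix : ∀ z, g z ≠ z := fun z h => hfix (φ z) (by rw [← φ.apply_symm_apply (f (φ z)), ← hg, h])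
  obtain ⟨d⟩ := exists_displacementLog g g.continuous hgfix
    (fun p => φ.symm (H (p.1, φ p.2))) (by fun_prop)
    (fun z => by
      rw [show H ((0 : I), φ z) = φ z from H0 _, φ.symm_apply_apply])
    (fun z => by
      rw [show H ((1 : I), φ z) = f (φ z) from H1 _, hg])
    (fun t z w h => by
      obtain ⟨e, he⟩ := Hhomeo t
      have h' := φ.symm.injective h
      simp only [← he] at h'
      exact φ.injective (e.injective h'))
  have hsemi : Function.Semiconj φ.symm f g := fun y => by rw [hg, φ.apply_symm_apply]
  exact not_periodic_of_displacementLog g d (φ.symm x) n hn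
    (by rw [← hsemi.iterate_right n x, hx])
end

section
/- Let X be a compact metric space and f : X → X a homeomorphism which possesses a topological horseshoe. Then the topological entropy of f is strictly positive. -/
/-!
The argument is Bowen's estimate for the entropy of a finite-to-one extension, written for open
covers, so that `Z` need not be metrizable or even Hausdorff.

Write `word n z` for the first `n` symbols of `h₂ z`. As `h₂` is onto, `Z` realises all `q ^ n`
words of length `n`. The fiber of `h₁` over a point `y` is finite, so it realises a bounded number
of words of every length; choose `m` so large that the number of words of length `m` seen in the
fiber is at most `q ^ (m / 2)`. Since `h₁` is a closed map and words of length `m` are locally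
constant, the same words are the only ones seen over a whole neighbourhood of `y`
(`exists_nhds_word`). Compactness of `X` makes this uniform: there are an entourage `U` and a bound
`M` for the lengths `m` (`exists_uniform_word`). Concatenating these blocks along an orbit, the
points of `Z` lying over a single Bowen ball of length `n` realise at most `q ^ ((n + M) / 2)` words
of length `n` (`ncard_word_sq_le`). Hence any cover of `X` by Bowen balls of length `n` for `f^r`
contains at least `q ^ ((n - M) / 2)` of them (`pow_le_card_of_isDynCoverOf`), which is exponential
growth.

Inequalities involving square roots are stated for squares, to stay in `ℕ`.
-/

open Set

/-- A topological horseshoe for a homeomorphism `f` of a Hausdorff space `X`: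
a compact set `Y` invariant under some iterate `f^r`, admitting a compact
extension `Z` which also extends, with finite fibers over `Y` and
periodic-orbit lifting, the full shift on `q ≥ 2` symbols. -/
def IsTopologicalHorseshoe {X : Type*} [TopologicalSpace X] (f : X ≃ₜ X)
    (Y : Set X) : Prop :=
  IsCompact Y ∧
  ∃ r : ℕ, 1 ≤ r ∧ (f : X → X)^[r] '' Y = Y ∧
    ∃ (Z : Type) (_ : TopologicalSpace Z) (_ : CompactSpace Z)
      (g : Z → Z) (q : ℕ) (h₁ : Z → X) (h₂ : Z → (ℤ → Fin q)),
      2 ≤ q ∧ Continuous g ∧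
      Continuous h₁ ∧ Set.range h₁ = Y ∧
      Continuous h₂ ∧ Function.Surjective h₂ ∧
      (∀ z, h₁ (g z) = (f : X → X)^[r] (h₁ z)) ∧
      (∀ z k, h₂ (g z) k = h₂ z (k + 1)) ∧
      (∀ y : X, (h₁ ⁻¹' {y}).Finite) ∧
      (∀ p : ℕ, 1 ≤ p → ∀ w : ℤ → Fin q, (∀ k, w (k + (p : ℤ)) = w k) →
        ∃ z, h₂ z = w ∧ g^[p] z = z)

open Filter Topology Uniformity UniformSpace Dynamics

namespace Horseshoe

variable {X Z : Type} {q : ℕ}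

/-- The word formed by the symbols in positions `0, …, n - 1` of the sequence `h₂ z`. -/
def word (h₂ : Z → ℤ → Fin q) (n : ℕ) (z : Z) : Fin n → Fin q := fun i => h₂ z (i : ℕ)

lemma iterate_shift {g : Z → Z} {h₂ : Z → ℤ → Fin q} (hg : ∀ z k, h₂ (g z) k = h₂ z (k + 1))
    (m : ℕ) (z : Z) (k : ℤ) : h₂ (g^[m] z) k = h₂ z (k + m) := by
  induction m generalizing k with
  | zero => simp
  | succ m ih =>
    rw [Function.iterate_succ_apply', hg, ih]
    congr 1
    push_cast
    ring

lemma iterate_semiconj {g : Z → Z} {h₁ : Z → X} {F : X → X} (hg : ∀ z, h₁ (g z) = F (h₁ z))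
    (m : ℕ) (z : Z) : h₁ (g^[m] z) = F^[m] (h₁ z) :=
  Function.Semiconj.iterate_right (f := h₁) (ga := g) (gb := F) hg m z

lemma ncard_word_mono (h₂ : Z → ℤ → Fin q) {m n : ℕ} (hmn : m ≤ n) (A : Set Z) :
    (word h₂ m '' A).ncard ≤ (word h₂ n '' A).ncard := by
  have : word h₂ m '' A = (fun w i => w (Fin.castLE hmn i)) '' (word h₂ n '' A) := by
    rw [image_image]
    rfl
  rw [this]
  exact ncard_image_le (toFinite _)

/-- Submultiplicativity: a word of length `m + k` is a word of length `m` followed by a word of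
length `k` of the image under `g^m`. -/
lemma ncard_word_add_le {g : Z → Z} {h₂ : Z → ℤ → Fin q}
    (hg : ∀ z k, h₂ (g z) k = h₂ z (k + 1)) (m k : ℕ) (A : Set Z) :
    (word h₂ (m + k) '' A).ncard ≤
      (word h₂ m '' A).ncard * (word h₂ k '' (g^[m] '' A)).ncard := by
  rw [← ncard_prod]
  refine ncard_le_ncard_of_injOn
    (fun w => (fun i => w (Fin.castAdd k i), fun i => w (Fin.natAdd m i))) ?_ ?_ (toFinite _)
  · rintro _ ⟨z, hz, rfl⟩
    refine ⟨⟨z, hz, rfl⟩, ⟨g^[m] z, ⟨z, hz, rfl⟩, ?_⟩⟩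
    funext i
    simp only [word, iterate_shift hg, Fin.val_natAdd]
    congr 1
    push_cast
    ring
  · intro w _ w' _ h
    obtain ⟨h, h'⟩ := Prod.mk.inj h
    funext i
    refine Fin.addCases (fun j => ?_) (fun j => ?_) i
    · exact congrFun h j
    · exact congrFun h' j

/-- Over a neighbourhood of `y`, points of `Z` realise at most `q ^ (m / 2)` words of a suitable
length `m`. -/
lemma exists_nhds_word [TopologicalSpace X] [T2Space X] [TopologicalSpace Z] [CompactSpace Z]
    {h₁ : Z → X} {h₂ : Z → ℤ → Fin q} (hq : 2 ≤ q) (c₁ : Continuous h₁) (c₂ : Continuous h₂)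
    (y : X) (hfin : (h₁ ⁻¹' {y}).Finite) :
    ∃ V ∈ 𝓝 y, ∃ m : ℕ, 1 ≤ m ∧ (word h₂ m '' (h₁ ⁻¹' V)).ncard ^ 2 ≤ q ^ m := by
  set F := h₁ ⁻¹' {y} with hF
  set m := F.ncard ^ 2 + 1 with hm
  have cw : Continuous (word h₂ m) :=
    continuous_pi fun i => (continuous_apply _).comp c₂
  have hopen : IsOpen (word h₂ m ⁻¹' (word h₂ m '' F)) := (isOpen_discrete _).preimage cw
  refine ⟨(h₁ '' (word h₂ m ⁻¹' (word h₂ m '' F))ᶜ)ᶜ, ?_, m, by omega, ?_⟩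
  · -- `h₁` is closed: a closed subset of `Z` is compact, hence so is its image.
    refine (hopen.isClosed_compl.isCompact.image c₁).isClosed.isOpen_compl.mem_nhds ?_
    rintro ⟨z, hz, hzy⟩
    exact hz ⟨z, hzy, rfl⟩
  · have hsub : word h₂ m '' (h₁ ⁻¹' (h₁ '' (word h₂ m ⁻¹' (word h₂ m '' F))ᶜ)ᶜ) ⊆
        word h₂ m '' F := by
      rintro _ ⟨z, hz, rfl⟩
      by_contra hcon
      exact hz ⟨z, hcon, rfl⟩
    have h1 := (ncard_le_ncard hsub (toFinite _)).trans (ncard_image_le hfin)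
    calc _ ≤ F.ncard ^ 2 := Nat.pow_le_pow_left h1 2
      _ ≤ m := by omega
      _ ≤ q ^ m := (Nat.lt_pow_self (by omega)).le

/-- The estimate of `exists_nhds_word` holds on every `U`-ball, for some entourage `U`, with word
lengths bounded by a constant `M`. -/
lemma exists_uniform_word [UniformSpace X] [T2Space X] [CompactSpace X] [TopologicalSpace Z]
    [CompactSpace Z] {h₁ : Z → X} {h₂ : Z → ℤ → Fin q} (hq : 2 ≤ q) (c₁ : Continuous h₁)
    (c₂ : Continuous h₂) (hfin : ∀ y, (h₁ ⁻¹' {y}).Finite) :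
    ∃ U ∈ 𝓤 X, ∃ M : ℕ, ∀ x : X, ∃ m : ℕ, 1 ≤ m ∧ m ≤ M ∧
      (word h₂ m '' (h₁ ⁻¹' ball x U)).ncard ^ 2 ≤ q ^ m := by
  choose V hV m hm hcard using fun y => exists_nhds_word hq c₁ c₂ y (hfin y)
  obtain ⟨t, ht⟩ := CompactSpace.elim_nhds_subcover (fun y => interior (V y))
    fun y => interior_mem_nhds.2 (hV y)
  obtain ⟨U, hU, h⟩ := lebesgue_number_lemma (U := fun y : t => interior (V y)) isCompact_univ
    (fun _ => isOpen_interior) (by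
      intro x _
      have hx : x ∈ ⋃ y ∈ t, interior (V y) := ht ▸ mem_univ x
      simpa using hx)
  refine ⟨U, hU, t.sup m, fun x => ?_⟩
  obtain ⟨y, hy⟩ := h x (mem_univ x)
  refine ⟨m y, hm y, Finset.le_sup y.2, le_trans ?_ (hcard y)⟩
  refine Nat.pow_le_pow_left (ncard_le_ncard (image_mono (preimage_mono ?_)) (toFinite _)) 2
  exact hy.trans interior_subset

/-- If the `h₁`-orbits of all points of `A` follow a common sequence of `U`-balls up to time `n`,
then `A` realises at most `q ^ ((n + M) / 2)` words of length `n`. -/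
lemma ncard_word_sq_le {g : Z → Z} {h₁ : Z → X} {h₂ : Z → ℤ → Fin q} (hq : 2 ≤ q)
    (hg : ∀ z k, h₂ (g z) k = h₂ z (k + 1)) {U : SetRel X X} {M : ℕ}
    (hU : ∀ x : X, ∃ m : ℕ, 1 ≤ m ∧ m ≤ M ∧
      (word h₂ m '' (h₁ ⁻¹' ball x U)).ncard ^ 2 ≤ q ^ m)
    (n : ℕ) (x : ℕ → X) (A : Set Z) (hA : ∀ z ∈ A, ∀ k < n, h₁ (g^[k] z) ∈ ball (x k) U) :
    (word h₂ n '' A).ncard ^ 2 ≤ q ^ (n + M) := by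
  induction n using Nat.strong_induction_on generalizing x A with
  | _ n ih =>
    rcases Nat.eq_zero_or_pos n with rfl | hn
    · have h1 : (word h₂ 0 '' A).ncard ≤ 1 := by
        rw [ncard_le_one_iff]
        intros
        exact Subsingleton.elim _ _
      calc _ ≤ 1 ^ 2 := Nat.pow_le_pow_left h1 2
        _ ≤ _ := by simpa using Nat.one_le_pow _ _ (by omega)
    obtain ⟨m, hm, hmM, hcard⟩ := hU (x 0)
    have hfirst : (word h₂ m '' A).ncard ^ 2 ≤ q ^ m := by
      refine le_trans (Nat.pow_le_pow_left (ncard_le_ncard (image_mono ?_) (toFinite _)) 2) hcard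
      exact fun z hz => hA z hz 0 hn
    rcases le_total n m with hnm | hmn
    · calc _ ≤ (word h₂ m '' A).ncard ^ 2 := Nat.pow_le_pow_left (ncard_word_mono h₂ hnm A) 2
        _ ≤ q ^ m := hfirst
        _ ≤ q ^ (n + M) := Nat.pow_le_pow_right (by omega) (by omega)
    · obtain ⟨k, rfl⟩ := Nat.exists_eq_add_of_le hmn
      have hrest := ih k (by omega) (fun i => x (i + m)) (g^[m] '' A) (by
        rintro _ ⟨z, hz, rfl⟩ i hi
        rw [← Function.iterate_add_apply]
        exact hA z hz (i + m) (by omega))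
      calc _ ≤ ((word h₂ m '' A).ncard * (word h₂ k '' (g^[m] '' A)).ncard) ^ 2 :=
            Nat.pow_le_pow_left (ncard_word_add_le hg m k A) 2
        _ = (word h₂ m '' A).ncard ^ 2 * (word h₂ k '' (g^[m] '' A)).ncard ^ 2 := mul_pow _ _ 2
        _ ≤ q ^ m * q ^ (k + M) := Nat.mul_le_mul hfirst hrest
        _ = q ^ (m + k + M) := by rw [← pow_add, add_assoc]

/-- A cover of `X` by Bowen balls for `f` of length `(M + 2 * j) * r` has at least `q ^ j`
elements. -/
lemma pow_le_card_of_isDynCoverOf {f : X → X} {r : ℕ} (hr : 1 ≤ r) {g : Z → Z} {h₁ : Z → X}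
    {h₂ : Z → ℤ → Fin q} (hq : 2 ≤ q) (hsurj : Function.Surjective h₂)
    (hf : ∀ z, h₁ (g z) = f^[r] (h₁ z)) (hg : ∀ z k, h₂ (g z) k = h₂ z (k + 1))
    {U : SetRel X X} {M : ℕ}
    (hU : ∀ x : X, ∃ m : ℕ, 1 ≤ m ∧ m ≤ M ∧
      (word h₂ m '' (h₁ ⁻¹' ball x U)).ncard ^ 2 ≤ q ^ m)
    (hUsymm : U.IsSymm) (j : ℕ) (s : Finset X)
    (hs : IsDynCoverOf f univ U ((M + 2 * j) * r) s) : q ^ j ≤ s.card := by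
  set n := M + 2 * j with hn
  let A : X → Set Z := fun x => {z | ∀ k < n, h₁ (g^[k] z) ∈ ball ((f^[r])^[k] x) U}
  have hA : ∀ x, (word h₂ n '' A x).ncard ≤ q ^ (M + j) := by
    intro x
    have h := ncard_word_sq_le hq hg hU n (fun k => (f^[r])^[k] x) (A x) fun z hz => hz
    have e : q ^ (n + M) = (q ^ (M + j)) ^ 2 := by rw [← pow_mul]; congr 1; omega
    rw [e] at h
    exact (Nat.pow_le_pow_iff_left two_ne_zero).1 h
  have hcover : (univ : Set (Fin n → Fin q)) ⊆ ⋃ x ∈ s, word h₂ n '' A x := by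
    intro w _
    have : NeZero q := ⟨by omega⟩
    obtain ⟨z, hz⟩ := hsurj fun k => if hk : k.toNat < n then w ⟨k.toNat, hk⟩ else 0
    obtain ⟨x, hx, hxz⟩ := hs (mem_univ (h₁ z))
    refine mem_iUnion₂.2 ⟨x, hx, z, fun k hk => ?_, ?_⟩
    · rw [iterate_semiconj hf, ← Function.iterate_mul]
      have hlt : r * k < n * r := by
        rw [mul_comm n r]
        exact Nat.mul_lt_mul_of_pos_left hk (by omega)
      exact U.symm (mem_dynEntourage.1 hxz _ hlt)
    · funext i
      simp [word, hz]
  have htotal : q ^ n ≤ s.card * q ^ (M + j) := by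
    calc q ^ n = (univ : Set (Fin n → Fin q)).ncard := by simp [ncard_univ]
      _ ≤ (⋃ x ∈ s, word h₂ n '' A x).ncard := ncard_le_ncard hcover (toFinite _)
      _ ≤ ∑ x ∈ s, (word h₂ n '' A x).ncard := Finset.set_ncard_biUnion_le s _
      _ ≤ s.card * q ^ (M + j) := by
        simpa using Finset.sum_le_card_nsmul s _ _ fun x _ => hA x
  have e : q ^ n = q ^ j * q ^ (M + j) := by rw [← pow_add]; congr 1; omega
  rw [e] at htotal
  exact Nat.le_of_mul_le_mul_right htotal (Nat.pow_pos (by omega))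

/-- Exponential growth along the arithmetic progression `(M + 2 * j) * r` gives a positive upper
growth rate. -/
lemma expGrowthSup_pos {u : ℕ → ENNReal} {M r : ℕ} (hr : 1 ≤ r)
    (h : ∀ j : ℕ, (2 : ENNReal) ^ j ≤ u ((M + 2 * j) * r)) : 0 < ExpGrowth.expGrowthSup u := by
  have hr' : (0 : ℝ) < r := by exact_mod_cast hr
  have ha : 0 < Real.log 2 / (3 * r) := div_pos (Real.log_pos one_lt_two) (by positivity)
  refine lt_of_lt_of_le (EReal.coe_pos.2 ha) (Frequently.le_expGrowthSup ?_)
  refine frequently_atTop.2 fun N => ⟨(M + 2 * (N + M)) * r, by nlinarith, le_trans ?_ (h (N + M))⟩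
  -- The progression index `j = N + M` dominates `M`, so the time is at most `3 * j * r`.
  have hle : Real.log 2 / (3 * r) * (((M + 2 * (N + M)) * r : ℕ) : ℝ) ≤
      ((N + M : ℕ) : ℝ) * Real.log 2 := by
    have hN : (0 : ℝ) ≤ N := N.cast_nonneg
    have hlog := Real.log_pos one_lt_two
    rw [div_mul_eq_mul_div, div_le_iff₀ (by positivity)]
    push_cast
    have : 0 ≤ Real.log 2 * r * N := by positivity
    linarith
  have hcast : ((Real.log 2 / (3 * r) : ℝ) : EReal) * (((M + 2 * (N + M)) * r : ℕ) : EReal) =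
      ((Real.log 2 / (3 * r) * (((M + 2 * (N + M)) * r : ℕ) : ℝ) : ℝ) : EReal) := by
    rw [EReal.coe_mul]
    rfl
  rw [hcast, EReal.exp_coe]
  calc _ ≤ ENNReal.ofReal (Real.exp (((N + M : ℕ) : ℝ) * Real.log 2)) :=
        ENNReal.ofReal_le_ofReal (Real.exp_le_exp.2 hle)
    _ = 2 ^ (N + M) := by
      rw [Real.exp_nat_mul, Real.exp_log two_pos, ENNReal.ofReal_pow two_pos.le]
      simp

end Horseshoe

/-- A homeomorphism of a compact metric space possessing a topological
horseshoe has strictly positive topological entropy. -/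
theorem horseshoe_implies_positive_entropy
    {X : Type} [MetricSpace X] [CompactSpace X] (f : X ≃ₜ X) (Y : Set X)
    (h : IsTopologicalHorseshoe f Y) :
    0 < Dynamics.coverEntropy (f : X → X) Set.univ := by
  obtain ⟨-, r, hr, -, Z, _, _, g, q, h₁, h₂, hq, -, c₁, -, c₂, hsurj, hf, hg, hfin, -⟩ := h
  obtain ⟨U, hU, M, hM⟩ := Horseshoe.exists_uniform_word hq c₁ c₂ hfin
  obtain ⟨V, hV, hVsymm, hVU⟩ := symm_of_uniformity hU
  have hVM : ∀ x : X, ∃ m : ℕ, 1 ≤ m ∧ m ≤ M ∧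
      (Horseshoe.word h₂ m '' (h₁ ⁻¹' ball x V)).ncard ^ 2 ≤ q ^ m := by
    intro x
    obtain ⟨m, h1, h2, h3⟩ := hM x
    refine ⟨m, h1, h2, le_trans (Nat.pow_le_pow_left (ncard_le_ncard ?_ (toFinite _)) 2) h3⟩
    exact image_mono (preimage_mono (ball_mono hVU x))
  refine lt_of_lt_of_le (Horseshoe.expGrowthSup_pos (M := M) hr fun j => ?_)
    (coverEntropyEntourage_le_coverEntropy (f : X → X) univ hV)
  have hmin : ((2 ^ j : ℕ) : ℕ∞) ≤ coverMincard f univ V ((M + 2 * j) * r) := by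
    refine le_iInf₂ fun s hs => Nat.cast_le.2 ?_
    exact (Nat.pow_le_pow_left hq j).trans
      (Horseshoe.pow_le_card_of_isDynCoverOf hr hq hsurj hf hg hVM hVsymm j s hs)
  simpa using ENat.toENNReal_mono hmin
end

section
/- Let f be a homeomorphism of the torus T² = ℝ²/ℤ² homotopic to the identity, with lift F : ℝ² → ℝ². Then the rotation set ρ(F) = ⋂_{N∈ℕ} closure( ⋃_{n>N} { (Fⁿ(z) − z)/n : z ∈ ℝ² } ) is a nonempty, compact and convex subset of ℝ². -/
/-!
The plane enters through one estimate. Let `G` be continuous, injective and commute with integer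
translations, with displacement `φ z = G z - z`. If `φ` reaches distance `5` in every direction,
then `‖φ z‖ < 4` for some `z` (`exists_small_displacement`).

Suppose instead that `φ` has no small value; identify the plane with `ℂ` and let `f` be a
continuous logarithm of `φ`. Let `z'` maximize `φ` in a direction `e`, and let `z` be a nearby point
with `φ z` far in the same direction. Put `u = z' - z` and let `w` be an integer vector close to
`φ z`. Then `t ↦ φ (z + t u)` is homotopic to `t ↦ G (z + w + t u) - G z`, as the two stay close
while `φ` is large. By injectivity, `G (z + w + t u) - G (z + s u)` never vanishes for
`s, t ∈ [0, 1]`. It is the constant `w` on the diagonal, and by maximality at `z'` it lies in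
the half-plane of `e` when `t = 1`. So from `z` to `z'` the argument of `φ` changes as it would
inside this half-plane (`log_turn`). Chaining this over maximizers in directions that turn once
around the circle, the argument increases by `2π` between a point and itself, which is absurd.

For the rotation set, splitting an orbit into blocks of length `n` shows that each linear functional
on `rotSet F`, hence on its convex hull, is at most its maximum over `(Fⁿ z - z) / n`
(`mul_le_of_mem_rotSet`). If the hull has nonempty interior and `r` is an interior point, the estimate
applied to `Fⁿ - n r` gives points `(Fⁿ z - z) / n` within `4 / n` of `r`, so `r ∈ rotSet F`; the set
being closed, it equals its hull. Otherwise the rotation set lies on a line, and convexity follows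
from the intermediate value theorem. Compactness and nonemptiness come from the boundedness of the
displacement of `F`.
-/

open Set

/-- The rotation set of a lift `F` of a torus homeomorphism:
`ρ(F) = ⋂_N closure (⋃_{n>N} {(Fⁿ(z) − z)/n : z ∈ ℝ²})`. -/
def rotSet (F : ℝ × ℝ → ℝ × ℝ) : Set (ℝ × ℝ) :=
  ⋂ N : ℕ, closure (⋃ n : ℕ, ⋃ (_ : N < n),
    {p : ℝ × ℝ | ∃ z : ℝ × ℝ, p = (n : ℝ)⁻¹ • (F^[n] z - z)})

/-! ### Continuous logarithms -/

/-- A nonvanishing complex function on a simply connected space has a continuous logarithm. -/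
lemma exists_continuous_log {X : Type*} [TopologicalSpace X] [SimplyConnectedSpace X]
    [LocallyPathConnectedSpace X] (g : X → ℂ) (hg : Continuous g) (h0 : ∀ x, g x ≠ 0) :
    ∃ f : X → ℂ, Continuous f ∧ ∀ x, Complex.exp (f x) = g x := by
  obtain ⟨x₀⟩ : Nonempty X := inferInstance
  obtain ⟨f, ⟨-, hf⟩, -⟩ := Complex.isCoveringMapOn_exp.existsUnique_continuousMap_lifts
    (⟨g, hg⟩ : C(X, ℂ)) (a₀ := x₀) (e₀ := Complex.log (g x₀))
    (by simp [Complex.exp_log (h0 x₀)]) (by intro x; simpa using h0 x)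
  exact ⟨f, f.continuous, fun x => congrFun hf x⟩

/-- `exists_continuous_log` on the unit square. Only the values of `H` on `[0, 1]²` matter. -/
lemma exists_continuous_log_square (H : ℝ → ℝ → ℂ) (hH : Continuous (Function.uncurry H))
    (h0 : ∀ s ∈ Icc (0 : ℝ) 1, ∀ t ∈ Icc (0 : ℝ) 1, H s t ≠ 0) :
    ∃ L : ℝ → ℝ → ℂ, Continuous (Function.uncurry L) ∧
      ∀ s ∈ Icc (0 : ℝ) 1, ∀ t ∈ Icc (0 : ℝ) 1, Complex.exp (L s t) = H s t := by
  let k : ℝ → ℝ := fun t => max 0 (min 1 t)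
  have hk : Continuous k := by fun_prop
  have hk1 : ∀ t, k t ∈ Icc (0 : ℝ) 1 := fun t => ⟨le_max_left _ _, by simp [k]⟩
  have hk2 : ∀ t ∈ Icc (0 : ℝ) 1, k t = t := fun t ht => by simp [k, ht.1, ht.2]
  obtain ⟨f, hf, hfe⟩ := exists_continuous_log (fun x : ℝ × ℝ => H (k x.1) (k x.2))
    (hH.comp (by fun_prop : Continuous fun x : ℝ × ℝ => (k x.1, k x.2)))
    (fun x => h0 _ (hk1 _) _ (hk1 _))
  refine ⟨fun s t => f (s, t), hf, fun s hs t ht => ?_⟩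
  rw [hfe]; simp only [hk2 s hs, hk2 t ht]

/-- The change of a continuous logarithm along a path depends only on its exponential. -/
lemma log_change_unique {f g : ℝ → ℂ} (hf : ContinuousOn f (Icc 0 1))
    (hg : ContinuousOn g (Icc 0 1))
    (h : ∀ t ∈ Icc (0 : ℝ) 1, Complex.exp (f t) = Complex.exp (g t)) :
    f 1 - f 0 = g 1 - g 0 := by
  have h1 : ∀ t ∈ Icc (0 : ℝ) 1, ∃ n : ℤ, f t - g t = n * (2 * Real.pi * Complex.I) := by
    intro t ht
    rw [← Complex.exp_eq_one_iff, Complex.exp_sub, h t ht, div_self (Complex.exp_ne_zero _)]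
  have h2 : ContinuousOn (fun t => ((f t - g t) / (2 * Real.pi * Complex.I)).re) (Icc 0 1) :=
    Complex.continuous_re.comp_continuousOn ((hf.sub hg).div_const _)
  have hpi : (2 * Real.pi * Complex.I : ℂ) ≠ 0 := Complex.two_pi_I_ne_zero
  have hdisc : IsDiscrete (range ((↑) : ℤ → ℝ)) := ⟨
    Int.isClosedEmbedding_coe_real.isEmbedding.toHomeomorph.symm.isEmbedding.discreteTopology⟩
  have h3 := isPreconnected_Icc.constant_of_mapsTo
    (S := Icc (0:ℝ) 1) (T := range ((↑) : ℤ → ℝ)) hdisc h2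
    (by
      intro t ht
      obtain ⟨n, hn⟩ := h1 t ht
      refine ⟨n, ?_⟩
      simp [hn, mul_div_cancel_right₀ _ hpi])
    (left_mem_Icc.2 zero_le_one) (right_mem_Icc.2 zero_le_one)
  obtain ⟨n, hn⟩ := h1 0 (left_mem_Icc.2 zero_le_one)
  obtain ⟨m, hm⟩ := h1 1 (right_mem_Icc.2 zero_le_one)
  simp only [hn, hm, mul_div_cancel_right₀ _ hpi, Complex.intCast_re] at h3
  have h4 : n = m := by exact_mod_cast h3
  subst h4
  linear_combination hm - hn

/-- Along a path that stays in the open half-plane `Re (· * c) > 0`, a continuous logarithm changes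
exactly as the principal logarithm of `h * c`. -/
lemma log_change_halfplane {f h : ℝ → ℂ} {c : ℂ} (hf : ContinuousOn f (Icc 0 1))
    (hh : ∀ t ∈ Icc (0 : ℝ) 1, Complex.exp (f t) = h t)
    (hpos : ∀ t ∈ Icc (0 : ℝ) 1, 0 < (h t * c).re) :
    f 1 - f 0 = Complex.log (h 1 * c) - Complex.log (h 0 * c) := by
  have hc0 : c ≠ 0 := by
    rintro rfl
    simpa using hpos 0 (left_mem_Icc.2 zero_le_one)
  have hh0 : ∀ t ∈ Icc (0 : ℝ) 1, h t * c ≠ 0 := fun t ht h0 => by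
    have := hpos t ht
    simp [h0] at this
  have hhc : ContinuousOn h (Icc 0 1) :=
    (Complex.continuous_exp.comp_continuousOn hf).congr fun t ht => (hh t ht).symm
  have := log_change_unique (f := f) (g := fun t => Complex.log (h t * c) - Complex.log c) hf
    ((ContinuousOn.clog (hhc.mul continuousOn_const) fun t ht => Or.inl (hpos t ht)).sub
      continuousOn_const)
    (fun t ht => by
      rw [Complex.exp_sub, Complex.exp_log (hh0 t ht), Complex.exp_log hc0, hh t ht,
        mul_div_cancel_right₀ _ hc0])
  rw [this]; ring

/-- Every complex number is within distance `1` of a Gaussian integer. -/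
lemma exists_int_near (x : ℂ) : ∃ a b : ℤ, ‖((a : ℂ) + b * Complex.I) - x‖ ≤ 1 := by
  refine ⟨round x.re, round x.im, ?_⟩
  have h1 := abs_sub_round x.re
  have h2 := abs_sub_round x.im
  refine (Complex.norm_le_abs_re_add_abs_im _).trans ?_
  simp only [Complex.sub_re, Complex.add_re, Complex.intCast_re, Complex.mul_re, Complex.I_re,
    Complex.I_im, Complex.intCast_im, Complex.sub_im, Complex.add_im, Complex.mul_im]
  rw [abs_sub_comm] at h1 h2
  norm_num
  linarith

/-! ### The argument of a displacement without small values -/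

/-- Let `φ` be the displacement of an injective map commuting with integer translations, with
`4 ≤ ‖φ‖`, and let `f` be a continuous logarithm of `φ`. If `z'` maximizes `φ` in the direction
given by `c`, and `φ z` lies far in the half-plane `Re (· * c) > 0`, then between nearby points
`z` and `z'` the function `f` makes the short turn, inside that half-plane. This is the step that
uses injectivity. -/
lemma log_turn {φ f : ℂ → ℂ} {c z z' : ℂ} (hφ : Continuous φ)
    (hper : ∀ (z : ℂ) (a b : ℤ), φ (z + (a + b * Complex.I)) = φ z)
    (hinj : ∀ z z', z + φ z = z' + φ z' → z = z')
    (hf : Continuous f) (hfe : ∀ z, Complex.exp (f z) = φ z)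
    (hC : ∀ z, 4 ≤ ‖φ z‖) (hc : ‖c‖ = 1) (hzz : ‖z' - z‖ ≤ 3 / 2)
    (hmax : ∀ y, (φ y * c).re ≤ (φ z' * c).re) (h4 : 4 ≤ (φ z * c).re) :
    f z' - f z = Complex.log (φ z' * c) - Complex.log (φ z * c) := by
  obtain ⟨a, b, hw⟩ := exists_int_near (φ z)
  set w : ℂ := a + b * Complex.I with hwdef
  set u := z' - z with hu
  have m0 : (0 : ℝ) ∈ Icc (0 : ℝ) 1 := left_mem_Icc.2 zero_le_one
  have m1 : (1 : ℝ) ∈ Icc (0 : ℝ) 1 := right_mem_Icc.2 zero_le_one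
  have hre : ∀ x : ℂ, -‖x‖ ≤ (x * c).re := fun x => by
    have := Complex.abs_re_le_norm (x * c)
    rw [norm_mul, hc, mul_one] at this
    exact (abs_le.1 this).1
  have hsm : ∀ r : ℝ, |r| ≤ 1 → ‖(r : ℂ) * u‖ ≤ 3 / 2 := fun r hr => by
    rw [norm_mul, Complex.norm_real, Real.norm_eq_abs]
    calc |r| * ‖u‖ ≤ 1 * (3/2) := mul_le_mul hr hzz (norm_nonneg _) zero_le_one
      _ = 3/2 := one_mul _
  have hIcc : ∀ t ∈ Icc (0 : ℝ) 1, |t| ≤ 1 := fun t ht => abs_le.2 ⟨by linarith [ht.1], ht.2⟩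
  have hsm2 : ∀ l ∈ Icc (0 : ℝ) 1, ∀ t ∈ Icc (0 : ℝ) 1,
      ‖(l : ℂ) * (w - φ z + t * u)‖ ≤ 5 / 2 := fun l hl t ht => by
    rw [norm_mul, Complex.norm_real, Real.norm_eq_abs]
    have : ‖w - φ z + t * u‖ ≤ 5 / 2 := (norm_add_le _ _).trans (by linarith [hsm t (hIcc t ht)])
    calc |l| * _ ≤ 1 * (5/2) := mul_le_mul (hIcc l hl) this (norm_nonneg _) zero_le_one
      _ = 5/2 := one_mul _
  have hwre : 3 ≤ (w * c).re := by
    have := hre (w - φ z)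
    rw [sub_mul, Complex.sub_re] at this
    linarith
  have hwn : 3 ≤ ‖w‖ := by
    have := Complex.re_le_norm (w * c)
    rw [norm_mul, hc, mul_one] at this
    linarith
  have hz1 : z + ((1 : ℝ) : ℂ) * u = z' := by rw [hu]; push_cast; ring
  -- Write `G y = y + φ y`. The homotopy `T` deforms the path `t ↦ φ (z + t * u)`, through
  -- nonzero values and with endpoints in the half-plane, to
  -- `t ↦ G (z + w + t * u) - G z`, because `w` is close to `φ z`.
  obtain ⟨T, hT, hTe⟩ := exists_continuous_log_square
    (fun l t => φ (z + t * u) + l * (w - φ z + t * u))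
    (by simp only [Function.uncurry_def]; fun_prop)
    (fun l hl t ht h0 => by
      have h1 := hsm2 l hl t ht
      have h2 := hC (z + t * u)
      rw [eq_neg_of_add_eq_zero_left h0, norm_neg] at h2
      linarith)
  -- `S s t = G (z + w + t * u) - G (z + s * u)`, nonzero by injectivity of `G`. On the diagonal it
  -- is the constant `w`, and on the side `t = 1` maximality at `z'` keeps it in the half-plane.
  obtain ⟨S, hS, hSe⟩ := exists_continuous_log_square
    (fun s t => w + (t - s) * u + φ (z + t * u) - φ (z + s * u))
    (by simp only [Function.uncurry_def]; fun_prop)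
    (fun s hs t ht h0 => by
      have h1 : z + t * u + w = z + s * u := by
        refine hinj _ _ ?_
        rw [hper]
        linear_combination h0
      have h2 : w = ((s - t : ℝ) : ℂ) * u := by push_cast; linear_combination h1
      have h3 := hsm (s - t) (abs_le.2 ⟨by linarith [hs.1, ht.2], by linarith [hs.2, ht.1]⟩)
      rw [← h2] at h3
      linarith)
  have cT : ∀ {p : ℝ → ℝ × ℝ}, Continuous p → ContinuousOn (fun t => T (p t).1 (p t).2) (Icc 0 1) :=
    fun hp => (hT.comp hp).continuousOn
  have cS : ∀ {p : ℝ → ℝ × ℝ}, Continuous p → ContinuousOn (fun t => S (p t).1 (p t).2) (Icc 0 1) :=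
    fun hp => (hS.comp hp).continuousOn
  have e1 := log_change_unique (f := fun t : ℝ => f (z + t * u)) (g := fun t => T 0 t)
    (by fun_prop) (cT (p := fun t => (0, t)) (by fun_prop))
    (fun t ht => by rw [hfe, hTe 0 m0 t ht]; push_cast; ring)
  have e2 := log_change_unique (f := fun t => T 1 t) (g := fun t => S 0 t)
    (cT (p := fun t => (1, t)) (by fun_prop)) (cS (p := fun t => (0, t)) (by fun_prop))
    (fun t ht => by
      rw [hTe 1 m1 t ht, hSe 0 m0 t ht]; push_cast; rw [zero_mul, add_zero]; ring)
  have e3 := log_change_halfplane (f := fun l => T l 0) (c := c)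
    (cT (p := fun l => (l, 0)) (by fun_prop)) (fun l hl => hTe l hl 0 m0)
    (fun l hl => by
      have h1 := hre (l * (w - φ z + (0 : ℝ) * u))
      have h2 := hsm2 l hl 0 m0
      have h3 : z + ((0 : ℝ) : ℂ) * u = z := by simp
      rw [h3, add_mul, Complex.add_re]
      linarith)
  have e4 := log_change_halfplane (f := fun l => T l 1) (c := c)
    (cT (p := fun l => (l, 1)) (by fun_prop)) (fun l hl => hTe l hl 1 m1)
    (fun l hl => by
      have h1 := hre (l * (w - φ z + (1 : ℝ) * u))
      have h2 := hsm2 l hl 1 m1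
      have h3 := hmax z
      rw [hz1, add_mul, Complex.add_re]
      linarith)
  have e5 := log_change_halfplane (f := fun s => S s s) (c := c)
    (cS (p := fun l => (l, l)) (by fun_prop)) (fun l hl => hSe l hl l hl)
    (fun l hl => by
      have : w + ((l : ℂ) - l) * u + φ (z + l * u) - φ (z + l * u) = w := by ring
      rw [this]
      linarith)
  have e6 := log_change_halfplane (f := fun s => S s 1) (c := c)
    (cS (p := fun l => (l, 1)) (by fun_prop)) (fun l hl => hSe l hl 1 m1)
    (fun l hl => by
      have h1 := hre (((1 - l : ℝ) : ℂ) * u)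
      have h2 := hsm (1 - l) (abs_le.2 ⟨by linarith [hl.2], by linarith [hl.1]⟩)
      have h3 := hmax (z + l * u)
      push_cast at h1 h2
      rw [hz1, sub_mul, add_mul, add_mul, Complex.sub_re, Complex.add_re, Complex.add_re]
      push_cast
      linarith)
  simp only [Complex.ofReal_zero, Complex.ofReal_one, zero_mul, add_zero, one_mul, sub_zero,
    sub_self] at e1 e2 e3 e4 e5 e6
  have hzu : z + u = z' := by rw [hu]; ring
  simp only [hzu] at e1 e2 e3 e4 e5 e6
  ring_nf at e1 e2 e3 e4 e5 e6 ⊢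
  linear_combination e1 + e2 + e3 - e4 + e5 - e6

/-- A continuous `ℤ²`-periodic function attains its maximum, at a point of the unit square. -/
lemma exists_isMax_of_periodic {h : ℝ × ℝ → ℝ} (hc : Continuous h)
    (hper : ∀ (z : ℝ × ℝ) (v : ℤ × ℤ), h (z + ((v.1 : ℝ), (v.2 : ℝ))) = h z) :
    ∃ z ∈ Icc (0 : ℝ × ℝ) 1, ∀ y, h y ≤ h z := by
  obtain ⟨z, hz, hmax⟩ := (isCompact_Icc (a := (0 : ℝ × ℝ)) (b := 1)).exists_isMaxOn
    ⟨0, by simp⟩ hc.continuousOn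
  refine ⟨z, hz, fun y => ?_⟩
  have h1 : h (Int.fract y.1, Int.fract y.2) = h y := by
    rw [← hper _ (⌊y.1⌋, ⌊y.2⌋)]
    simp
  rw [← h1]
  exact hmax ⟨⟨Int.fract_nonneg _, Int.fract_nonneg _⟩,
    ⟨(Int.fract_lt_one _).le, (Int.fract_lt_one _).le⟩⟩

lemma log_mul_exp_neg {x : ℂ} {s : ℝ} (hx : 0 < x.re) (hs0 : 0 ≤ s) (hs1 : s ≤ 1) :
    Complex.log (x * Complex.exp (-(s * Complex.I))) = Complex.log x - s * Complex.I := by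
  have hx0 : x ≠ 0 := fun h => by simp [h] at hx
  have h1 := Complex.abs_arg_lt_pi_div_two_iff.2 (Or.inl hx)
  rw [abs_lt] at h1
  have hpi := Real.pi_gt_three
  have h2 : x * Complex.exp (-(s * Complex.I)) = Complex.exp (Complex.log x - s * Complex.I) := by
    rw [sub_eq_add_neg, Complex.exp_add, Complex.exp_log hx0]
  rw [h2, Complex.log_exp]
  · simp [Complex.log_im]; linarith
  · simp [Complex.log_im]; linarith

/-- If the displacement `φ` of an injective map of `ℂ` commuting with integer translations reaches
distance `5` in every direction, then it takes a value of norm less than `4`. Otherwise a continuous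
logarithm of `φ`, followed through the maximizers of `φ` in directions turning once around the
circle, would increase by `2πi` on returning to its starting point. -/
lemma exists_small_complex {φ : ℂ → ℂ} (hφ : Continuous φ)
    (hper : ∀ (z : ℂ) (a b : ℤ), φ (z + (a + b * Complex.I)) = φ z)
    (hinj : ∀ z z', z + φ z = z' + φ z' → z = z')
    (hbig : ∀ θ : ℝ, ∃ z, 5 ≤ (φ z * Complex.exp (-(θ * Complex.I))).re) :
    ∃ z, ‖φ z‖ < 4 := by
  by_contra! hC
  have hattain : ∀ h : ℂ → ℝ, Continuous h →
      (∀ (z : ℂ) (a b : ℤ), h (z + (a + b * Complex.I)) = h z) →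
      ∃ z : ℂ, (z.re ∈ Icc (0 : ℝ) 1 ∧ z.im ∈ Icc (0 : ℝ) 1) ∧ ∀ y, h y ≤ h z := by
    intro h hh hp
    obtain ⟨z, hz, hm⟩ := exists_isMax_of_periodic
      (h := fun p => h (Complex.equivRealProdCLM.symm p)) (by fun_prop) (fun z v => by
        rw [map_add, ← hp (Complex.equivRealProdCLM.symm z) v.1 v.2]
        congr 2
        apply Complex.ext <;> simp)
    refine ⟨Complex.equivRealProdCLM.symm z, ?_, fun y => ?_⟩
    · simpa using ⟨⟨hz.1.1, hz.2.1⟩, ⟨hz.1.2, hz.2.2⟩⟩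
    · have := hm (Complex.equivRealProdCLM y)
      rwa [ContinuousLinearEquiv.symm_apply_apply] at this
  have hZ : ∀ c : ℂ, ∃ z : ℂ, (z.re ∈ Icc (0 : ℝ) 1 ∧ z.im ∈ Icc (0 : ℝ) 1) ∧
      ∀ y, (φ y * c).re ≤ (φ z * c).re := fun c =>
    hattain (fun y => (φ y * c).re) (by fun_prop) (fun z a b => by simp only [hper])
  choose Z hZQ hZmax using hZ
  obtain ⟨zM, -, hM⟩ := hattain (fun y => ‖φ y‖) (by fun_prop) (fun z a b => by simp only [hper])
  set M := ‖φ zM‖ with hMdef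
  have hM4 : 4 ≤ M := hC zM
  obtain ⟨f, hf, hfe⟩ := exists_continuous_log φ hφ fun z h0 => by
    have := hC z
    simp [h0] at this
    linarith
  -- The angular step `2π / N` is small enough that a maximizer for one direction still has
  -- displacement at least `4` in the next direction.
  obtain ⟨N, hN⟩ := exists_nat_ge (2 * Real.pi * M)
  have hpi := Real.pi_pos
  have hN0 : (0 : ℝ) < N := lt_of_lt_of_le (by positivity) hN
  set s : ℝ := 2 * Real.pi / N with hs
  have hs0 : 0 ≤ s := by positivity
  have hsM : s * M ≤ 1 := by rw [hs, div_mul_eq_mul_div, div_le_one hN0]; exact hN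
  have hs1 : s ≤ 1 := by nlinarith
  let c : ℕ → ℂ := fun k => Complex.exp (-(((k * s : ℝ) : ℂ) * Complex.I))
  have hc1 : ∀ k, ‖c k‖ = 1 := fun k => by
    have := Complex.norm_exp_ofReal_mul_I (-(k * s : ℝ))
    simp only [c]
    rw [← this]; congr 2; push_cast; ring
  have hcs : ∀ k, c (k + 1) = c k * Complex.exp (-(s * Complex.I)) := fun k => by
    simp only [c]
    rw [← Complex.exp_add]; congr 1; push_cast; ring
  have hstep : ‖Complex.exp (-(s * Complex.I)) - 1‖ ≤ s := by
    have := Real.norm_exp_I_mul_ofReal_sub_one_le (x := -s)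
    rw [Real.norm_eq_abs, abs_neg, abs_of_nonneg hs0] at this
    refine le_trans (le_of_eq ?_) this
    congr 3; push_cast; ring
  have hbigk : ∀ k, 5 ≤ (φ (Z (c k)) * c k).re := fun k => by
    obtain ⟨z, hz⟩ := hbig (k * s)
    exact hz.trans (hZmax _ z)
  have hdist : ∀ a b, ‖Z a - Z b‖ ≤ 3 / 2 := fun a b => by
    have h1 := hZQ a
    have h2 := hZQ b
    have h3 : ‖Z a - Z b‖ ^ 2 ≤ 2 := by
      rw [Complex.sq_norm, Complex.normSq_apply, Complex.sub_re, Complex.sub_im]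
      obtain ⟨⟨_, _⟩, _, _⟩ := h1
      obtain ⟨⟨_, _⟩, _, _⟩ := h2
      nlinarith
    nlinarith [norm_nonneg (Z a - Z b)]
  have hind : ∀ k : ℕ, f (Z (c k)) - Complex.log (φ (Z (c k)) * c k) =
      f (Z (c 0)) - Complex.log (φ (Z (c 0)) * c 0) + k * (s * Complex.I) := by
    intro k
    induction k with
    | zero => simp
    | succ k ih =>
      have h4 : 4 ≤ (φ (Z (c k)) * c (k + 1)).re := by
        have h5 := hbigk k
        have h6 : φ (Z (c k)) * c (k + 1) = φ (Z (c k)) * c k +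
            φ (Z (c k)) * c k * (Complex.exp (-(s * Complex.I)) - 1) := by rw [hcs]; ring
        have h7 := Complex.abs_re_le_norm
          (φ (Z (c k)) * c k * (Complex.exp (-(s * Complex.I)) - 1))
        rw [norm_mul, norm_mul, hc1, mul_one] at h7
        have h8 : ‖φ (Z (c k))‖ * ‖Complex.exp (-(s * Complex.I)) - 1‖ ≤ M * s :=
          mul_le_mul (hM _) hstep (norm_nonneg _) (by linarith)
        rw [h6, Complex.add_re]
        have := (abs_le.1 (h7.trans h8)).1
        linarith
      have h9 := log_turn hφ hper hinj hf hfe hC (hc1 (k + 1)) (hdist _ _)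
        (hZmax (c (k + 1))) h4
      have h10 := log_mul_exp_neg (x := φ (Z (c k)) * c k) (by linarith [hbigk k]) hs0 hs1
      rw [mul_assoc, ← hcs] at h10
      push_cast
      linear_combination h9 + ih - h10
  have hcN : c N = c 0 := by
    have : ((N : ℝ) * s) = 2 * Real.pi := by rw [hs]; field_simp
    simp only [c]
    rw [this]
    simp [Complex.exp_neg, Complex.exp_two_pi_mul_I]
  have h := hind N
  rw [hcN] at h
  have h2 : (N : ℂ) * (s * Complex.I) = 0 := by linear_combination -h
  have h3 : ((N : ℂ) * (s * Complex.I)) = ((2 * Real.pi : ℝ) : ℂ) * Complex.I := by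
    have : ((N : ℝ) * s) = 2 * Real.pi := by rw [hs]; field_simp
    rw [← this]; push_cast; ring
  rw [h3] at h2
  simp [Real.pi_ne_zero] at h2

/-- Real form of `exists_small_complex`; the norm is the sup norm, which is at most the Euclidean
one. -/
theorem exists_small_displacement {G : ℝ × ℝ → ℝ × ℝ} (hG : Continuous G)
    (hinj : Function.Injective G)
    (hper : ∀ (z : ℝ × ℝ) (v : ℤ × ℤ),
      G (z + ((v.1 : ℝ), (v.2 : ℝ))) = G z + ((v.1 : ℝ), (v.2 : ℝ)))
    (hbig : ∀ θ : ℝ, ∃ z, 5 ≤ Real.cos θ * (G z - z).1 + Real.sin θ * (G z - z).2) :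
    ∃ z, ‖G z - z‖ < 4 := by
  let e := Complex.equivRealProdCLM
  obtain ⟨z, hz⟩ := exists_small_complex (φ := fun z => e.symm (G (e z) - e z)) (by fun_prop)
    (fun z a b => by
      have h1 : G (e z + ((a : ℝ), (b : ℝ))) = G (e z) + ((a : ℝ), (b : ℝ)) := hper (e z) (a, b)
      have h2 : e (z + (a + b * Complex.I)) = e z + ((a : ℝ), (b : ℝ)) := by
        ext <;> simp [e]
      simp only [h2, h1, add_sub_add_right_eq_sub])
    (fun z z' h => by
      have h2 := congrArg e h
      simp only [map_add, e.apply_symm_apply, add_sub_cancel] at h2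
      exact e.injective (hinj h2))
    (fun θ => by
      obtain ⟨z, hz⟩ := hbig θ
      refine ⟨e.symm z, hz.trans (le_of_eq ?_)⟩
      rw [e.apply_symm_apply, Complex.mul_re, ← neg_mul, ← Complex.ofReal_neg,
        Complex.exp_ofReal_mul_I_re, Complex.exp_ofReal_mul_I_im]
      simp [e]; ring)
  refine ⟨e z, lt_of_le_of_lt ?_ hz⟩
  have h1 : e (e.symm (G (e z) - e z)) = G (e z) - e z := e.apply_symm_apply _
  conv_lhs => rw [← h1]
  rw [Prod.norm_def]
  exact max_le (Complex.abs_re_le_norm _) (Complex.abs_im_le_norm _)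

/-! ### Rotation sets and linear functionals -/

lemma mem_rotSet_iff {F : ℝ × ℝ → ℝ × ℝ} {p : ℝ × ℝ} :
    p ∈ rotSet F ↔ ∀ N : ℕ, ∀ ε > 0, ∃ n > N, ∃ z,
      ‖p - (n : ℝ)⁻¹ • (F^[n] z - z)‖ < ε := by
  simp only [rotSet, mem_iInter, Metric.mem_closure_iff, mem_iUnion, mem_ofPred_eq, exists_prop,
    dist_eq_norm]
  refine forall_congr' fun N => forall_congr' fun ε => forall_congr' fun _ => ⟨?_, ?_⟩
  · rintro ⟨_, ⟨n, hn, z, rfl⟩, h⟩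
    exact ⟨n, hn, z, h⟩
  · rintro ⟨n, hn, z, h⟩
    exact ⟨_, ⟨n, hn, z, rfl⟩, h⟩

lemma iterate_add_int {F : ℝ × ℝ → ℝ × ℝ}
    (hF : ∀ (z : ℝ × ℝ) (v : ℤ × ℤ),
      F (z + ((v.1 : ℝ), (v.2 : ℝ))) = F z + ((v.1 : ℝ), (v.2 : ℝ)))
    (n : ℕ) (z : ℝ × ℝ) (v : ℤ × ℤ) :
    F^[n] (z + ((v.1 : ℝ), (v.2 : ℝ))) = F^[n] z + ((v.1 : ℝ), (v.2 : ℝ)) := by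
  induction n generalizing z with
  | zero => rfl
  | succ n ih => rw [Function.iterate_succ_apply, hF, ih, ← Function.iterate_succ_apply]

lemma apply_iterate_sub_le {F : ℝ × ℝ → ℝ × ℝ} (l : (ℝ × ℝ) →L[ℝ] ℝ) {H : ℝ}
    (hH : ∀ z, l (F z - z) ≤ H) (k : ℕ) (z : ℝ × ℝ) : l (F^[k] z - z) ≤ k * H := by
  induction k with
  | zero => simp
  | succ k ih =>
    rw [Function.iterate_succ_apply', ← sub_add_sub_cancel _ (F^[k] z), map_add]
    push_cast
    linarith [hH (F^[k] z)]

lemma norm_iterate_sub_le {F : ℝ × ℝ → ℝ × ℝ} {M : ℝ} (hM : ∀ z, ‖F z - z‖ ≤ M) (k : ℕ)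
    (z : ℝ × ℝ) : ‖F^[k] z - z‖ ≤ k * M := by
  induction k with
  | zero => simp
  | succ k ih =>
    rw [Function.iterate_succ_apply', ← sub_add_sub_cancel _ (F^[k] z)]
    refine (norm_add_le _ _).trans ?_
    push_cast
    linarith [hM (F^[k] z)]

/-- Every linear functional is bounded on the rotation set by its supremum over the normalized
displacements `(Fⁿ z - z) / n`, for each fixed `n > 0`. -/
lemma mul_le_of_mem_rotSet {F : ℝ × ℝ → ℝ × ℝ} {M : ℝ} (hM : ∀ z, ‖F z - z‖ ≤ M)
    (l : (ℝ × ℝ) →L[ℝ] ℝ) {n : ℕ} (hn : 0 < n) {H : ℝ} (hH : ∀ z, l (F^[n] z - z) ≤ H)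
    {p : ℝ × ℝ} (hp : p ∈ rotSet F) : n * l p ≤ H := by
  have hn' : (0 : ℝ) < n := by exact_mod_cast hn
  have hM0 : 0 ≤ M := (norm_nonneg _).trans (hM 0)
  set B : ℝ := ‖l‖ * (n * M) + |H| with hB
  have hB0 : 0 ≤ B := by positivity
  -- Euclidean division of the time `m` by `n`
  have key : ∀ (m : ℕ) (z : ℝ × ℝ), l (F^[m] z - z) ≤ m * (H / n) + B := by
    intro m z
    have h1 : F^[m] z = (F^[n])^[m / n] (F^[m % n] z) := by
      rw [← Function.iterate_mul, ← Function.iterate_add_apply, Nat.div_add_mod]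
    have h2 := apply_iterate_sub_le l hH (m / n) (F^[m % n] z)
    have h3 : l (F^[m % n] z - z) ≤ ‖l‖ * (n * M) := by
      refine (le_abs_self _).trans ((l.le_opNorm _).trans ?_)
      refine mul_le_mul_of_nonneg_left ((norm_iterate_sub_le hM _ _).trans ?_) (norm_nonneg _)
      exact mul_le_mul_of_nonneg_right (by exact_mod_cast (Nat.mod_lt m hn).le) hM0
    have h4 : ((m / n : ℕ) : ℝ) * H ≤ m * (H / n) + |H| := by
      have h5 : (m : ℝ) = n * (m / n : ℕ) + (m % n : ℕ) := by exact_mod_cast (Nat.div_add_mod m n).symm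
      have h6 : (m : ℝ) * (H / n) = (m / n : ℕ) * H + ((m % n : ℕ) / n : ℝ) * H := by
        rw [h5]; field_simp
      have h7 : |((m % n : ℕ) / n : ℝ) * H| ≤ 1 * |H| := by
        rw [abs_mul]
        refine mul_le_mul_of_nonneg_right ?_ (abs_nonneg _)
        rw [abs_of_nonneg (by positivity), div_le_one hn']
        exact_mod_cast (Nat.mod_lt m hn).le
      have := (abs_le.1 h7).1
      linarith
    rw [h1, ← sub_add_sub_cancel _ (F^[m % n] z), map_add]
    linarith
  suffices h : l p ≤ H / n by
    rw [le_div_iff₀ hn'] at h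
    linarith
  refine le_of_forall_pos_le_add fun ε hε => ?_
  obtain ⟨N, hN⟩ := exists_nat_gt (B / (ε / 2))
  obtain ⟨m, hm, z, hz⟩ := mem_rotSet_iff.1 hp N (ε / 2 / (‖l‖ + 1)) (by positivity)
  have hm' : (N : ℝ) < m := by exact_mod_cast hm
  have hm0 : (0 : ℝ) < m := lt_of_le_of_lt (Nat.cast_nonneg N) hm'
  have h1 : l (p - (m : ℝ)⁻¹ • (F^[m] z - z)) ≤ ε / 2 := by
    refine (le_abs_self _).trans ((l.le_opNorm _).trans ?_)
    rw [lt_div_iff₀ (by positivity)] at hz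
    nlinarith [norm_nonneg (p - (m : ℝ)⁻¹ • (F^[m] z - z)), norm_nonneg l]
  have h2 : (m : ℝ)⁻¹ * l (F^[m] z - z) ≤ H / n + ε / 2 := by
    rw [inv_mul_le_iff₀ hm0]
    refine (key m z).trans ?_
    have : B ≤ m * (ε / 2) := by
      rw [div_lt_iff₀ (by positivity)] at hN
      nlinarith
    linarith
  rw [map_sub, map_smul, smul_eq_mul] at h1
  linarith

lemma rotSet_isClosed (F : ℝ × ℝ → ℝ × ℝ) : IsClosed (rotSet F) :=
  isClosed_iInter fun _ => isClosed_closure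

lemma norm_inv_smul_iterate_le {F : ℝ × ℝ → ℝ × ℝ} {M : ℝ} (hM : ∀ z, ‖F z - z‖ ≤ M) {n : ℕ}
    (hn : 0 < n) (z : ℝ × ℝ) : ‖(n : ℝ)⁻¹ • (F^[n] z - z)‖ ≤ M := by
  have hn' : (0 : ℝ) < n := by exact_mod_cast hn
  rw [norm_smul, norm_inv, Real.norm_natCast, inv_mul_le_iff₀ hn']
  exact norm_iterate_sub_le hM n z

lemma rotSet_isCompact {F : ℝ × ℝ → ℝ × ℝ} {M : ℝ} (hM : ∀ z, ‖F z - z‖ ≤ M) :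
    IsCompact (rotSet F) := by
  refine (isCompact_closedBall (0 : ℝ × ℝ) M).of_isClosed_subset (rotSet_isClosed F) ?_
  refine (iInter_subset _ 0).trans (closure_minimal ?_ Metric.isClosed_closedBall)
  simp only [iUnion_subset_iff]
  rintro n hn _ ⟨z, rfl⟩
  rw [mem_closedBall_zero_iff]
  exact norm_inv_smul_iterate_le hM hn z

/-- Normalized displacements at arbitrary points and increasing times have a subsequence
converging to a point of the rotation set. The time is `k + 1`, so that it is never zero. -/
lemma exists_mem_rotSet_limit {F : ℝ × ℝ → ℝ × ℝ} {M : ℝ} (hM : ∀ z, ‖F z - z‖ ≤ M)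
    (z : ℕ → ℝ × ℝ) : ∃ x ∈ rotSet F, ∃ ψ : ℕ → ℕ, StrictMono ψ ∧
      Filter.Tendsto (fun k => ((ψ k + 1 : ℕ) : ℝ)⁻¹ • (F^[ψ k + 1] (z (ψ k)) - z (ψ k)))
        Filter.atTop (nhds x) := by
  obtain ⟨x, -, ψ, hψ, hlim⟩ := (isCompact_closedBall (0 : ℝ × ℝ) M).tendsto_subseq
    (x := fun k => ((k + 1 : ℕ) : ℝ)⁻¹ • (F^[k + 1] (z k) - z k))
    (fun k => by
      rw [mem_closedBall_zero_iff]
      exact norm_inv_smul_iterate_le hM (Nat.succ_pos k) _)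
  refine ⟨x, mem_rotSet_iff.2 fun N ε hε => ?_, ψ, hψ, hlim⟩
  obtain ⟨k, hk, hkN⟩ := ((Metric.tendsto_nhds.1 hlim ε hε).and
    (Filter.eventually_ge_atTop N)).exists
  refine ⟨ψ k + 1, Nat.lt_succ_of_le (hkN.trans (hψ.id_le k)), z (ψ k), ?_⟩
  rw [← dist_eq_norm, dist_comm]
  exact hk

/-! ### Convexity -/

/-- Interior points `r` of the convex hull belong to the rotation set: for large `n` the map
`Fⁿ - n r` has large displacement in every direction, hence displacement less than `4` somewhere,
which places `(Fⁿ z - z) / n` within `4 / n` of `r`. -/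
lemma mem_rotSet_of_mem_interior {F : ℝ × ℝ → ℝ × ℝ} (hFc : Continuous F)
    (hFi : Function.Injective F)
    (hF : ∀ (z : ℝ × ℝ) (v : ℤ × ℤ),
      F (z + ((v.1 : ℝ), (v.2 : ℝ))) = F z + ((v.1 : ℝ), (v.2 : ℝ)))
    (hsupp : ∀ (l : (ℝ × ℝ) →L[ℝ] ℝ) (n : ℕ), 0 < n → ∃ z, ∀ r ∈ convexHull ℝ (rotSet F),
      n * l r ≤ l (F^[n] z - z))
    {r : ℝ × ℝ} (hr : r ∈ interior (convexHull ℝ (rotSet F))) : r ∈ rotSet F := by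
  obtain ⟨δ, hδ, hball⟩ := Metric.mem_nhds_iff.1 (mem_interior_iff_mem_nhds.1 hr)
  refine mem_rotSet_iff.2 fun N ε hε => ?_
  obtain ⟨m, hm⟩ := exists_nat_ge (max (10 / δ) (4 / ε))
  set n := max (N + 1) m with hn
  have hmn : (m : ℝ) ≤ n := by exact_mod_cast le_max_right _ _
  have hn0 : 0 < n := lt_of_lt_of_le (Nat.succ_pos N) (le_max_left _ _)
  have hn0' : (0 : ℝ) < n := by exact_mod_cast hn0
  have hnδ : 10 ≤ n * δ := by
    rw [← div_le_iff₀ hδ]; exact (le_max_left _ _).trans (hm.trans hmn)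
  have hnε : 4 ≤ n * ε := by
    rw [← div_le_iff₀ hε]; exact (le_max_right _ _).trans (hm.trans hmn)
  have hG : ∀ z, F^[n] z - (n : ℝ) • r - z = F^[n] z - z - (n : ℝ) • r := fun z => by abel
  obtain ⟨z, hz⟩ := exists_small_displacement (G := fun z => F^[n] z - (n : ℝ) • r)
    ((hFc.iterate n).sub continuous_const)
    (fun z z' h => hFi.iterate n (sub_left_injective h))
    (fun z v => by simp only [iterate_add_int hF]; abel)
    (fun θ => by
      let l : (ℝ × ℝ) →L[ℝ] ℝ := Real.cos θ • ContinuousLinearMap.fst ℝ ℝ ℝ +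
        Real.sin θ • ContinuousLinearMap.snd ℝ ℝ ℝ
      have hl : ∀ x, l x = Real.cos θ * x.1 + Real.sin θ * x.2 := fun x => by simp [l]
      obtain ⟨z, hz⟩ := hsupp l n hn0
      refine ⟨z, ?_⟩
      have h1 := hz (r + (δ / 2) • (Real.cos θ, Real.sin θ)) (hball (by
        rw [Metric.mem_ball, dist_eq_norm, add_sub_cancel_left, norm_smul, Real.norm_eq_abs,
          abs_of_pos (half_pos hδ), Prod.norm_def]
        have : max ‖Real.cos θ‖ ‖Real.sin θ‖ ≤ 1 :=
          max_le (Real.abs_cos_le_one θ) (Real.abs_sin_le_one θ)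
        nlinarith))
      have h2 : l (Real.cos θ, Real.sin θ) = 1 := by
        rw [hl]; nlinarith [Real.sin_sq_add_cos_sq θ]
      rw [map_add, map_smul, h2, smul_eq_mul] at h1
      rw [hG, ← hl, map_sub, map_smul, smul_eq_mul]
      linarith)
  refine ⟨n, lt_of_lt_of_le (Nat.lt_succ_self N) (le_max_left _ _), z, ?_⟩
  rw [hG] at hz
  have h3 : r - (n : ℝ)⁻¹ • (F^[n] z - z) = -((n : ℝ)⁻¹ • (F^[n] z - z - (n : ℝ) • r)) := by
    rw [smul_sub _ (F^[n] z - z), inv_smul_smul₀ hn0'.ne']; abel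
  rw [h3, norm_neg, norm_smul, norm_inv, Real.norm_natCast, inv_mul_lt_iff₀ hn0']
  linarith

/-- If the rotation set lies on a line, it is convex: by connectedness of the plane and the support
inequality, for every `n` some normalized displacement has the same projection to the line as a
given point `r` between two points of the rotation set, and a limit of these is `r`. -/
lemma mem_rotSet_of_segment {F : ℝ × ℝ → ℝ × ℝ} (hFc : Continuous F) {M : ℝ}
    (hM : ∀ z, ‖F z - z‖ ≤ M)
    (hsupp : ∀ (l : (ℝ × ℝ) →L[ℝ] ℝ) (n : ℕ), 0 < n → ∃ z, ∀ r ∈ convexHull ℝ (rotSet F),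
      n * l r ≤ l (F^[n] z - z))
    {g : (ℝ × ℝ) →ₗ[ℝ] ℝ} (hg0 : g ≠ 0) (hg : ∀ x ∈ rotSet F, ∀ y ∈ rotSet F, g x = g y)
    {p q r : ℝ × ℝ} (hp : p ∈ rotSet F) (hq : q ∈ rotSet F) (hr : r ∈ segment ℝ p q) :
    r ∈ rotSet F := by
  by_cases hpq : p = q
  · subst hpq
    rw [segment_same, mem_singleton_iff] at hr
    rwa [hr]
  obtain ⟨a, b, ha, hb, hab, rfl⟩ := hr
  set r := a • p + b • q with hr
  set d := q - p with hd
  have hrp : r = p + b • d := by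
    rw [hr, hd, eq_sub_of_add_eq hab]
    module
  have hconv : rotSet F ⊆ convexHull ℝ (rotSet F) := subset_convexHull ℝ _
  have hd0 : 0 < d.1 * d.1 + d.2 * d.2 := by
    have : d.1 ≠ 0 ∨ d.2 ≠ 0 := by
      by_contra! h
      exact hpq (sub_eq_zero.1 (Prod.ext h.1 h.2 : q - p = 0)).symm
    rcases this with h | h
    · have := mul_self_pos.2 h
      nlinarith [mul_self_nonneg d.2]
    · have := mul_self_pos.2 h
      nlinarith [mul_self_nonneg d.1]
  let l : (ℝ × ℝ) →L[ℝ] ℝ := d.1 • ContinuousLinearMap.fst ℝ ℝ ℝ +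
    d.2 • ContinuousLinearMap.snd ℝ ℝ ℝ
  have hl : ∀ x, l x = d.1 * x.1 + d.2 * x.2 := fun x => by simp [l]
  have hlp : l p ≤ l r := by
    rw [hrp, map_add, map_smul, hl d, smul_eq_mul]
    nlinarith
  have hlq : l r ≤ l q := by
    have h1 : q = p + d := by rw [hd]; abel
    rw [hrp, h1, map_add, map_add, map_smul, hl d, smul_eq_mul]
    nlinarith
  have hmid : ∀ k : ℕ, ∃ z, l (F^[k + 1] z - z) = ((k + 1 : ℕ) : ℝ) * l r := fun k => by
    obtain ⟨z₁, h₁⟩ := hsupp l (k + 1) (Nat.succ_pos k)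
    obtain ⟨z₂, h₂⟩ := hsupp (-l) (k + 1) (Nat.succ_pos k)
    have h₁ := h₁ q (hconv hq)
    have h₂ := h₂ p (hconv hp)
    simp only [neg_apply] at h₂
    have hk : (0 : ℝ) ≤ ((k + 1 : ℕ) : ℝ) := Nat.cast_nonneg _
    exact mem_range_of_exists_le_of_exists_ge
      (l.continuous.comp ((hFc.iterate (k + 1)).sub continuous_id))
      ⟨z₂, by change l (F^[k + 1] _ - _) ≤ _; nlinarith⟩
      ⟨z₁, by change _ ≤ l (F^[k + 1] _ - _); nlinarith⟩
  choose z hz using hmid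
  obtain ⟨x, hx, ψ, -, hlim⟩ := exists_mem_rotSet_limit hM z
  have hlx : l x = l r := by
    refine tendsto_nhds_unique ((l.continuous.tendsto x).comp hlim) ?_
    refine tendsto_const_nhds.congr fun k => ?_
    rw [Function.comp_apply, map_smul, hz, smul_eq_mul, inv_mul_cancel_left₀]
    exact Nat.cast_ne_zero.2 (Nat.succ_ne_zero _)
  have hgform : ∀ v : ℝ × ℝ, g v = g (1, 0) * v.1 + g (0, 1) * v.2 := fun v => by
    have : v = v.1 • ((1, 0) : ℝ × ℝ) + v.2 • ((0, 1) : ℝ × ℝ) := by ext <;> simp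
    conv_lhs => rw [this]
    rw [map_add, map_smul, map_smul, smul_eq_mul, smul_eq_mul]
    ring
  have hgd : g d = 0 := by rw [hd, map_sub, hg q hq p hp, sub_self]
  have hgy : g (x - r) = 0 := by
    rw [hrp, map_sub, map_add, map_smul, hgd, hg x hx p hp]
    simp
  have hly : l (x - r) = 0 := by rw [map_sub, hlx, sub_self]
  rw [hl] at hly
  rw [hgform] at hgy hgd
  set y := x - r with hy
  set α := g (1, 0)
  set β := g (0, 1)
  have hαβ : 0 < α * α + β * β := by
    by_contra! h
    have hα : α = 0 := by nlinarith [mul_self_nonneg α, mul_self_nonneg β]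
    have hβ : β = 0 := by nlinarith [mul_self_nonneg α, mul_self_nonneg β]
    exact hg0 (LinearMap.ext fun v => by rw [hgform v, hα, hβ]; simp)
  -- `y` is orthogonal to `d` and to `(α, β)`, which are orthogonal to each other
  have hdet : (α * d.2 - β * d.1) ^ 2 = (α * α + β * β) * (d.1 * d.1 + d.2 * d.2) := by
    linear_combination (-(α * d.1 + β * d.2)) * hgd
  have hdet0 : α * d.2 - β * d.1 ≠ 0 := fun h => by
    have := mul_pos hαβ hd0
    rw [← hdet, h] at this
    norm_num at this
  have hy1 : y.1 = 0 := by
    refine (mul_eq_zero.1 ?_).resolve_left hdet0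
    linear_combination d.2 * hgy - β * hly
  have hy2 : y.2 = 0 := by
    refine (mul_eq_zero.1 ?_).resolve_left hdet0
    linear_combination α * hly - d.1 * hgy
  have : x = r := sub_eq_zero.1 (Prod.ext hy1 hy2 : x - r = 0)
  rwa [← this]

/-- **Misiurewicz–Ziemian.** The rotation set of a lift of a torus
homeomorphism homotopic to the identity is nonempty, compact and convex. -/
theorem rotation_set_nonempty_compact_convex
    (F : (ℝ × ℝ) ≃ₜ (ℝ × ℝ))
    (hF : ∀ (z : ℝ × ℝ) (v : ℤ × ℤ),
      F (z + ((v.1 : ℝ), (v.2 : ℝ))) = F z + ((v.1 : ℝ), (v.2 : ℝ))) :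
    (rotSet F).Nonempty ∧ IsCompact (rotSet F) ∧ Convex ℝ (rotSet F) := by
  have hFc : Continuous F := F.continuous
  have hattain : ∀ (h : ℝ × ℝ → ℝ), Continuous h → ∀ n : ℕ,
      ∃ z, ∀ y, h (F^[n] y - y) ≤ h (F^[n] z - z) := fun h hh n => by
    obtain ⟨z, -, hz⟩ := exists_isMax_of_periodic (h := fun y => h (F^[n] y - y))
      (hh.comp ((hFc.iterate n).sub continuous_id))
      (fun z v => by rw [iterate_add_int hF, add_sub_add_right_eq_sub])
    exact ⟨z, hz⟩
  obtain ⟨M, hM⟩ : ∃ M, ∀ z, ‖F z - z‖ ≤ M := by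
    obtain ⟨z, hz⟩ := hattain norm continuous_norm 1
    exact ⟨_, hz⟩
  have hsupp : ∀ (l : (ℝ × ℝ) →L[ℝ] ℝ) (n : ℕ), 0 < n →
      ∃ z, ∀ r ∈ convexHull ℝ (rotSet F), n * l r ≤ l (F^[n] z - z) := fun l n hn => by
    obtain ⟨z, hz⟩ := hattain l l.continuous n
    refine ⟨z, fun r hr => ?_⟩
    exact convexHull_min (fun p hp => mul_le_of_mem_rotSet hM l hn hz hp)
      (convex_halfSpace_le ((n : ℝ) • l.toLinearMap).isLinear (l (F^[n] z - z))) hr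
  obtain ⟨x, hx, -⟩ := exists_mem_rotSet_limit hM fun _ => 0
  refine ⟨⟨x, hx⟩, rotSet_isCompact hM, ?_⟩
  by_cases hspan : affineSpan ℝ (rotSet F) = ⊤
  · have hne_int : (interior (convexHull ℝ (rotSet F))).Nonempty :=
      interior_convexHull_nonempty_iff_affineSpan_eq_top.2 hspan
    have h1 : convexHull ℝ (rotSet F) ⊆ rotSet F := by
      refine subset_closure.trans ?_
      rw [← (convex_convexHull ℝ _).closure_interior_eq_closure_of_nonempty_interior hne_int]
      exact closure_minimal
        (fun r hr => mem_rotSet_of_mem_interior hFc F.injective hF hsupp hr) (rotSet_isClosed F)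
    rw [← h1.antisymm (subset_convexHull ℝ _)]
    exact convex_convexHull ℝ _
  · have hlt : vectorSpan ℝ (rotSet F) < ⊤ := lt_top_iff_ne_top.2 fun h => hspan <| by
      rwa [AffineSubspace.affineSpan_eq_top_iff_vectorSpan_eq_top_of_nonempty ℝ _ _ ⟨x, hx⟩]
    obtain ⟨g, hg0, hg⟩ := Submodule.exists_le_ker_of_lt_top _ hlt
    refine convex_iff_segment_subset.2 fun p hp q hq r hr => ?_
    refine mem_rotSet_of_segment hFc hM hsupp hg0 (fun a ha b hb => ?_) hp hq hr
    have : g (a - b) = 0 := hg (vsub_mem_vectorSpan ℝ ha hb)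
    rwa [map_sub, sub_eq_zero] at this
end
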